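/- arXiv:1307.3431 — 2 statements merged into one kernel-verified Lean document; each statement's English description precedes it below -/
import Mathlib

section
/- Let (R,𝔪) be an analytically unramified Cohen–Macaulay local ring of dimension 2 with infinite residue field and let I, J be 𝔪-primary ideals. Then there exists a good joint reduction (a,b) of the filtration {I^r J^s‾}: elements a ∈ I, b ∈ J with I^r J^s‾ = a·(I^{r-1} J^s‾) + b·(I^r J^{s-1}‾) for all r, s ≫ 0, and moreover (a) ∩ I^r J^s‾ = a·(I^{r-1} J^s‾) for all integers s and all r > 0, and (b) ∩ I^r J^s‾ = b·(I^r J^{s-1}‾) for all integers r and all s > 0. -/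
/-!
The joint reduction is a pair of generic elements.  Since the residue field is infinite, `a ∈ I` and
`b ∈ J` can be chosen to avoid the relevant associated primes of the bigraded Rees algebra
`⨁ I^r J^s X^r Y^s`, so that they are superficial (`exists_superficial`, `exists_superf`); moreover
`b` can be taken superficial for `J` modulo `a`, so that `a, b` is a regular sequence
(`exists_supPair`).

The two intersection conditions hold for superficial elements in general (`Superf.div_intCl`): if
`a w` is integral over `I^(r+1) J^s`, superficiality shows that a fixed nonzerodivisor multiplies
high powers of `w` into the corresponding powers of `I^r J^s` up to a bounded shift, and in a
Noetherian ring this implies that `w` is integral over `I^r J^s` (`mem_intCl_of_mul`).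

The joint reduction equation has two ingredients.  First, `b` generates a reduction of `J` modulo
`a` (`reduction_mod`), by a length count and Nakayama's lemma.  Second, the filtration of integral
closures is eventually `J`-stable in the second exponent (`exists_stable`), because a nonzerodivisor
multiplies every integral closure of `I^r J^s` into `I^r J^s` (`exists_conductor`), which embeds the
whole family in the Noetherian bigraded Rees algebra as an ideal.  The conductor comes from Rees'
theorem that the integral closure of `K^n` is contained in `K^(n-k)` for a fixed `k`
(`exists_intCl_pow_le`), applied to `K = I J`.

Rees' theorem is the only place where analytic unramifiedness enters.  It is reduced to the case of
an ideal `Q = (a, b)` generated by a regular sequence, and then proved for the filtration `asyF Q` by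
asymptotic `Q`-adic order (`RegPair.asyF_le_pow`).  An element integral over `Q^n` has its `e`-th
power in `Q^n`, where `e` is the colength of `Q` (`RegPair.pow_mem_of_integral`); this is proved by
reduction to the one-dimensional rings `R ⧸ (b - t a)`.  Reducedness of the completion then makes
`asyF Q` cofinal with the `𝔪`-adic filtration (`cofinal_of_reduced`).  On the other hand the lengths
of the pieces of `asyF Q` are bounded by those of the `Q`-adic filtration, and this growth bound
forces `asyF Q (n+1) ≤ Q * asyF Q n + asyF Q (n+2)` for large `n` (`RegPair.asyF_step`, from
`filtration_eventually_generated`).  Together these give `asyF Q (n+1) = Q * asyF Q n` for large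
`n`.
-/

/-! ### Basic notions: integral closure of ideals, analytic unramifiedness,
lengths, regular sequences, Cohen-Macaulayness, primary ideals -/

/-- `x` is integral over the ideal `I`: it satisfies an equation
`x^n + a₁ x^(n-1) + ⋯ + aₙ = 0` with `aᵢ ∈ Iⁱ`. -/
def IsIntegralOverIdeal {R : Type*} [CommRing R] (I : Ideal R) (x : R) : Prop :=
  ∃ n : ℕ, 0 < n ∧ ∃ c : ℕ → R, (∀ i, c i ∈ I ^ i) ∧
    x ^ n + ∑ i ∈ Finset.range n, c (i + 1) * x ^ (n - (i + 1)) = 0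

/-- The integral closure `\overline{I}` of an ideal `I` (the set of elements integral
over `I` is an ideal, so it coincides with the ideal it spans). -/
noncomputable def intCl {R : Type*} [CommRing R] (I : Ideal R) : Ideal R :=
  Ideal.span {x | IsIntegralOverIdeal I x}

/-- A local ring is analytically unramified if its `𝔪`-adic completion is reduced. -/
def AnalyticallyUnramified (R : Type*) [CommRing R] [IsLocalRing R] : Prop :=
  IsReduced (AdicCompletion (IsLocalRing.maximalIdeal R) R)

/-- The length `λ(M)` of a module, as the Krull dimension of its lattice of submodules. -/
noncomputable def moduleLength (R M : Type*) [Ring R] [AddCommGroup M] [Module R M] :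
    WithBot ℕ∞ :=
  Order.krullDim (Submodule R M)

/-- `f` is a regular sequence on the module `M`. -/
def IsRegularSeq {R : Type*} (M : Type*) [CommRing R] [AddCommGroup M] [Module R M]
    {n : ℕ} (f : Fin n → R) : Prop :=
  (∀ i : Fin n, ∀ z : M,
      f i • z ∈ Ideal.span (f '' {j | j < i}) • (⊤ : Submodule R M) →
      z ∈ Ideal.span (f '' {j | j < i}) • (⊤ : Submodule R M)) ∧
  Ideal.span (Set.range f) • (⊤ : Submodule R M) ≠ ⊤

/-- A local ring is Cohen-Macaulay if there is a regular sequence of length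
`dim` inside the maximal ideal. -/
def IsCMLocalRing (A : Type*) [CommRing A] [IsLocalRing A] : Prop :=
  ∃ (n : ℕ) (f : Fin n → A), (∀ i, f i ∈ IsLocalRing.maximalIdeal A) ∧
    IsRegularSeq A f ∧ (n : WithBot ℕ∞) = ringKrullDim A

/-- A commutative ring is Cohen-Macaulay if all its localizations at primes are. -/
def IsCMRing (A : Type*) [CommRing A] : Prop :=
  ∀ (P : Ideal A) (_ : P.IsPrime), IsCMLocalRing (Localization.AtPrime P)

/-- An ideal of a local ring is `𝔪`-primary if its radical is the maximal ideal. -/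
def IsMPrimary {R : Type*} [CommRing R] [IsLocalRing R] (I : Ideal R) : Prop :=
  I.radical = IsLocalRing.maximalIdeal R

/-- `I^r J^s` for `r s : ℤ`, with the convention that nonpositive powers give the
unit ideal. -/
noncomputable def IJ {R : Type*} [CommRing R] (I J : Ideal R) (r s : ℤ) : Ideal R :=
  I ^ r.toNat * J ^ s.toNat

/-- `\overline{I^r J^s}` for `r s : ℤ`. -/
noncomputable def IJbar {R : Type*} [CommRing R] (I J : Ideal R) (r s : ℤ) : Ideal R :=
  intCl (IJ I J r s)

/-- A good joint reduction `(a,b)` of the filtration `{\overline{I^r J^s}}`: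
a joint reduction such that moreover `(a) ∩ \overline{I^r J^s} = a ⬝ \overline{I^{r-1} J^s}`
for all `s` and all `r > 0`, and symmetrically for `b`. -/
def IsGoodJointReduction {R : Type*} [CommRing R] (I J : Ideal R) (a b : R) : Prop :=
  a ∈ I ∧ b ∈ J ∧
  (∃ N : ℤ, ∀ r s : ℤ, N ≤ r → N ≤ s →
      IJbar I J r s =
        Ideal.span {a} * IJbar I J (r - 1) s ⊔ Ideal.span {b} * IJbar I J r (s - 1)) ∧
  (∀ r s : ℤ, 0 < r →
      Ideal.span {a} ⊓ IJbar I J r s = Ideal.span {a} * IJbar I J (r - 1) s) ∧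
  (∀ r s : ℤ, 0 < s →
      Ideal.span {b} ⊓ IJbar I J r s = Ideal.span {b} * IJbar I J r (s - 1))

/-! ### Lengths of quotients and submodules -/

namespace GJR

section Length

variable {R M : Type*} [CommRing R] [AddCommGroup M] [Module R M]

lemma slen_mono {A B : Submodule R M} (h : A ≤ B) : Module.length R A ≤ Module.length R B :=
  Module.length_le_of_injective (Submodule.inclusion h) (Submodule.inclusion_injective h)

lemma slen_map {N : Type*} [AddCommGroup N] [Module R N] (f : M →ₗ[R] N) (A : Submodule R M)
    (hf : ∀ x ∈ A, f x = 0 → x = 0) : Module.length R (A.map f) = Module.length R A := by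
  refine (LinearEquiv.length_eq (LinearEquiv.ofBijective
    ((f.domRestrict A).codRestrict (A.map f) fun x => ⟨x, x.2, rfl⟩) ⟨?_, ?_⟩)).symm
  · rw [← LinearMap.ker_eq_bot, LinearMap.ker_eq_bot']
    intro x hx
    have := congrArg Subtype.val hx
    exact Subtype.ext (hf x x.2 this)
  · rintro ⟨_, x, hx, rfl⟩
    exact ⟨⟨x, hx⟩, rfl⟩

lemma slen_sup_inf (A B : Submodule R M) :
    Module.length R (A ⊔ B : Submodule R M) + Module.length R (A ⊓ B : Submodule R M)
      = Module.length R A + Module.length R B := by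
  rw [← Module.length_prod R A B]
  let f : (A ⊓ B : Submodule R M) →ₗ[R] A × B :=
    LinearMap.prod (Submodule.inclusion inf_le_left) (Submodule.inclusion inf_le_right)
  let g : A × B →ₗ[R] (A ⊔ B : Submodule R M) :=
    (Submodule.inclusion le_sup_left).comp (LinearMap.fst R A B)
      - (Submodule.inclusion le_sup_right).comp (LinearMap.snd R A B)
  rw [Module.length_eq_add_of_exact f g, add_comm]
  · intro x y h
    have := congrArg (fun z => (z.1 : M)) h
    exact Subtype.ext this
  · rintro ⟨z, hz⟩
    obtain ⟨x, hx, y, hy, rfl⟩ := Submodule.mem_sup.1 hz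
    refine ⟨(⟨x, hx⟩, ⟨-y, B.neg_mem hy⟩), Subtype.ext ?_⟩
    simp [g]
  · rintro ⟨⟨x, hx⟩, ⟨y, hy⟩⟩
    constructor
    · intro h
      have h' := congrArg Subtype.val h
      have : x = y := by simpa [g, sub_eq_zero] using h'
      subst this
      exact ⟨⟨x, hx, hy⟩, rfl⟩
    · rintro ⟨w, hw⟩
      have h1 := congrArg (fun z => (z.1 : M)) hw
      have h2 := congrArg (fun z => (z.2 : M)) hw
      apply Subtype.ext
      have h1 : (w : M) = x := h1
      have h2 : (w : M) = y := h2
      simp [g, ← h1, ← h2]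

lemma qlen_anti {A B : Submodule R M} (h : A ≤ B) :
    Module.length R (M ⧸ B) ≤ Module.length R (M ⧸ A) :=
  Module.length_le_of_surjective (Submodule.factor h) (Submodule.factor_surjective h)

lemma qlen_sup_inf (A B : Submodule R M) :
    Module.length R (M ⧸ A ⊓ B) + Module.length R (M ⧸ A ⊔ B)
      = Module.length R (M ⧸ A) + Module.length R (M ⧸ B) := by
  rw [← Module.length_prod R (M ⧸ A) (M ⧸ B)]
  let f : (M ⧸ A ⊓ B) →ₗ[R] (M ⧸ A) × (M ⧸ B) :=
    LinearMap.prod (Submodule.factor inf_le_left) (Submodule.factor inf_le_right)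
  let g : (M ⧸ A) × (M ⧸ B) →ₗ[R] (M ⧸ A ⊔ B) :=
    (Submodule.factor le_sup_left).comp (LinearMap.fst R _ _)
      - (Submodule.factor le_sup_right).comp (LinearMap.snd R _ _)
  rw [Module.length_eq_add_of_exact f g]
  · rw [← LinearMap.ker_eq_bot, LinearMap.ker_eq_bot']
    intro x hx
    obtain ⟨x, rfl⟩ := Submodule.Quotient.mk_surjective _ x
    have h1 := congrArg Prod.fst hx
    have h2 := congrArg Prod.snd hx
    have h1 : (Submodule.Quotient.mk x : M ⧸ A) = 0 := h1
    have h2 : (Submodule.Quotient.mk x : M ⧸ B) = 0 := h2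
    rw [Submodule.Quotient.mk_eq_zero] at h1 h2 ⊢
    exact ⟨h1, h2⟩
  · intro z
    obtain ⟨x, rfl⟩ := Submodule.Quotient.mk_surjective _ z
    refine ⟨(Submodule.Quotient.mk x, 0), ?_⟩
    simp [g]
  · rintro ⟨x, y⟩
    obtain ⟨x, rfl⟩ := Submodule.Quotient.mk_surjective _ x
    obtain ⟨y, rfl⟩ := Submodule.Quotient.mk_surjective _ y
    constructor
    · intro h
      have h : (Submodule.Quotient.mk x : M ⧸ A ⊔ B) - Submodule.Quotient.mk y = 0 := h
      rw [← Submodule.Quotient.mk_sub, Submodule.Quotient.mk_eq_zero] at h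
      obtain ⟨u, hu, v, hv, huv⟩ := Submodule.mem_sup.1 h
      refine ⟨Submodule.Quotient.mk (x - u), Prod.ext ?_ ?_⟩
      · change (Submodule.Quotient.mk (x - u) : M ⧸ A) = Submodule.Quotient.mk x
        rw [Submodule.Quotient.eq]
        simpa using hu
      · change (Submodule.Quotient.mk (x - u) : M ⧸ B) = Submodule.Quotient.mk y
        rw [Submodule.Quotient.eq]
        have : x - u - y = v := by rw [sub_right_comm, ← huv]; abel
        rwa [this]
    · rintro ⟨w, hw⟩
      obtain ⟨w, rfl⟩ := Submodule.Quotient.mk_surjective _ w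
      have h1 := congrArg Prod.fst hw
      have h2 := congrArg Prod.snd hw
      have h1 : (Submodule.Quotient.mk w : M ⧸ A) = Submodule.Quotient.mk x := h1
      have h2 : (Submodule.Quotient.mk w : M ⧸ B) = Submodule.Quotient.mk y := h2
      rw [← h1, ← h2]
      change (Submodule.Quotient.mk w : M ⧸ A ⊔ B) - Submodule.Quotient.mk w = 0
      exact sub_self _

/-- Additivity of length along `A ≤ B ≤ M`, the subquotient `B / A` being realised as the
image of `B` in `M / A`. -/
lemma qlen_eq_add {A B : Submodule R M} (h : A ≤ B) :
    Module.length R (M ⧸ A) = Module.length R (B.map A.mkQ) + Module.length R (M ⧸ B) := by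
  refine Module.length_eq_add_of_exact (B.map A.mkQ).subtype (Submodule.factor h)
    (Submodule.subtype_injective _) (Submodule.factor_surjective h) ?_
  intro z
  obtain ⟨x, rfl⟩ := Submodule.Quotient.mk_surjective _ z
  constructor
  · intro hx
    have hx : (Submodule.Quotient.mk x : M ⧸ B) = 0 := hx
    rw [Submodule.Quotient.mk_eq_zero] at hx
    exact ⟨⟨_, x, hx, rfl⟩, rfl⟩
  · rintro ⟨⟨_, y, hy, rfl⟩, hw⟩
    rw [← hw]
    change (Submodule.Quotient.mk y : M ⧸ B) = 0
    rwa [Submodule.Quotient.mk_eq_zero]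

lemma qlen_lt {A B : Submodule R M} (h : A < B) :
    Module.length R (M ⧸ B) + 1 ≤ Module.length R (M ⧸ A) := by
  rw [qlen_eq_add h.le, add_comm]
  gcongr
  rw [Order.one_le_iff_ne_zero, ← pos_iff_ne_zero, Module.length_pos_iff]
  obtain ⟨x, hx, hxA⟩ := SetLike.exists_of_lt h
  refine ⟨⟨⟨A.mkQ x, x, hx, rfl⟩, 0, ?_⟩⟩
  intro h0
  have h0 := congrArg Subtype.val h0
  have h0 : (Submodule.Quotient.mk x : M ⧸ A) = 0 := h0
  rw [Submodule.Quotient.mk_eq_zero] at h0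
  exact hxA h0

lemma slen_lt {A B : Submodule R M} (h : A < B) :
    Module.length R A + 1 ≤ Module.length R B := by
  rw [Module.length_submodule, Module.length_submodule]
  exact Order.height_add_one_le h

lemma eq_of_qlen_le {A B : Submodule R M} (h : A ≤ B) (hf : Module.length R (M ⧸ B) ≠ ⊤)
    (hl : Module.length R (M ⧸ A) ≤ Module.length R (M ⧸ B)) : A = B := by
  by_contra hne
  have := (qlen_lt (lt_of_le_of_ne h hne)).trans hl
  lift Module.length R (M ⧸ B) to ℕ using hf with n
  norm_cast at this
  omega

lemma eq_of_slen_le {A B : Submodule R M} (h : A ≤ B) (hf : Module.length R A ≠ ⊤)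
    (hl : Module.length R B ≤ Module.length R A) : A = B := by
  by_contra hne
  have := (slen_lt (lt_of_le_of_ne h hne)).trans hl
  lift Module.length R A to ℕ using hf with n
  norm_cast at this
  omega

/-- `ℓ(R/U) = ℓ(R/(U : x)) + ℓ(R/(U + xR))`. -/
lemma qlen_colon (U V : Ideal R) (x : R) (hV : ∀ z, z ∈ V ↔ x * z ∈ U) :
    Module.length R (R ⧸ U) = Module.length R (R ⧸ V)
      + Module.length R (R ⧸ (U ⊔ Ideal.span {x})) := by
  rw [qlen_eq_add (le_sup_left : U ≤ U ⊔ Ideal.span {x})]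
  congr 1
  let f : R →ₗ[R] R ⧸ U := (Submodule.mkQ U).comp (LinearMap.mulLeft R x)
  have hk : LinearMap.ker f = V := by
    ext z
    rw [LinearMap.mem_ker, hV]
    exact Submodule.Quotient.mk_eq_zero U
  have hr : LinearMap.range f = Submodule.map (Submodule.mkQ U) (U ⊔ Ideal.span {x}) := by
    ext z
    constructor
    · rintro ⟨y, rfl⟩
      exact ⟨x * y, Ideal.mem_sup_right (Ideal.mul_mem_right _ _ (Ideal.mem_span_singleton_self x)),
        rfl⟩
    · rintro ⟨y, hy, rfl⟩
      obtain ⟨u, hu, v, hv, rfl⟩ := Submodule.mem_sup.1 hy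
      obtain ⟨w, rfl⟩ := Ideal.mem_span_singleton'.1 hv
      refine ⟨w, ?_⟩
      change (Submodule.Quotient.mk (x * w) : R ⧸ U) = Submodule.Quotient.mk (u + w * x)
      rw [eq_comm, Submodule.Quotient.eq]
      convert hu using 1
      ring
  rw [← hr, ← hk]
  exact (LinearEquiv.length_eq f.quotKerEquivRange).symm

end Length

end GJR

/-! ### Filtered modules of linear growth -/

namespace GJR

lemma eventually_const {δ : ℕ → ℕ} {e : ℕ} (hm : Monotone δ) (hb : ∀ n, δ n ≤ e) :
    ∃ n0, ∀ n, n0 ≤ n → δ n = δ n0 := by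
  have hbd : BddAbove (Set.range δ) := ⟨e, by rintro _ ⟨n, rfl⟩; exact hb n⟩
  obtain ⟨n0, h0⟩ := Nat.sSup_mem (Set.range_nonempty δ) hbd
  refine ⟨n0, fun n hn => le_antisymm ?_ (hm hn)⟩
  rw [h0]
  exact le_csSup hbd ⟨n, rfl⟩

/-- A convex function on `ℕ` with bounded increments is eventually affine. -/
lemma convex_eventually_linear {p : ℕ → ℕ} {e : ℕ} (hm : ∀ n, p n ≤ p (n + 1))
    (hb : ∀ n, p (n + 1) ≤ p n + e) (hc : ∀ n, 2 * p (n + 1) ≤ p (n + 2) + p n) :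
    ∃ n0, ∀ n, n0 ≤ n → p (n + 2) + p n = 2 * p (n + 1) := by
  obtain ⟨n0, h0⟩ := eventually_const (δ := fun n => p (n + 1) - p n) (e := e)
    (monotone_nat_of_le_succ fun n => by
      have := hm n; have := hm (n + 1); have := hc n
      simp only [add_assoc, Nat.reduceAdd] at *; omega)
    (fun n => by have := hb n; omega)
  refine ⟨n0, fun n hn => ?_⟩
  have h1 := h0 n hn
  have h2 := h0 (n + 1) (by omega)
  have := hm n; have := hm (n + 1)
  simp only [add_assoc, Nat.reduceAdd] at *
  omega

/-- A sequence with eventual increments at least `r` whose partial sums are at most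
`e D (D+1) / 2` has `r ≤ e`. -/
lemma growth_bound {g : ℕ → ℕ} {r e m0 : ℕ} (hg : ∀ m, m0 ≤ m → g m + r ≤ g (m + 1))
    (hs : ∀ D, 2 * ∑ n ∈ Finset.range D, g n ≤ e * D * (D + 1)) : r ≤ e := by
  have h1 : ∀ t, r * t ≤ g (m0 + t) := by
    intro t
    induction t with
    | zero => simp
    | succ t ih =>
      have := hg (m0 + t) (by omega)
      rw [← add_assoc]
      nlinarith
  have h2 : ∀ D, r * (D * (D - 1)) ≤ 2 * ∑ n ∈ Finset.range (m0 + D), g n := by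
    intro D
    rw [← Finset.sum_range_id_mul_two]
    have : ∑ i ∈ Finset.range D, r * i ≤ ∑ n ∈ Finset.range (m0 + D), g n := by
      rw [Finset.sum_range_add]
      exact le_add_left (Finset.sum_le_sum fun t _ => h1 t)
    rw [← Finset.mul_sum] at this
    nlinarith
  by_contra hlt
  push Not at hlt
  -- `(e+1) D (D-1)` exceeds `e (m0+D) (m0+D+1)` for the following `D`
  obtain ⟨D, hD⟩ : ∃ D, D = e * (m0 + 1) * (m0 + 3) + 2 := ⟨_, rfl⟩
  have h3 := (h2 D).trans (hs (m0 + D))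
  obtain ⟨E, rfl⟩ : ∃ E, D = E + 1 := ⟨D - 1, by omega⟩
  simp only [Nat.add_sub_cancel] at h3
  have h4 : (e + 1) * ((E + 1) * E) ≤ r * ((E + 1) * E) := Nat.mul_le_mul_right _ hlt
  have hE : E = e * (m0 + 1) * (m0 + 3) + 1 := by omega
  have hE1 : 1 ≤ E := by omega
  have h5 : (e + 1) * ((E + 1) * E) ≤ e * (m0 + (E + 1)) * (m0 + (E + 1) + 1) := h4.trans h3
  have h6 : (E + 1) * E ≤ e * ((2 * m0 + 2) * E + (m0 + 1) * (m0 + 2)) := by nlinarith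
  have h7 : (m0 + 1) * (m0 + 2) * e ≤ (m0 + 1) * (m0 + 2) * e * E := Nat.le_mul_of_pos_right _ hE1
  have h8 : E * E = e * (m0 + 1) * (m0 + 3) * E + E := by
    nth_rewrite 1 [hE]; ring
  nlinarith

section Filtered

variable {R V : Type*} [CommRing R] [AddCommGroup V] [Module R V]

/-- The submodule of all `y ∈ M j` with `X ^ (j+1) y ∈ M (n+j)`.  Its union over `j` is the `n`-th
step of the saturation of the filtration `M` with respect to `X`, shifted by one. -/
def satLayer (X : V →ₗ[R] V) (M : ℕ → Submodule R V) (n j : ℕ) : Submodule R V :=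
  M j ⊓ (M (n + j)).comap (X ^ (j + 1))

variable {X : V →ₗ[R] V} {M : ℕ → Submodule R V}

lemma mem_satLayer {n j : ℕ} {y : V} :
    y ∈ satLayer X M n j ↔ y ∈ M j ∧ (X ^ (j + 1)) y ∈ M (n + j) := Iff.rfl

lemma pow_mem_filt (hX : ∀ n, ∀ y ∈ M n, X y ∈ M (n + 1)) {n : ℕ} {y : V} (hy : y ∈ M n) (t : ℕ) :
    (X ^ t) y ∈ M (n + t) := by
  induction t with
  | zero => simpa using hy
  | succ t ih =>
    rw [pow_succ']
    exact hX _ _ ih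

lemma satLayer_mono (hM : Monotone M) (hX : ∀ n, ∀ y ∈ M n, X y ∈ M (n + 1)) (n : ℕ) :
    Monotone (satLayer X M n) := by
  refine monotone_nat_of_le_succ fun j y hy => mem_satLayer.2 ⟨hM (Nat.le_succ j) hy.1, ?_⟩
  rw [pow_succ']
  exact hX _ _ hy.2

/-- The key finiteness statement about an increasing filtration `M` and an operator `X` of
filtration degree one.  If `X ^ (j+1) y ∈ M j` forces `y = 0` for `y ∈ ⋃ M i`, and the lengths of
the `M n` grow at most linearly on average, then `M (n+1) = M n + X (M n)` for large `n`.

The saturation `P n = {y ∈ ⋃ M i | ∃ j, X ^ (j+1) y ∈ M (n+j)}` satisfies `P 0 = 0` and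
`M n ≤ P (n+1)`, and has a convex length function with bounded increments. -/
theorem filtration_eventually_generated (hM : Monotone M)
    (hX : ∀ n, ∀ y ∈ M n, X y ∈ M (n + 1))
    (hneg : ∀ i j y, y ∈ M i → (X ^ (j + 1)) y ∈ M j → y = 0) (e : ℕ)
    (hlen : ∀ D : ℕ, 2 * ∑ n ∈ Finset.range D, Module.length R (M n) ≤ (e * D * (D + 1) : ℕ)) :
    ∃ n1, ∀ n, n1 ≤ n → M (n + 1) = M n ⊔ (M n).map X := by
  -- the length function of `M`
  have hfin : ∀ n, Module.length R (M n) ≠ ⊤ := by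
    intro n h
    have h1 := hlen (n + 1)
    rw [Finset.sum_range_succ, h, add_top, ENat.mul_top (by norm_num)] at h1
    exact ENat.natCast_ne_top _ (top_le_iff.1 h1)
  choose g hg using fun n => ENat.ne_top_iff_exists.1 (hfin n)
  have hs : ∀ D, 2 * ∑ n ∈ Finset.range D, g n ≤ e * D * (D + 1) := by
    intro D
    have := hlen D
    simp only [← hg] at this
    exact_mod_cast this
  have hinj : ∀ i y, y ∈ M i → ∀ t, (X ^ t) y = 0 → y = 0 := by
    intro i y hy t ht
    cases t with
    | zero => simpa using ht
    | succ t => exact hneg i t y hy (by rw [ht]; exact zero_mem _)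
  set B := satLayer X M with hB
  have hBm : ∀ n, Monotone (B n) := satLayer_mono hM hX
  set P : ℕ → Submodule R V := fun n => ⨆ j, B n j with hP
  have hPmem : ∀ n y, y ∈ P n ↔ ∃ j, y ∈ B n j := fun n y =>
    Submodule.mem_iSup_of_directed _ (hBm n).directed_le
  have hP0 : P 0 = ⊥ := by
    rw [eq_bot_iff]
    intro y hy
    obtain ⟨j, hj⟩ := (hPmem 0 y).1 hy
    obtain ⟨h1, h2⟩ := mem_satLayer.1 hj
    rw [zero_add] at h2
    exact hneg j j y h1 h2
  have hPmono : ∀ n, P n ≤ P (n + 1) := by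
    intro n y hy
    obtain ⟨j, h1, h2⟩ := (hPmem n y).1 hy
    exact (hPmem _ y).2 ⟨j, h1, hM (by omega) h2⟩
  have hMP : ∀ n, M n ≤ P (n + 1) := fun n y hy =>
    (hPmem _ y).2 ⟨n, hy, hM (by omega : n + (n + 1) ≤ n + 1 + n) (pow_mem_filt hX hy (n + 1))⟩
  have hXP : ∀ n, ∀ y ∈ P n, X y ∈ P (n + 1) := by
    intro n y hy
    obtain ⟨j, h1, h2⟩ := (hPmem n y).1 hy
    refine (hPmem _ _).2 ⟨j + 1, mem_satLayer.2 ⟨hX _ _ h1, ?_⟩⟩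
    have h3 := hX _ _ (hX _ _ h2)
    have : (X ^ (j + 1 + 1)) (X y) = X (X ((X ^ (j + 1)) y)) := by
      simp only [← Module.End.mul_apply, ← pow_succ, ← pow_succ']
    rw [this]
    exact hM (by omega) h3
  -- increments of the saturated filtration are bounded by `e`
  have hkey : ∀ n j, Module.length R (B (n + 1) j) ≤
      Module.length R (B (n + 1) j ⊓ P n : Submodule R V) + e := by
    intro n j
    set N := B (n + 1) j with hN
    have hNM : N ≤ M j := inf_le_left
    obtain ⟨p, hp⟩ := ENat.ne_top_iff_exists.1
      (ne_top_of_le_ne_top (hfin j) (slen_mono hNM))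
    obtain ⟨q, hq⟩ := ENat.ne_top_iff_exists.1
      (ne_top_of_le_ne_top (hfin j) (slen_mono ((inf_le_left : N ⊓ P n ≤ N).trans hNM)))
    rw [← hp, ← hq]
    have hstep : ∀ m, n + 1 + j ≤ m → g m + p ≤ g (m + 1) + q := by
      intro m hm
      obtain ⟨T, rfl⟩ := Nat.exists_eq_add_of_le hm
      set N' := N.map (X ^ (T + 1 + (j + 1))) with hN'
      have hN'M : N' ≤ M (n + 1 + j + T + 1) := by
        rintro _ ⟨y, hy, rfl⟩
        rw [pow_add, Module.End.mul_apply]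
        exact hM (by omega) (pow_mem_filt hX hy.2 (T + 1))
      have hincl : M (n + 1 + j + T) ⊓ N' ≤ (N ⊓ P n).map (X ^ (T + 1 + (j + 1))) := by
        rintro _ ⟨h1, ⟨y, hy, rfl⟩⟩
        refine ⟨y, ⟨hy, (hPmem n y).2 ⟨T + 1 + j, mem_satLayer.2 ⟨hM (by omega) (hNM hy), ?_⟩⟩⟩, rfl⟩
        rw [add_assoc (T + 1)]
        exact hM (by omega) h1
      have e1 := slen_sup_inf (M (n + 1 + j + T)) N'
      have e2 := slen_mono (sup_le (hM (Nat.le_succ (n + 1 + j + T))) hN'M)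
      have e3 := slen_mono hincl
      have e4 : Module.length R N' = p := by
        rw [hN', slen_map _ _ (fun x hx => hinj j x (hNM hx) _), hp]
      have e5 : Module.length R ((N ⊓ P n).map (X ^ (T + 1 + (j + 1)))) = q := by
        rw [slen_map _ _ (fun x hx => hinj j x (hNM (inf_le_left (a := N) hx)) _), hq]
      rw [e5] at e3
      rw [e4, ← hg] at e1
      rw [← hg] at e2
      have := add_le_add e2 e3
      rw [e1] at this
      exact_mod_cast this
    have hqp : q ≤ p := by
      have := slen_mono (inf_le_left : N ⊓ P n ≤ N)
      rw [← hp, ← hq] at this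
      exact_mod_cast this
    have : p - q ≤ e := growth_bound (m0 := n + 1 + j)
      (fun m hm => by have := hstep m hm; omega) hs
    have : p ≤ q + e := by omega
    exact_mod_cast this
  -- hence each step of the saturation is reached at a finite level and has finite length
  have hstab : ∀ n, (∃ j, P n ≤ B n j) ∧ Module.length R (P n) ≠ ⊤ := by
    intro n
    induction n with
    | zero => exact ⟨⟨0, by rw [hP0]; exact bot_le⟩, by rw [hP0]; simp⟩
    | succ n ih =>
      obtain ⟨q, hq⟩ := ENat.ne_top_iff_exists.1 ih.2
      have hle : ∀ j, Module.length R (B (n + 1) j) ≤ (q + e : ℕ) := by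
        intro j
        refine (hkey n j).trans ?_
        push_cast
        rw [hq]
        gcongr
        exact slen_mono inf_le_right
      choose l hl using fun j => ENat.ne_top_iff_exists.1
        (ne_top_of_le_ne_top (ENat.natCast_ne_top _) (hle j))
      obtain ⟨j0, hj0⟩ := eventually_const (δ := l) (e := q + e)
        (fun i j hij => by
          have := slen_mono (hBm (n + 1) hij)
          rw [← hl, ← hl] at this
          exact_mod_cast this)
        (fun j => by
          have := hle j
          rw [← hl] at this
          exact_mod_cast this)
      have hPB : P (n + 1) ≤ B (n + 1) j0 := by
        refine iSup_le fun j => ?_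
        rcases le_total j j0 with h | h
        · exact hBm _ h
        · exact (eq_of_slen_le (hBm (n + 1) h) (by rw [← hl]; exact ENat.natCast_ne_top _)
            (by rw [← hl, ← hl, hj0 j h])).ge
      exact ⟨⟨j0, hPB⟩, ne_top_of_le_ne_top (by rw [← hl]; exact ENat.natCast_ne_top _)
        (slen_mono hPB)⟩
  choose p hp using fun n => ENat.ne_top_iff_exists.1 (hstab n).2
  have hUP : ∀ n, ∀ y ∈ P n, ∀ t, (X ^ t) y = 0 → y = 0 := by
    intro n y hy
    obtain ⟨j, hj⟩ := (hPmem n y).1 hy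
    exact hinj j y (mem_satLayer.1 hj).1
  have hsupP : ∀ n, P (n + 1) ⊔ (P (n + 1)).map X ≤ P (n + 2) := by
    intro n
    refine sup_le (hPmono _) ?_
    rintro _ ⟨y, hy, rfl⟩
    exact hXP _ _ hy
  have hconv : ∀ n, (2 * p (n + 1) : ℕ) ≤ Module.length R
      (P (n + 1) ⊔ (P (n + 1)).map X : Submodule R V) + p n := by
    intro n
    have e1 := slen_sup_inf (P (n + 1)) ((P (n + 1)).map X)
    rw [slen_map X _ (fun x hx h => hUP _ x hx 1 (by simpa using h)), ← hp] at e1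
    have e2 : P (n + 1) ⊓ (P (n + 1)).map X ≤ (P n).map X := by
      rintro _ ⟨h1, ⟨y, hy, rfl⟩⟩
      obtain ⟨j, hj⟩ := (hPmem _ _).1 h1
      obtain ⟨i, hi⟩ := (hPmem _ _).1 hy
      obtain ⟨-, h2⟩ := mem_satLayer.1 hj
      refine ⟨y, (hPmem _ _).2 ⟨i + j + 1, mem_satLayer.2
        ⟨hM (by omega) (mem_satLayer.1 hi).1, ?_⟩⟩, rfl⟩
      have h3 := pow_mem_filt hX h2 i
      have : (X ^ (i + j + 1 + 1)) y = (X ^ i) ((X ^ (j + 1)) (X y)) := by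
        simp only [← Module.End.mul_apply, ← pow_succ, ← pow_add, add_assoc]
      rw [this]
      exact hM (by omega) h3
    have e3 := slen_mono e2
    rw [slen_map X _ (fun x hx h => hUP _ x hx 1 (by simpa using h)), ← hp] at e3
    rw [two_mul, Nat.cast_add, ← e1]
    gcongr
  obtain ⟨n0, hn0⟩ := convex_eventually_linear (p := p) (e := e)
    (fun n => by
      have := slen_mono (hPmono n)
      rw [← hp, ← hp] at this
      exact_mod_cast this)
    (fun n => by
      obtain ⟨j, hj⟩ := (hstab (n + 1)).1
      have h1 := (slen_mono hj).trans (hkey n j)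
      have h2 := slen_mono (inf_le_right : B (n + 1) j ⊓ P n ≤ P n)
      rw [← hp] at h1 h2
      have := h1.trans (add_le_add_left h2 _)
      exact_mod_cast this)
    (fun n => by
      have h1 := (hconv n).trans (add_le_add_left (slen_mono (hsupP n)) _)
      rw [← hp] at h1
      exact_mod_cast h1)
  have hPgen : ∀ n, n0 ≤ n → P (n + 2) = P (n + 1) ⊔ (P (n + 1)).map X := by
    intro n hn
    have hle := slen_mono (hsupP n)
    refine (eq_of_slen_le (hsupP n) (ne_top_of_le_ne_top (hstab _).2 hle) ?_).symm
    have h1 := hconv n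
    have h2 := hn0 n hn
    obtain ⟨w, hw⟩ := ENat.ne_top_iff_exists.1 (ne_top_of_le_ne_top (hstab _).2 hle)
    rw [← hw, ← hp]
    rw [← hw] at h1
    have h1 : 2 * p (n + 1) ≤ w + p n := by exact_mod_cast h1
    have : p (n + 2) ≤ w := by omega
    exact_mod_cast this
  -- compare the saturation with `M` itself
  obtain ⟨j, hj⟩ := (hstab (n0 + 1)).1
  have hPM' : ∀ u, ∀ N, (∀ t ≤ u, ∀ y ∈ P (n0 + 1), (X ^ t) y ∈ N) → P (n0 + 1 + u) ≤ N := by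
    intro u
    induction u with
    | zero => exact fun N h y hy => by simpa using h 0 le_rfl y hy
    | succ u ih =>
      intro N h
      have : n0 + 1 + (u + 1) = n0 + u + 2 := by ring
      rw [this, hPgen _ (by omega)]
      have hu : n0 + u + 1 = n0 + 1 + u := by ring
      rw [hu]
      refine sup_le (ih N fun t ht => h t (by omega)) ?_
      rw [Submodule.map_le_iff_le_comap]
      refine ih _ fun t ht y hy => ?_
      have := h (t + 1) (by omega) y hy
      rwa [pow_succ'] at this
  have hPM : ∀ n, n0 + 2 * j ≤ n → P (n + 1) = M n := by
    intro n hn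
    refine le_antisymm ?_ (hMP n)
    obtain ⟨u, rfl⟩ := Nat.exists_eq_add_of_le (show n0 ≤ n by omega)
    have hu : n0 + u + 1 = n0 + 1 + u := by ring
    rw [hu]
    refine hPM' u _ fun t ht y hy => ?_
    obtain ⟨h1, h2⟩ := mem_satLayer.1 (hj hy)
    rcases Nat.lt_or_ge j t with ht' | ht'
    · obtain ⟨v, rfl⟩ := Nat.exists_eq_add_of_le' (Nat.succ_le_of_lt ht')
      rw [pow_add, Module.End.mul_apply]
      exact hM (by omega) (pow_mem_filt hX h2 v)
    · exact hM (by omega) (pow_mem_filt hX h1 t)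
  refine ⟨n0 + 2 * j, fun n hn => ?_⟩
  rw [← hPM n hn, ← hPM (n + 1) (by omega), hPgen n (by omega)]

end Filtered
end GJR

/-! ### Regular sequences of length two -/

namespace GJR

/-- `a, b` is a regular sequence in the weak sense (the quotient may vanish). -/
structure RegPair {R : Type*} [CommRing R] (a b : R) : Prop where
  left : ∀ z, a * z = 0 → z = 0
  right : ∀ z, a ∣ b * z → a ∣ z

section RegPair

variable {R : Type*} [CommRing R] {a b : R}

lemma pair_pow_succ_le (a b : R) (n : ℕ) :
    Ideal.span {a, b} ^ (n + 1) ≤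
      Ideal.span {a} * Ideal.span {a, b} ^ n ⊔ Ideal.span {b ^ (n + 1)} := by
  induction n with
  | zero =>
    rw [zero_add, pow_one, pow_zero, Ideal.one_eq_top, Ideal.mul_top, pow_one, Ideal.span_insert]
  | succ n ih =>
    rw [pow_succ' _ (n + 1)]
    nth_rewrite 1 [Ideal.span_insert]
    rw [Ideal.sup_mul]
    refine sup_le le_sup_left ((Ideal.mul_mono_right ih).trans ?_)
    rw [Ideal.mul_sup, Ideal.span_singleton_mul_span_singleton, ← pow_succ']
    refine sup_le (le_sup_of_le_left ?_) le_sup_right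
    rw [mul_left_comm, pow_succ' _ n]
    exact Ideal.mul_mono_right (Ideal.mul_mono_left (Ideal.span_mono (by simp)))

lemma mem_pair_pow_succ {x : R} {n : ℕ} (hx : x ∈ Ideal.span {a, b} ^ (n + 1)) :
    ∃ q ∈ Ideal.span {a, b} ^ n, ∃ c, x = a * q + c * b ^ (n + 1) := by
  obtain ⟨u, hu, v, hv, rfl⟩ := Submodule.mem_sup.1 (pair_pow_succ_le a b n hx)
  obtain ⟨q, hq, rfl⟩ := Ideal.mem_span_singleton_mul.1 hu
  obtain ⟨c, rfl⟩ := Ideal.mem_span_singleton'.1 hv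
  exact ⟨q, hq, c, rfl⟩

lemma left_mem_pair (a b : R) : a ∈ Ideal.span {a, b} := Ideal.subset_span (by simp)
lemma right_mem_pair (a b : R) : b ∈ Ideal.span {a, b} := Ideal.subset_span (by simp)

lemma left_mul_mem_pair {x : R} {n : ℕ} (hx : x ∈ Ideal.span {a, b} ^ n) :
    a * x ∈ Ideal.span {a, b} ^ (n + 1) := by
  rw [pow_succ']
  exact Ideal.mul_mem_mul (left_mem_pair a b) hx

lemma mem_pair_iff {x : R} : x ∈ Ideal.span {a, b} ↔ ∃ u v, x = a * u + b * v := by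
  rw [Ideal.mem_span_pair]
  constructor
  · rintro ⟨u, v, rfl⟩
    exact ⟨u, v, by ring⟩
  · rintro ⟨u, v, rfl⟩
    exact ⟨u, v, by ring⟩

namespace RegPair

lemma cancel_left (h : RegPair a b) {x y : R} (hxy : a * x = a * y) : x = y :=
  sub_eq_zero.1 (h.left _ (by rw [mul_sub, hxy, sub_self]))

lemma pow_left (h : RegPair a b) {n : ℕ} {z : R} (hz : a ^ n * z = 0) : z = 0 := by
  induction n with
  | zero => simpa using hz
  | succ n ih => exact ih (h.left _ (by rw [← hz]; ring))

lemma pow_right (h : RegPair a b) {n : ℕ} {z : R} (hz : a ∣ b ^ n * z) : a ∣ z := by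
  induction n with
  | zero => simpa using hz
  | succ n ih => exact ih (h.right _ (by rw [← mul_assoc, ← pow_succ']; exact hz))

/-- `(a,b)^(n+1) : a = (a,b)^n`. -/
lemma left_cancel_pow (h : RegPair a b) {n : ℕ} {z : R} (hz : a * z ∈ Ideal.span {a, b} ^ (n + 1)) :
    z ∈ Ideal.span {a, b} ^ n := by
  obtain ⟨q, hq, c, hc⟩ := mem_pair_pow_succ hz
  obtain ⟨c', rfl⟩ : a ∣ c := h.pow_right (n := n + 1) ⟨z - q, by linear_combination -hc⟩
  have : z = q + c' * b ^ (n + 1) := h.cancel_left (by rw [hc]; ring)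
  rw [this]
  exact add_mem hq (Ideal.mul_mem_left _ _
    (Ideal.pow_le_pow_right (Nat.le_succ n) (Ideal.pow_mem_pow (right_mem_pair a b) _)))

lemma left_pow_cancel (h : RegPair a b) {l n : ℕ} {z : R} (hz : a ^ l * z ∈ Ideal.span {a, b} ^ n) :
    z ∈ Ideal.span {a, b} ^ (n - l) := by
  induction l generalizing n with
  | zero => simpa using hz
  | succ l ih =>
    cases n with
    | zero => simp
    | succ n =>
      rw [Nat.add_sub_add_right]
      refine ih (h.left_cancel_pow ?_)
      rwa [← mul_assoc, ← pow_succ']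

lemma top_coeff (h : RegPair a b) {c q : R} {d : ℕ} (hq : c * b ^ d + a * q ∈ Ideal.span {a, b} ^ (d + 1)) :
    c ∈ Ideal.span {a, b} := by
  obtain ⟨q', -, c', hc⟩ := mem_pair_pow_succ hq
  obtain ⟨w, hw⟩ : a ∣ c - c' * b :=
    h.pow_right (n := d) ⟨q' - q, by linear_combination hc⟩
  exact mem_pair_iff.2 ⟨w, c', by linear_combination hw⟩

/-- The quasi-regularity of `a, b`: forms of degree `d` vanish modulo `(a,b)^(d+1)` only if their
coefficients are in `(a,b)`. -/
lemma coeff_mem (h : RegPair a b) (d : ℕ) (c : ℕ → R)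
    (hc : ∑ s ∈ Finset.range (d + 1), c s * (a ^ (d - s) * b ^ s) ∈ Ideal.span {a, b} ^ (d + 1)) :
    ∀ s ≤ d, c s ∈ Ideal.span {a, b} := by
  induction d with
  | zero =>
    intro s hs
    obtain rfl : s = 0 := by omega
    simpa using hc
  | succ d ih =>
    have hsplit : ∑ s ∈ Finset.range (d + 1 + 1), c s * (a ^ (d + 1 - s) * b ^ s) =
        c (d + 1) * b ^ (d + 1) +
          a * ∑ s ∈ Finset.range (d + 1), c s * (a ^ (d - s) * b ^ s) := by
      rw [Finset.sum_range_succ, add_comm, Finset.mul_sum]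
      congr 1
      · simp
      · refine Finset.sum_congr rfl fun s hs => ?_
        rw [Nat.sub_add_comm (by simpa [Nat.lt_succ_iff] using hs), pow_succ]
        ring
    rw [hsplit] at hc
    have htop := h.top_coeff hc
    have h1 : c (d + 1) * b ^ (d + 1) ∈ Ideal.span {a, b} ^ (d + 1 + 1) := by
      rw [pow_succ' _ (d + 1)]
      exact Ideal.mul_mem_mul htop (Ideal.pow_mem_pow (right_mem_pair a b) _)
    have h2 := h.left_cancel_pow ((Ideal.add_mem_iff_right _ h1).1 hc)
    intro s hs
    rcases Nat.lt_or_ge s (d + 1) with h' | h'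
    · exact ih h2 s (by omega)
    · obtain rfl : s = d + 1 := by omega
      exact htop

/-- If `x` has order at least `d` and `b ^ s x` has, modulo a multiple of `a ^ N` with `N > d`,
order more than `s + d`, then the order of `x` is more than `d`. -/
lemma order_lift (h : RegPair a b) {d : ℕ} : ∀ {N s : ℕ} {x z q : R}, x ∈ Ideal.span {a, b} ^ d → d < N →
    b ^ s * x = a ^ N * z + q → q ∈ Ideal.span {a, b} ^ (s + d + 1) →
    x ∈ Ideal.span {a, b} ^ (d + 1) := by
  induction d with
  | zero =>
    intro N s x z q hx hN hxz hq
    obtain ⟨N, rfl⟩ : ∃ M, N = M + 1 := ⟨N - 1, by omega⟩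
    rw [zero_add, pow_one]
    refine h.top_coeff (d := s) (q := -(a ^ N * z)) ?_
    convert hq using 1
    linear_combination hxz
  | succ d ih =>
    intro N s x z q hx hN hxz hq
    obtain ⟨N, rfl⟩ : ∃ M, N = M + 1 := ⟨N - 1, by omega⟩
    obtain ⟨x', hx', c, rfl⟩ := mem_pair_pow_succ hx
    have hc : c ∈ Ideal.span {a, b} := by
      refine h.top_coeff (d := s + (d + 1)) (q := b ^ s * x' - a ^ N * z) ?_
      convert hq using 1
      linear_combination hxz
    have hcb : c * b ^ (d + 1) ∈ Ideal.span {a, b} ^ (d + 1 + 1) := by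
      rw [pow_succ' _ (d + 1)]
      exact Ideal.mul_mem_mul hc (Ideal.pow_mem_pow (right_mem_pair a b) _)
    refine add_mem (left_mul_mem_pair ?_) hcb
    refine ih (N := N) (s := s) (z := z) (q := b ^ s * x' - a ^ N * z) hx' (by omega) (by ring) ?_
    refine h.left_cancel_pow ?_
    have h1 : b ^ s * (c * b ^ (d + 1)) ∈ Ideal.span {a, b} ^ (s + (d + 1) + 1) := by
      rw [add_assoc, pow_add]
      exact Ideal.mul_mem_mul (Ideal.pow_mem_pow (right_mem_pair a b) _) hcb
    have h2 := sub_mem hq h1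
    rw [add_assoc s d 1]
    convert h2 using 1
    linear_combination hxz

/-- `ℓ(R/(a,b)^n) ≤ e n (n+1) / 2` where `e = ℓ(R/(a,b))`. -/
lemma length_pow_le (h : RegPair a b) {e : ℕ} (he : Module.length R (R ⧸ Ideal.span {a, b}) ≤ e) (n : ℕ) :
    2 * Module.length R (R ⧸ Ideal.span {a, b} ^ n) ≤ (e * n * (n + 1) : ℕ) := by
  have h1 : ∀ n : ℕ, Module.length R (R ⧸ (Ideal.span {a} ⊔ Ideal.span {b ^ n})) ≤
      (n * e : ℕ) := by
    intro n
    induction n with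
    | zero =>
      have : Ideal.span {a} ⊔ Ideal.span {b ^ 0} = ⊤ := by simp
      rw [this, Module.length_eq_zero]
      simp
    | succ n ih =>
      let U := Ideal.span {a} ⊔ Ideal.span {b ^ (n + 1)}
      let V : Ideal R := Submodule.comap (LinearMap.mulLeft R b) U
      have e1 := qlen_colon U V b (fun z => Iff.rfl)
      have e2 : Ideal.span {a} ⊔ Ideal.span {b ^ n} ≤ V := by
        refine sup_le ?_ ?_
        · rw [Ideal.span_singleton_le_iff_mem]
          exact Ideal.mem_sup_left (Ideal.mul_mem_left _ _ (Ideal.mem_span_singleton_self a))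
        · rw [Ideal.span_singleton_le_iff_mem]
          change b * b ^ n ∈ U
          rw [← pow_succ']
          exact Ideal.mem_sup_right (Ideal.mem_span_singleton_self _)
      have e3 : Ideal.span {a, b} ≤ U ⊔ Ideal.span {b} := by
        rw [Ideal.span_insert]
        exact sup_le_sup_right le_sup_left _
      rw [show Module.length R (R ⧸ (Ideal.span {a} ⊔ Ideal.span {b ^ (n + 1)}))
        = Module.length R (R ⧸ U) from rfl, e1, add_mul, one_mul, Nat.cast_add]
      exact add_le_add ((qlen_anti e2).trans ih) ((qlen_anti e3).trans he)
  induction n with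
  | zero =>
    rw [pow_zero, Ideal.one_eq_top, Module.length_eq_zero]
    simp
  | succ n ih =>
    rw [qlen_colon (Ideal.span {a, b} ^ (n + 1)) (Ideal.span {a, b} ^ n) a
      (fun z => ⟨left_mul_mem_pair, h.left_cancel_pow⟩), mul_add]
    have e1 : Ideal.span {a} ⊔ Ideal.span {b ^ (n + 1)} ≤
        Ideal.span {a, b} ^ (n + 1) ⊔ Ideal.span {a} := by
      refine sup_le le_sup_right (le_sup_of_le_left ?_)
      rw [Ideal.span_singleton_le_iff_mem]
      exact Ideal.pow_mem_pow (right_mem_pair a b) _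
    have e2 := (qlen_anti e1).trans (h1 (n + 1))
    have e3 := add_le_add ih (mul_le_mul_right e2 2)
    refine e3.trans (le_of_eq ?_)
    norm_cast
    ring

end RegPair

end RegPair
end GJR

/-! ### The asymptotic order filtration -/

namespace GJR

section Asymptotic

variable {R : Type*} [CommRing R]

/-- The ideal of elements whose asymptotic `Q`-adic order is at least `γ` up to a bounded error:
`x ^ m ∈ Q ^ ⌊γ m - C⌋` for some constant `C` and all `m`. -/
noncomputable def asyE (Q : Ideal R) (γ : ℝ) : Ideal R where
  carrier := {x | ∃ C : ℝ, ∀ m : ℕ, x ^ m ∈ Q ^ ⌊γ * m - C⌋₊}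
  zero_mem' := by
    refine ⟨0, fun m => ?_⟩
    rcases Nat.eq_zero_or_pos m with rfl | hm
    · simp
    · rw [zero_pow hm.ne']
      exact zero_mem _
  add_mem' := by
    rintro x y ⟨C, hC⟩ ⟨C', hC'⟩
    refine ⟨C + C' + 2, fun m => ?_⟩
    rw [add_pow]
    refine sum_mem fun u hu => Ideal.mul_mem_right _ _ ?_
    have hu : u ≤ m := by simpa [Nat.lt_succ_iff] using hu
    refine Ideal.pow_le_pow_right ?_ (by
      rw [pow_add]; exact Ideal.mul_mem_mul (hC u) (hC' (m - u)))
    refine Nat.floor_le_of_le ?_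
    have h1 := Nat.lt_floor_add_one (γ * u - C)
    have h2 := Nat.lt_floor_add_one (γ * (m - u : ℕ) - C')
    push_cast [hu] at h1 h2 ⊢
    linarith
  smul_mem' := by
    rintro c x ⟨C, hC⟩
    refine ⟨C, fun m => ?_⟩
    rw [smul_eq_mul, mul_pow]
    exact Ideal.mul_mem_left _ _ (hC m)

/-- The ideal of elements of asymptotic `Q`-adic order at least `n`. -/
noncomputable def asyF (Q : Ideal R) (n : ℕ) : Ideal R := ⨅ γ : {γ : ℝ // γ < n}, asyE Q γ

variable {Q : Ideal R}

lemma mem_asyE {γ : ℝ} {x : R} : x ∈ asyE Q γ ↔ ∃ C : ℝ, ∀ m : ℕ, x ^ m ∈ Q ^ ⌊γ * m - C⌋₊ :=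
  Iff.rfl

lemma mem_asyF {n : ℕ} {x : R} : x ∈ asyF Q n ↔ ∀ γ : ℝ, γ < n → x ∈ asyE Q γ := by
  simp [asyF, Submodule.mem_iInf]

lemma asyE_anti {γ γ' : ℝ} (h : γ ≤ γ') : asyE Q γ' ≤ asyE Q γ := by
  rintro x ⟨C, hC⟩
  refine ⟨C, fun m => Ideal.pow_le_pow_right (Nat.floor_mono ?_) (hC m)⟩
  gcongr

lemma asyE_mul {γ γ' : ℝ} {x y : R} (hx : x ∈ asyE Q γ) (hy : y ∈ asyE Q γ') :
    x * y ∈ asyE Q (γ + γ') := by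
  obtain ⟨C, hC⟩ := hx
  obtain ⟨C', hC'⟩ := hy
  refine ⟨C + C' + 2, fun m => ?_⟩
  rw [mul_pow]
  refine Ideal.pow_le_pow_right ?_ (by
    rw [pow_add]; exact Ideal.mul_mem_mul (hC m) (hC' m))
  refine Nat.floor_le_of_le ?_
  have h1 := Nat.lt_floor_add_one (γ * m - C)
  have h2 := Nat.lt_floor_add_one (γ' * m - C')
  push_cast
  linarith

lemma asyE_of_pow {m₀ d : ℕ} (hm : 0 < m₀) {x : R} (hx : x ^ m₀ ∈ Q ^ d) :
    x ∈ asyE Q (d / m₀) := by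
  refine ⟨d, fun m => ?_⟩
  have h1 : x ^ m ∈ Q ^ (d * (m / m₀)) := by
    have : x ^ m = (x ^ m₀) ^ (m / m₀) * x ^ (m % m₀) := by
      rw [← pow_mul, ← pow_add, Nat.div_add_mod]
    rw [this, pow_mul]
    exact Ideal.mul_mem_right _ _ (Ideal.pow_mem_pow hx _)
  refine Ideal.pow_le_pow_right (Nat.floor_le_of_le ?_) h1
  have h2 : m ≤ m₀ * (m / m₀) + m₀ := by
    have := Nat.div_add_mod m m₀
    have := Nat.mod_lt m hm
    omega
  have h2 : (m : ℝ) ≤ m₀ * ((m / m₀ : ℕ) : ℝ) + m₀ := by exact_mod_cast h2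
  have hm' : (0 : ℝ) < m₀ := by exact_mod_cast hm
  rw [Nat.cast_mul, sub_le_iff_le_add, div_mul_eq_mul_div, div_le_iff₀ hm']
  have : (0 : ℝ) ≤ d := by positivity
  nlinarith

lemma pow_le_asyE (d : ℕ) : Q ^ d ≤ asyE Q d := by
  intro x hx
  have := asyE_of_pow (Q := Q) one_pos (x := x) (d := d) (by simpa using hx)
  simpa using this

lemma asyE_eq_top {γ : ℝ} (h : γ ≤ 0) : asyE Q γ = ⊤ := by
  rw [Ideal.eq_top_iff_one]
  refine ⟨0, fun m => ?_⟩
  rw [Nat.floor_of_nonpos (by have : (0 : ℝ) ≤ m := by positivity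
                              nlinarith)]
  simp

lemma order_lt_of_not_mem_asyE {γ : ℝ} {x : R} (hx : x ∉ asyE Q γ) {m d : ℕ} (hm : 0 < m)
    (hd : x ^ m ∈ Q ^ d) : (d : ℝ) < γ * m := by
  by_contra hlt
  push Not at hlt
  refine hx (asyE_anti ?_ (asyE_of_pow hm hd))
  rw [le_div_iff₀ (by exact_mod_cast hm)]
  exact hlt

lemma asyF_zero : asyF Q 0 = ⊤ := by
  rw [eq_top_iff]
  intro x _
  rw [mem_asyF]
  intro γ hγ
  rw [asyE_eq_top (by simpa using hγ.le)]
  trivial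

lemma asyF_anti : Antitone (asyF Q) := by
  intro n m hnm x hx
  rw [mem_asyF] at hx ⊢
  intro γ hγ
  exact hx γ (hγ.trans_le (by exact_mod_cast hnm))

lemma pow_le_asyF (d : ℕ) : Q ^ d ≤ asyF Q d := by
  intro x hx
  rw [mem_asyF]
  exact fun γ hγ => asyE_anti hγ.le (pow_le_asyE d hx)

lemma mul_mem_asyF {q x : R} {n d : ℕ} (hq : q ∈ Q ^ d) (hx : x ∈ asyF Q n) :
    q * x ∈ asyF Q (n + d) := by
  rw [mem_asyF] at hx ⊢
  intro γ hγ
  have := asyE_mul (pow_le_asyE d hq) (hx (γ - d) (by push_cast at hγ; linarith))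
  simpa using this

/-- Elements of asymptotic order greater than `N`, in the discrete form used for integral
dependence. -/
lemma asyF_discrete {N : ℕ} {x : R} (hx : x ∈ asyF Q (N + 1)) :
    ∃ c : ℕ, ∀ m : ℕ, x ^ (m + c) ∈ (Q ^ N) ^ m := by
  obtain ⟨C, hC⟩ := mem_asyF.1 hx (N + 1 / 2) (by push_cast; linarith)
  obtain ⟨c, hc⟩ := exists_nat_ge (2 * C)
  refine ⟨c, fun m => ?_⟩
  rw [← pow_mul]
  refine Ideal.pow_le_pow_right ?_ (hC (m + c))
  refine Nat.le_floor ?_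
  push_cast
  have h1 : (0 : ℝ) ≤ N * c := by positivity
  have h2 : (0 : ℝ) ≤ m := by positivity
  nlinarith

lemma asyF_of_discrete {N c : ℕ} {x : R} (hx : ∀ m : ℕ, x ^ (m + c) ∈ Q ^ (N * m)) :
    x ∈ asyF Q N := by
  rw [mem_asyF]
  intro γ hγ
  refine asyE_anti hγ.le ⟨N * c, fun m => ?_⟩
  rcases Nat.lt_or_ge m c with h | h
  · rw [Nat.floor_of_nonpos]
    · simp
    · have : (m : ℝ) ≤ c := by exact_mod_cast h.le
      have : (0 : ℝ) ≤ N := by positivity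
      nlinarith
  · obtain ⟨u, rfl⟩ := Nat.exists_eq_add_of_le' h
    refine Ideal.pow_le_pow_right (Nat.floor_le_of_le ?_) (hx u)
    push_cast
    linarith

variable {a b : R}

lemma RegPair.asyE_cancel (h : RegPair a b) {γ : ℝ} {x : R}
    (hx : a * x ∈ asyE (Ideal.span {a, b}) (γ + 1)) : x ∈ asyE (Ideal.span {a, b}) γ := by
  obtain ⟨C, hC⟩ := hx
  refine ⟨C, fun m => ?_⟩
  have h1 := hC m
  rw [mul_pow] at h1
  have h2 := h.left_pow_cancel h1
  rwa [← Nat.floor_sub_natCast, show (γ + 1) * m - C - m = γ * m - C by ring] at h2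

lemma RegPair.asyF_cancel (h : RegPair a b) {n : ℕ} {x : R}
    (hx : a * x ∈ asyF (Ideal.span {a, b}) (n + 1)) : x ∈ asyF (Ideal.span {a, b}) n := by
  rw [mem_asyF] at hx ⊢
  exact fun γ hγ => h.asyE_cancel (hx (γ + 1) (by push_cast; linarith))

lemma RegPair.asyF_pow_cancel (h : RegPair a b) {n t : ℕ} {x : R}
    (hx : a ^ t * x ∈ asyF (Ideal.span {a, b}) (n + t)) : x ∈ asyF (Ideal.span {a, b}) n := by
  induction t with
  | zero => simpa using hx
  | succ t ih =>
    refine ih (h.asyF_cancel ?_)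
    rwa [← mul_assoc, ← pow_succ']

/-- If `x` has asymptotic order less than `i + 1` then `b ^ s x` is not congruent to a multiple of
`a ^ (i+1)` modulo elements of asymptotic order at least `s + i + 1`.  The proof compares the
`Q`-adic orders of the two sides of the `m`-th power of such a congruence, for large `m`. -/
theorem RegPair.asyF_neg (h : RegPair a b) {i s : ℕ} {x z w : R}
    (hxz : b ^ s * x = a ^ (i + 1) * z + w)
    (hw : w ∈ asyF (Ideal.span {a, b}) (s + i + 1)) : x ∈ asyF (Ideal.span {a, b}) (i + 1) := by
  set Q := Ideal.span {a, b} with hQ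
  rw [mem_asyF]
  by_contra! hcon
  obtain ⟨γ, hγ, hxγ⟩ := hcon
  have hγ0 : 0 < γ := by
    by_contra! h0
    rw [asyE_eq_top h0] at hxγ
    exact hxγ trivial
  obtain ⟨δ, hδ⟩ : ∃ δ : ℝ, δ = i + 1 - γ := ⟨_, rfl⟩
  push_cast at hγ
  have hδ0 : 0 < δ := by linarith
  have hi : (0 : ℝ) < i + 1 := by positivity
  -- `η` is the proportion of factors `w` separating the two kinds of terms
  obtain ⟨η, hη⟩ : ∃ η : ℝ, η = δ / (2 * (i + 1)) := ⟨_, rfl⟩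
  have hη0 : 0 < η := by rw [hη]; positivity
  have hη1 : (i + 1) * η = δ / 2 := by rw [hη]; field_simp
  obtain ⟨ε, hε⟩ : ∃ ε : ℝ, ε = min (δ / 4) (δ * η / 4) := ⟨_, rfl⟩
  have hε0 : 0 < ε := by rw [hε]; positivity
  have hε1 : ε ≤ δ / 4 := by rw [hε]; exact min_le_left _ _
  have hε2 : ε ≤ δ * η / 4 := by rw [hε]; exact min_le_right _ _
  -- approximate the asymptotic order of `x`
  obtain ⟨β, hβx, hβx', hβγ⟩ : ∃ β : ℝ, x ∈ asyE Q β ∧ x ∉ asyE Q (β + ε) ∧ β ≤ γ := by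
    have hex : ∃ k : ℕ, x ∉ asyE Q (k * ε) := by
      obtain ⟨k, hk⟩ := exists_nat_ge (γ / ε)
      exact ⟨k, fun hk' => hxγ (asyE_anti ((div_le_iff₀ hε0).1 hk) hk')⟩
    classical
    have hpos : Nat.find hex ≠ 0 := by
      intro h0
      have := Nat.find_spec hex
      rw [h0, asyE_eq_top (by simp)] at this
      exact this trivial
    obtain ⟨k, hk⟩ := Nat.exists_eq_succ_of_ne_zero hpos
    have h1 : x ∈ asyE Q (k * ε) := not_not.1 (Nat.find_min hex (m := k) (by omega))
    have h2 := Nat.find_spec hex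
    rw [hk] at h2
    refine ⟨k * ε, h1, by push_cast at h2; rwa [add_mul, one_mul] at h2, ?_⟩
    by_contra! h3
    exact hxγ (asyE_anti h3.le h1)
  have hbs : b ^ s * x ∈ asyE Q (s + β) :=
    asyE_mul (pow_le_asyE s (Ideal.pow_mem_pow (right_mem_pair a b) s)) hβx
  have hwE : w ∈ asyE Q (s + γ + δ / 2) := mem_asyF.1 hw _ (by push_cast; linarith)
  have hu : a ^ (i + 1) * z ∈ asyE Q (s + β) := by
    have : a ^ (i + 1) * z = b ^ s * x - w := by rw [hxz]; ring
    rw [this]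
    exact sub_mem hbs (asyE_anti (by linarith) hwE)
  obtain ⟨C₁, hC₁⟩ := hu
  obtain ⟨C₂, hC₂⟩ := hwE
  -- choose `m` large
  obtain ⟨m, hm⟩ := exists_nat_ge ((C₁ + C₂ + 4) / (δ * η / 4))
  have hm1 : C₁ + C₂ + 4 ≤ (δ * η / 4) * (m + 1) := by
    rw [div_le_iff₀ (by positivity)] at hm
    have : 0 < δ * η / 4 := by positivity
    nlinarith
  obtain ⟨n, hn⟩ : ∃ n, n = m + 1 := ⟨_, rfl⟩
  have hn0 : 0 < n := by omega
  have hn1 : C₁ + C₂ + 4 ≤ (δ * η / 4) * n := by rw [hn]; exact_mod_cast hm1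
  have hnR : (0 : ℝ) < n := by exact_mod_cast hn0
  -- `d` is the order of `x ^ n`
  obtain ⟨d, hd, hd'⟩ : ∃ d, x ^ n ∈ Q ^ d ∧ x ^ n ∉ Q ^ (d + 1) := by
    have hex : ∃ d, x ^ n ∉ Q ^ (d + 1) := by
      obtain ⟨d, hd⟩ := exists_nat_ge ((β + ε) * n)
      refine ⟨d, fun h1 => ?_⟩
      have := order_lt_of_not_mem_asyE hβx' hn0 h1
      push_cast at this
      linarith
    classical
    refine ⟨Nat.find hex, ?_, Nat.find_spec hex⟩
    rcases Nat.eq_zero_or_pos (Nat.find hex) with h0 | h0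
    · rw [h0]; simp
    · obtain ⟨k, hk⟩ := Nat.exists_eq_succ_of_ne_zero h0.ne'
      have := not_not.1 (Nat.find_min hex (m := k) (by omega))
      rwa [hk]
  have hdlt := order_lt_of_not_mem_asyE hβx' hn0 hd
  have hmem : b ^ (s * n) * x ^ n ∈ Ideal.span {a ^ (d + 1)} ⊔ Q ^ (s * n + d + 1) := by
    rw [pow_mul, ← mul_pow, hxz, add_pow]
    refine sum_mem fun u hu => Ideal.mul_mem_right _ _ ?_
    have hu : u ≤ n := by simpa [Nat.lt_succ_iff] using hu
    obtain ⟨l, rfl⟩ := Nat.exists_eq_add_of_le hu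
    rw [Nat.add_sub_cancel_left]
    push_cast at hnR hn1 hdlt
    rcases lt_or_ge (l : ℝ) (η * (u + l)) with hl | hl
    · refine Ideal.mem_sup_left (Ideal.mul_mem_right _ _ ?_)
      rw [mul_pow, ← pow_mul]
      refine Ideal.mul_mem_right _ _ (Ideal.mem_span_singleton.2 (pow_dvd_pow _ ?_))
      have h1 : ((i + 1 : ℝ)) * l < (δ / 2) * (u + l) := by
        rw [← hη1, mul_assoc]
        exact mul_lt_mul_of_pos_left hl hi
      have h2 : (d : ℝ) < (i + 1) * u := by
        have h3 : (β + ε) * (u + l) ≤ (i + 1 - δ / 2) * (u + l) :=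
          mul_le_mul_of_nonneg_right (by linarith) hnR.le
        nlinarith
      have h2 : d < (i + 1) * u := by exact_mod_cast h2
      exact h2
    · refine Ideal.mem_sup_right (Ideal.pow_le_pow_right ?_ (by
        rw [pow_add]; exact Ideal.mul_mem_mul (hC₁ u) (hC₂ l)))
      have h1 := Nat.lt_floor_add_one ((s + β) * u - C₁)
      have h2 := Nat.lt_floor_add_one ((s + γ + δ / 2) * l - C₂)
      have h3 : (β : ℝ) * l ≤ γ * l := mul_le_mul_of_nonneg_right hβγ (by positivity)
      have h4 : δ / 2 * (η * (u + l)) ≤ δ / 2 * l := mul_le_mul_of_nonneg_left hl (by positivity)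
      have h5 : ε * (u + l) ≤ δ * η / 4 * (u + l) := mul_le_mul_of_nonneg_right hε2 hnR.le
      have h6 : (s * (u + l) + d + 1 : ℝ) ≤
          (⌊(s + β) * u - C₁⌋₊ : ℝ) + (⌊(s + γ + δ / 2) * l - C₂⌋₊ : ℝ) := by
        nlinarith
      exact_mod_cast h6
  obtain ⟨u, hu, q, hq, huq⟩ := Submodule.mem_sup.1 hmem
  obtain ⟨z', rfl⟩ := Ideal.mem_span_singleton.1 hu
  exact hd' (h.order_lift hd (Nat.lt_succ_self d) huq.symm hq)

end Asymptotic
end GJR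

/-! ### One-step generation of the asymptotic filtration -/

namespace GJR

lemma slen_map_congr {R M N N' : Type*} [CommRing R] [AddCommGroup M] [Module R M]
    [AddCommGroup N] [Module R N] [AddCommGroup N'] [Module R N'] (f : M →ₗ[R] N)
    (g : M →ₗ[R] N') (A : Submodule R M) (h : ∀ x ∈ A, f x = 0 ↔ g x = 0) :
    Module.length R (A.map f) = Module.length R (A.map g) := by
  have hk : LinearMap.ker (f.domRestrict A) = LinearMap.ker (g.domRestrict A) := by
    ext x
    simpa using h x x.2
  have e1 := (f.domRestrict A).quotKerEquivRange.length_eq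
  have e2 := (g.domRestrict A).quotKerEquivRange.length_eq
  rw [hk] at e1
  rw [LinearMap.range_domRestrict] at e1 e2
  rw [← e1, ← e2]

section Step

variable {R : Type*} [CommRing R] {a b : R}

/-- `x ↦ u ^ n x`, a linear map to an algebra; used for `u = 1 / a`. -/
noncomputable def scaledMap (K : Type*) [CommRing K] [Algebra R K] (u : K) (n : ℕ) : R →ₗ[R] K :=
  (LinearMap.mulLeft R (u ^ n)).comp (Algebra.linearMap R K)

lemma scaledMap_apply {K : Type*} [CommRing K] [Algebra R K] (u : K) (n : ℕ) (x : R) :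
    scaledMap K u n x = u ^ n * algebraMap R K x := rfl

/-- The submodule of all `y` in `R[1/a]` such that `a ^ n y` has asymptotic order at least `n + 1`
for some `n`. -/
noncomputable def posPart (a b : R) (K : Type*) [CommRing K] [Algebra R K] (u : K)
    (hu : algebraMap R K a * u = 1) : Submodule R K where
  carrier := {y | ∃ n, ∃ x ∈ asyF (Ideal.span {a, b}) (n + 1), y = scaledMap K u n x}
  zero_mem' := ⟨0, 0, zero_mem _, by simp⟩
  add_mem' := by
    rintro _ _ ⟨n, x, hx, rfl⟩ ⟨m, y, hy, rfl⟩
    refine ⟨n + m, a ^ m * x + a ^ n * y, add_mem ?_ ?_, ?_⟩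
    · have := mul_mem_asyF (Ideal.pow_mem_pow (left_mem_pair a b) m) hx
      rwa [add_right_comm] at this
    · have := mul_mem_asyF (Ideal.pow_mem_pow (left_mem_pair a b) n) hy
      rwa [add_right_comm, add_comm m] at this
    · have e1 : ∀ k, algebraMap R K a ^ k * u ^ k = 1 := fun k => by
        rw [← mul_pow, hu, one_pow]
      simp only [scaledMap_apply, map_add, map_mul, map_pow, pow_add]
      linear_combination (-u ^ n * algebraMap R K x) * e1 m + (-u ^ m * algebraMap R K y) * e1 n
  smul_mem' := by
    rintro c _ ⟨n, x, hx, rfl⟩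
    exact ⟨n, c • x, Submodule.smul_mem _ c hx, by rw [map_smul]⟩

/-- The length estimate behind `RegPair.asyF_step`.  Here `V` models `R[1/a]` modulo the elements of
positive order, `F n x` is the class of `x / a ^ n`, and `X` is multiplication by `b / a`. -/
lemma RegPair.asyF_step_aux (h : RegPair a b) {e : ℕ}
    (he : Module.length R (R ⧸ Ideal.span {a, b}) ≤ e) {V : Type*} [AddCommGroup V] [Module R V]
    (F : ℕ → R →ₗ[R] V) (X : V →ₗ[R] V) (hFa : ∀ n t x, F (n + t) (a ^ t * x) = F n x)
    (hF0 : ∀ n x, F n x = 0 ↔ x ∈ asyF (Ideal.span {a, b}) (n + 1))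
    (hXF : ∀ n x, X (F n x) = F (n + 1) (b * x)) :
    ∃ n1, ∀ n, n1 ≤ n → asyF (Ideal.span {a, b}) (n + 1) ≤
      Ideal.span {a, b} * asyF (Ideal.span {a, b}) n ⊔ asyF (Ideal.span {a, b}) (n + 2) := by
  set Q := Ideal.span {a, b} with hQ
  have hXtF : ∀ n t x, (X ^ t) (F n x) = F (n + t) (b ^ t * x) := by
    intro n t x
    induction t with
    | zero => simp
    | succ t ih =>
      rw [pow_succ' X, Module.End.mul_apply, ih, hXF, ← mul_assoc, ← pow_succ']
      rfl
  let M : ℕ → Submodule R V := fun n => Submodule.map (F n) (asyF Q n)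
  have hlenM : ∀ D, ∑ n ∈ Finset.range D, Module.length R (M n) =
      Module.length R (R ⧸ asyF Q D) := by
    intro D
    induction D with
    | zero =>
      have : Subsingleton (R ⧸ asyF Q 0) := by
        rw [asyF_zero]
        exact Submodule.Quotient.subsingleton_iff.2 rfl
      rw [Finset.sum_range_zero, Module.length_eq_zero]
    | succ D ih =>
      rw [Finset.sum_range_succ, ih, qlen_eq_add (R := R) (M := R) (asyF_anti (Q := Q) (Nat.le_succ D)), add_comm]
      congr 1
      refine slen_map_congr _ _ _ fun x _ => ?_
      rw [hF0]
      exact (Submodule.Quotient.mk_eq_zero _).symm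
  obtain ⟨n1, hn1⟩ := filtration_eventually_generated (X := X) (M := M)
    (monotone_nat_of_le_succ fun n => by
      rintro _ ⟨x, hx, rfl⟩
      refine ⟨a ^ 1 * x, ?_, hFa n 1 x⟩
      exact mul_mem_asyF (Ideal.pow_mem_pow (left_mem_pair a b) 1) hx)
    (by
      rintro n _ ⟨x, hx, rfl⟩
      refine ⟨b ^ 1 * x, mul_mem_asyF (Ideal.pow_mem_pow (right_mem_pair a b) 1) hx, ?_⟩
      rw [hXF, pow_one])
    (by
      rintro i j _ ⟨x, hx, rfl⟩ ⟨x', hx', hxx⟩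
      rw [hXtF] at hxx
      have e1 : F (i + (j + 1)) (b ^ (j + 1) * x - a ^ (i + 1) * x') = 0 := by
        rw [map_sub, ← hxx, show i + (j + 1) = j + (i + 1) by ring, hFa, sub_self]
      rw [hF0] at e1 ⊢
      refine h.asyF_neg (s := j + 1) (z := x')
        (w := b ^ (j + 1) * x - a ^ (i + 1) * x') (by ring) ?_
      rwa [show j + 1 + i + 1 = i + (j + 1) + 1 by ring])
    e
    (fun D => by
      rw [hlenM]
      refine le_trans ?_ (h.length_pow_le he D)
      gcongr
      exact qlen_anti (pow_le_asyF D))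
  refine ⟨n1, fun n hn x hx => ?_⟩
  have hx' : F (n + 1) x ∈ M n ⊔ (M n).map X := by
    rw [← hn1 n hn]
    exact ⟨x, hx, rfl⟩
  obtain ⟨_, ⟨y, hy, rfl⟩, _, ⟨_, ⟨z, hz, rfl⟩, rfl⟩, hyz⟩ := Submodule.mem_sup.1 hx'
  rw [hXF, ← hFa n 1 y, ← map_add, pow_one, ← sub_eq_zero, ← map_sub, hF0] at hyz
  have : x = (a * y + b * z) + -(a * y + b * z - x) := by ring
  rw [this]
  exact Submodule.add_mem_sup (add_mem (Ideal.mul_mem_mul (left_mem_pair a b) hy)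
    (Ideal.mul_mem_mul (right_mem_pair a b) hz)) (neg_mem hyz)

lemma RegPair.asyF_step_of_algebra (h : RegPair a b) {e : ℕ}
    (he : Module.length R (R ⧸ Ideal.span {a, b}) ≤ e) (K : Type*) [CommRing K] [Algebra R K]
    (hinj : Function.Injective (algebraMap R K)) (u : K) (hu : algebraMap R K a * u = 1) :
    ∃ n1, ∀ n, n1 ≤ n → asyF (Ideal.span {a, b}) (n + 1) ≤
      Ideal.span {a, b} * asyF (Ideal.span {a, b}) n ⊔ asyF (Ideal.span {a, b}) (n + 2) := by
  set Q := Ideal.span {a, b} with hQ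
  have huk : ∀ k, algebraMap R K a ^ k * u ^ k = 1 := fun k => by rw [← mul_pow, hu, one_pow]
  let f : ℕ → R →ₗ[R] K := scaledMap K u
  let Z : Submodule R K := posPart a b K u hu
  have hfa : ∀ n t x, f (n + t) (a ^ t * x) = f n x := by
    intro n t x
    simp only [f, scaledMap_apply, map_mul, map_pow, pow_add]
    linear_combination (u ^ n * algebraMap R K x) * huk t
  have hfZ : ∀ n x, f n x ∈ Z ↔ x ∈ asyF Q (n + 1) := by
    intro n x
    constructor
    · rintro ⟨k, x', hx', hxx⟩
      have e1 : a ^ k * x = a ^ n * x' := by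
        apply hinj
        have hxx : u ^ n * algebraMap R K x = u ^ k * algebraMap R K x' := hxx
        simp only [map_mul, map_pow]
        linear_combination (algebraMap R K a ^ n * algebraMap R K a ^ k) * hxx
          + (-algebraMap R K x * algebraMap R K a ^ k) * huk n
          + (algebraMap R K x' * algebraMap R K a ^ n) * huk k
      refine h.asyF_pow_cancel (t := k) ?_
      rw [e1]
      have := mul_mem_asyF (Ideal.pow_mem_pow (left_mem_pair a b) n) hx'
      rwa [show k + 1 + n = n + 1 + k by ring] at this
    · intro hx
      exact ⟨n, x, hx, rfl⟩
  have hZX : Z ≤ Z.comap (LinearMap.mulLeft R (u * algebraMap R K b)) := by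
    rintro _ ⟨n, x, hx, rfl⟩
    refine ⟨n + 1, b * x, ?_, ?_⟩
    · have := mul_mem_asyF (d := 1) (Q := Q) (by rw [pow_one]; exact right_mem_pair a b) hx
      exact this
    · simp only [LinearMap.mulLeft_apply, scaledMap_apply, map_mul, pow_succ]
      ring
  refine h.asyF_step_aux he (fun n => Z.mkQ.comp (f n)) (Z.mapQ Z _ hZX)
    (fun n t x => congrArg Z.mkQ (hfa n t x))
    (fun n x => (Submodule.Quotient.mk_eq_zero Z).trans (hfZ n x)) fun n x => ?_
  refine congrArg Z.mkQ (?_ : u * algebraMap R K b * f n x = f (n + 1) (b * x))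
  simp only [f, scaledMap_apply, map_mul, pow_succ]
  ring

/-- Eventually the asymptotic filtration is generated in one step up to the next but one term. -/
theorem RegPair.asyF_step (h : RegPair a b) {e : ℕ}
    (he : Module.length R (R ⧸ Ideal.span {a, b}) ≤ e) :
    ∃ n1, ∀ n, n1 ≤ n → asyF (Ideal.span {a, b}) (n + 1) ≤
      Ideal.span {a, b} * asyF (Ideal.span {a, b}) n ⊔ asyF (Ideal.span {a, b}) (n + 2) := by
  have ha : a ∈ nonZeroDivisors R :=
    mem_nonZeroDivisors_iff_right.2 fun z hz => h.left z (by rwa [mul_comm])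
  obtain ⟨u, hu⟩ :=
    (IsLocalization.map_units (FractionRing R) (⟨a, ha⟩ : nonZeroDivisors R)).exists_right_inv
  exact h.asyF_step_of_algebra he (FractionRing R) (IsFractionRing.injective R _) u hu

end Step
end GJR

/-! ### Integral closure and its asymptotic description -/

namespace GJR

section IntegralClosure

variable {R : Type*} [CommRing R]

/-- The ideal of all `x` with `x ^ (m + c) ∈ K ^ m` for some `c` and all `m`.  It equals the
integral closure of `K` as soon as `K` contains a nonzerodivisor and `R` is Noetherian. -/
def asyCl (K : Ideal R) : Ideal R where
  carrier := {x | ∃ c, ∀ m, x ^ (m + c) ∈ K ^ m}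
  zero_mem' := ⟨1, fun m => by simp⟩
  add_mem' := by
    rintro x y ⟨c, hc⟩ ⟨d, hd⟩
    refine ⟨c + d, fun m => ?_⟩
    rw [add_pow]
    refine sum_mem fun i hi => Ideal.mul_mem_right _ _ ?_
    have hi' : i ≤ m + (c + d) := by simpa [Nat.lt_succ_iff] using hi
    have hx : x ^ i ∈ K ^ (i - c) := by
      rcases le_total c i with h | h
      · have := hc (i - c)
        rwa [Nat.sub_add_cancel h] at this
      · simp [Nat.sub_eq_zero_of_le h]
    have hy : y ^ (m + (c + d) - i) ∈ K ^ (m + (c + d) - i - d) := by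
      rcases le_total d (m + (c + d) - i) with h | h
      · have := hd (m + (c + d) - i - d)
        rwa [Nat.sub_add_cancel h] at this
      · simp [Nat.sub_eq_zero_of_le h]
    have := Ideal.mul_mem_mul hx hy
    rw [← pow_add] at this
    exact Ideal.pow_le_pow_right (by omega) this
  smul_mem' := by
    rintro r x ⟨c, hc⟩
    refine ⟨c, fun m => ?_⟩
    rw [smul_eq_mul, mul_pow]
    exact Ideal.mul_mem_left _ _ (hc m)

lemma mem_asyCl {K : Ideal R} {x : R} : x ∈ asyCl K ↔ ∃ c, ∀ m, x ^ (m + c) ∈ K ^ m := Iff.rfl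

lemma mem_asyCl_of_integral {K : Ideal R} {x : R} (hx : IsIntegralOverIdeal K x) :
    x ∈ asyCl K := by
  obtain ⟨n, hn, c, hc, heq⟩ := hx
  refine ⟨n, fun m => ?_⟩
  induction m using Nat.strong_induction_on with
  | _ m ih =>
    have e1 : x ^ (m + n) = -∑ i ∈ Finset.range n, c (i + 1) * x ^ (m + (n - (i + 1))) := by
      have := congrArg (x ^ m * ·) heq
      simp only [mul_add, mul_zero, Finset.mul_sum] at this
      rw [pow_add, eq_neg_iff_add_eq_zero, ← this]
      congr 1
      refine Finset.sum_congr rfl fun i _ => ?_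
      rw [pow_add]
      ring
    rw [e1]
    refine neg_mem (sum_mem fun i hi => ?_)
    rw [Finset.mem_range] at hi
    rcases Nat.lt_or_ge i m with h | h
    · have h1 := ih (m - (i + 1)) (by omega)
      have h2 := Ideal.mul_mem_mul (hc (i + 1)) h1
      rw [← pow_add] at h2
      rw [show m + (n - (i + 1)) = m - (i + 1) + n by omega]
      rwa [show i + 1 + (m - (i + 1)) = m by omega] at h2
    · exact Ideal.mul_mem_right _ _ (Ideal.pow_le_pow_right (by omega) (hc (i + 1)))

lemma intCl_le_asyCl (K : Ideal R) : intCl K ≤ asyCl K :=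
  Ideal.span_le.2 fun _ hx => mem_asyCl_of_integral hx

/-- If a nonzerodivisor `y` multiplies every `z ^ m` into
`K ^ m`, then the ideal of the Rees algebra generated by the `y z ^ m X ^ m` is finitely generated,
which gives an equation of integral dependence after cancelling `y`. -/
lemma integral_of_mul_pow [IsNoetherianRing R] {K : Ideal R} {y z : R}
    (hy : ∀ w, y * w = 0 → w = 0) (h : ∀ m, y * z ^ m ∈ K ^ m) : IsIntegralOverIdeal K z := by
  let p : ℕ → reesAlgebra K := fun m =>
    ⟨Polynomial.monomial m (y * z ^ m), reesAlgebra.monomial_mem.2 (h m)⟩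
  let A : ℕ →o Ideal (reesAlgebra K) :=
    ⟨fun m => Ideal.span (p '' Set.Iio m), fun m n hmn =>
      Ideal.span_mono (Set.image_mono (Set.Iio_subset_Iio hmn))⟩
  obtain ⟨m, hm⟩ := monotone_stabilizes_iff_noetherian.2
    (inferInstance : IsNoetherianRing (reesAlgebra K)) A
  have h1 : p (m + 1) ∈ A (m + 1) := by
    rw [← hm (m + 1) (by omega), hm (m + 2) (by omega)]
    exact Ideal.subset_span ⟨m + 1, by simp, rfl⟩
  have h2 : A (m + 1) = Ideal.span (Set.range fun i : Fin (m + 1) => p i) := by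
    change Ideal.span _ = _
    congr 1
    ext q
    constructor
    · rintro ⟨i, hi, rfl⟩
      exact ⟨⟨i, hi⟩, rfl⟩
    · rintro ⟨i, rfl⟩
      exact ⟨i, i.2, rfl⟩
  rw [h2, Ideal.mem_span_range_iff_exists_fun] at h1
  obtain ⟨t, ht⟩ := h1
  let t' : ℕ → reesAlgebra K := fun i => if hi : i < m + 1 then t ⟨i, hi⟩ else 0
  have ht' : ∑ i ∈ Finset.range (m + 1), t' i * p i = p (m + 1) := by
    rw [← ht, ← Fin.sum_univ_eq_sum_range (fun i => t' i * p i)]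
    refine Finset.sum_congr rfl fun i _ => ?_
    simp only [t', dif_pos i.2]
  have h3 : ∑ i ∈ Finset.range (m + 1), (t' i : Polynomial R).coeff (m + 1 - i) * (y * z ^ i)
      = y * z ^ (m + 1) := by
    have := congrArg (fun q : reesAlgebra K => (q : Polynomial R).coeff (m + 1)) ht'
    simp only [p, AddSubmonoidClass.coe_finsetSum, MulMemClass.coe_mul, Polynomial.finsetSum_coeff,
      Polynomial.coeff_monomial_same] at this
    rw [← this]
    refine Finset.sum_congr rfl fun i hi => ?_
    rw [Finset.mem_range] at hi
    obtain ⟨j, hj⟩ := Nat.exists_eq_add_of_le' hi.le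
    rw [hj, Polynomial.coeff_mul_monomial, Nat.add_sub_cancel]
  refine ⟨m + 1, by omega, fun j => -(t' (m + 1 - j) : Polynomial R).coeff j, fun j =>
    neg_mem ((mem_reesAlgebra_iff K _).1 (t' (m + 1 - j)).2 j), ?_⟩
  rw [← sub_eq_zero, ← Finset.sum_range_reflect] at h3
  refine hy _ ?_
  rw [mul_add, Finset.mul_sum, ← neg_eq_zero, ← h3, neg_add, ← Finset.sum_neg_distrib,
    sub_eq_add_neg, add_comm]
  congr 1
  refine Finset.sum_congr rfl fun i hi => ?_
  rw [Finset.mem_range] at hi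
  rw [show m + 1 - (m + 1 - 1 - i) = i + 1 by omega, show m + 1 - 1 - i = m + 1 - (i + 1) by omega]
  ring

lemma integral_of_mul_pow_add [IsNoetherianRing R] {K : Ideal R} {y z κ : R} {c : ℕ}
    (hy : ∀ w, y * w = 0 → w = 0) (hκ : κ ∈ K) (hκ' : ∀ w, κ * w = 0 → w = 0)
    (h : ∀ m, y * z ^ (m + c) ∈ K ^ m) : IsIntegralOverIdeal K z := by
  have hκc : ∀ c w, κ ^ c * w = 0 → w = 0 := by
    intro c
    induction c with
    | zero => simp
    | succ c ih =>
      intro w hw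
      rw [pow_succ, mul_assoc] at hw
      exact hκ' _ (ih _ hw)
  refine integral_of_mul_pow (y := y * κ ^ c) (fun w hw => hκc c w (hy _ (by rwa [← mul_assoc])))
    fun m => ?_
  rcases le_total c m with hm | hm
  · have h1 := Ideal.mul_mem_mul (h (m - c)) (Ideal.pow_mem_pow hκ c)
    rw [← pow_add, Nat.sub_add_cancel hm] at h1
    convert h1 using 1
    ring
  · rw [mul_assoc]
    exact Ideal.mul_mem_left _ _ (Ideal.mul_mem_right _ _
      (Ideal.pow_le_pow_right hm (Ideal.pow_mem_pow hκ c)))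

/-- An ideal containing a nonzerodivisor. -/
def HasNzd (K : Ideal R) : Prop := ∃ κ ∈ K, ∀ w, κ * w = 0 → w = 0

/-- The criterion by which elements are recognised as integral over `K`: multiplying by a fixed
nonzerodivisor and shifting the exponent by a constant are both allowed. -/
lemma mem_intCl_of_mul [IsNoetherianRing R] {K : Ideal R} (hK : HasNzd K) {y z : R} {c : ℕ}
    (hy : ∀ w, y * w = 0 → w = 0) (h : ∀ m, y * z ^ (m + c) ∈ K ^ m) : z ∈ intCl K := by
  obtain ⟨κ, hκ, hκ'⟩ := hK
  exact Ideal.subset_span (integral_of_mul_pow_add hy hκ hκ' h)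

lemma intCl_eq_asyCl [IsNoetherianRing R] {K : Ideal R} (hK : HasNzd K) : intCl K = asyCl K := by
  refine le_antisymm (intCl_le_asyCl K) ?_
  rintro z ⟨c, hc⟩
  exact mem_intCl_of_mul hK (y := 1) (by simp) (by simpa using hc)

lemma integral_of_mem_asyCl [IsNoetherianRing R] {K : Ideal R} (hK : HasNzd K) {z : R}
    (hz : z ∈ asyCl K) : IsIntegralOverIdeal K z := by
  obtain ⟨κ, hκ, hκ'⟩ := hK
  obtain ⟨c, hc⟩ := hz
  exact integral_of_mul_pow_add (y := 1) (by simp) hκ hκ' (by simpa using hc)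

lemma HasNzd.mul {K L : Ideal R} (hK : HasNzd K) (hL : HasNzd L) : HasNzd (K * L) := by
  obtain ⟨k, hk, hk'⟩ := hK
  obtain ⟨l, hl, hl'⟩ := hL
  exact ⟨k * l, Ideal.mul_mem_mul hk hl, fun w hw => hl' _ (hk' _ (by rwa [← mul_assoc]))⟩

lemma HasNzd.pow {K : Ideal R} (hK : HasNzd K) (n : ℕ) : HasNzd (K ^ n) := by
  induction n with
  | zero => exact ⟨1, by simp, by simp⟩
  | succ n ih => rw [pow_succ]; exact ih.mul hK

lemma le_intCl (K : Ideal R) : K ≤ intCl K := by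
  intro x hx
  refine Ideal.subset_span ⟨1, one_pos, fun i => if i = 1 then -x else 0, fun i => ?_, by simp⟩
  by_cases hi : i = 1
  · simpa [hi] using hx
  · simp [hi]

lemma intCl_mono {K L : Ideal R} (h : K ≤ L) : intCl K ≤ intCl L := by
  refine Ideal.span_mono ?_
  rintro x ⟨n, hn, c, hc, e⟩
  exact ⟨n, hn, c, fun i => Ideal.pow_right_mono h i (hc i), e⟩

lemma mul_intCl_le (K L : Ideal R) : K * intCl L ≤ intCl (K * L) := by
  refine Ideal.mul_le.2 fun k hk x hx => ?_
  refine Submodule.span_induction (p := fun x _ => k * x ∈ intCl (K * L)) ?_ (by simp) ?_ ?_ hx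
  · rintro x ⟨n, hn, c, hc, e⟩
    refine Ideal.subset_span ⟨n, hn, fun i => k ^ i * c i, fun i => ?_, ?_⟩
    · rw [mul_pow]
      exact Ideal.mul_mem_mul (Ideal.pow_mem_pow hk i) (hc i)
    · have := congrArg (k ^ n * ·) e
      simp only [mul_add, mul_zero, Finset.mul_sum] at this
      rw [← this, mul_pow]
      congr 1
      refine Finset.sum_congr rfl fun i hi => ?_
      rw [Finset.mem_range] at hi
      obtain ⟨j, rfl⟩ := Nat.exists_eq_add_of_le (show i + 1 ≤ n by omega)
      rw [Nat.add_sub_cancel_left, mul_pow, pow_add]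
      ring
  · intro x y _ _ hx hy
    rw [mul_add]
    exact add_mem hx hy
  · intro r x _ hx
    rw [smul_eq_mul, mul_left_comm]
    exact Ideal.mul_mem_left _ _ hx

end IntegralClosure
end GJR

/-! ### Integral fractions over one-dimensional rings -/

namespace GJR

section OneDim

variable {S : Type*} [CommRing S]

lemma length_quot_mul {d : S} (hd : ∀ z, d * z = 0 → z = 0) (L : Ideal S) :
    Module.length S (S ⧸ Ideal.span {d} * L) =
      Module.length S (S ⧸ L) + Module.length S (S ⧸ Ideal.span {d}) := by
  rw [qlen_colon (Ideal.span {d} * L) L d]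
  · rw [sup_eq_right.2 Ideal.mul_le_left]
  · intro z
    rw [Ideal.mem_span_singleton_mul]
    constructor
    · exact fun hz => ⟨z, hz, rfl⟩
    · rintro ⟨z', hz', e⟩
      have := hd (z' - z) (by rw [mul_sub, e, sub_self])
      rwa [← sub_eq_zero.1 this]

lemma length_quot_pow_ne_top {d : S} (hd : ∀ z, d * z = 0 → z = 0)
    (hl : Module.length S (S ⧸ Ideal.span {d}) ≠ ⊤) (r : ℕ) :
    Module.length S (S ⧸ Ideal.span {d} ^ r) ≠ ⊤ := by
  induction r with
  | zero =>
    rw [pow_zero, Ideal.one_eq_top]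
    have : Subsingleton (S ⧸ (⊤ : Ideal S)) := Submodule.Quotient.subsingleton_iff.2 rfl
    rw [Module.length_eq_zero]
    exact ENat.zero_ne_top
  | succ r ih =>
    rw [pow_succ', length_quot_mul hd]
    exact WithTop.add_ne_top.2 ⟨ih, hl⟩

/-- In a one-dimensional local ring with a parameter `c` of colength at most `e`, the powers
`1, t, …, t ^ (e - 1)` of an integral fraction `t = x / d` generate the module
`S[t]`, whose number of generators is at most `ℓ (S[t] / c S[t]) = ℓ (S / c)`.  Clearing
denominators in the resulting expression for `t ^ e` gives `x ^ e ∈ (d)`. -/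
theorem pow_mem_of_integral [IsLocalRing S] [IsNoetherianRing S] {c d x : S} {e : ℕ}
    (hcm : c ∈ IsLocalRing.maximalIdeal S) (hc : ∀ z, c * z = 0 → z = 0)
    (hd : ∀ z, d * z = 0 → z = 0) (hce : Module.length S (S ⧸ Ideal.span {c}) ≤ e)
    (hdl : Module.length S (S ⧸ Ideal.span {d}) ≠ ⊤)
    (hx : IsIntegralOverIdeal (Ideal.span {d}) x) : x ^ e ∈ Ideal.span {d} := by
  set m := IsLocalRing.maximalIdeal S with hm
  let w : ℕ → ℕ → S := fun r i => x ^ i * d ^ (r - i)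
  let W : ℕ → ℕ → Ideal S := fun r i => Ideal.span (w r '' Set.Iio i)
  have hxw : ∀ r i, i < r → x * w r i = d * w r (i + 1) := by
    intro r i hi
    simp only [w]
    rw [show r - i = r - (i + 1) + 1 by omega]
    ring
  have hwW : ∀ r i j, i < j → w r i ∈ W r j := fun r i j h => Ideal.subset_span ⟨i, h, rfl⟩
  -- the relation `x ^ (r + 1) ∈ d L_r`, with `L_r = W r (r + 1)`
  obtain ⟨r, hre, hr⟩ : ∃ r, e ≤ r ∧ x * w r r ∈ Ideal.span {d} * W r (r + 1) := by
    obtain ⟨N, hN, f, hf, heq⟩ := hx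
    have h0 : x * w (N - 1) (N - 1) ∈ Ideal.span {d} * W (N - 1) (N - 1 + 1) := by
      have : x * w (N - 1) (N - 1) = -∑ i ∈ Finset.range N, f (i + 1) * x ^ (N - (i + 1)) := by
        rw [eq_neg_iff_add_eq_zero, ← heq]
        simp only [w, Nat.sub_self, pow_zero, mul_one, ← pow_succ']
        rw [Nat.sub_add_cancel hN]
      rw [this]
      refine neg_mem (sum_mem fun i hi => ?_)
      rw [Finset.mem_range] at hi
      have hfi := hf (i + 1)
      rw [Ideal.span_singleton_pow, Ideal.mem_span_singleton] at hfi
      obtain ⟨g, hg⟩ := hfi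
      rw [hg, Ideal.mem_span_singleton_mul]
      refine ⟨g * w (N - 1) (N - (i + 1)), Ideal.mul_mem_left _ _ (hwW _ _ _ (by omega)), ?_⟩
      simp only [w]
      rw [show N - 1 - (N - (i + 1)) = i by omega]
      ring
    have h1 : ∀ r, x * w r r ∈ Ideal.span {d} * W r (r + 1) →
        x * w (r + 1) (r + 1) ∈ Ideal.span {d} * W (r + 1) (r + 1 + 1) := by
      intro r hr
      have e1 : x * w (r + 1) (r + 1) = x * (x * w r r) := by simp only [w]; simp; ring
      rw [e1]
      rw [Ideal.mem_span_singleton_mul] at hr ⊢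
      obtain ⟨z, hz, hzx⟩ := hr
      refine ⟨x * z, ?_, by rw [← hzx]; ring⟩
      refine Submodule.span_induction (p := fun z _ => x * z ∈ W (r + 1) (r + 1 + 1)) ?_ (by simp)
        (fun a b _ _ ha hb => by rw [mul_add]; exact add_mem ha hb)
        (fun a b _ hb => by
          rw [smul_eq_mul, mul_left_comm]; exact Ideal.mul_mem_left _ _ hb) hz
      rintro _ ⟨i, hi, rfl⟩
      have : x * w r i = w (r + 1) (i + 1) := by
        simp only [w, Nat.add_sub_add_right]; ring
      rw [this]
      exact hwW _ _ _ (by simpa using hi)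
    have h2 : ∀ k, x * w (N - 1 + k) (N - 1 + k) ∈
        Ideal.span {d} * W (N - 1 + k) (N - 1 + k + 1) := by
      intro k
      induction k with
      | zero => exact h0
      | succ k ih => exact h1 _ ih
    exact ⟨N - 1 + e, by omega, h2 e⟩
  set L := W r (r + 1) with hL
  have hxL : ∀ z ∈ L, x * z ∈ Ideal.span {d} * L := by
    intro z hz
    refine Submodule.span_induction (p := fun z _ => x * z ∈ Ideal.span {d} * L) ?_ (by simp)
        (fun a b _ _ ha hb => by rw [mul_add]; exact add_mem ha hb)
        (fun a b _ hb => by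
          rw [smul_eq_mul, mul_left_comm]; exact Ideal.mul_mem_left _ _ hb) hz
    rintro _ ⟨i, hi, rfl⟩
    rcases Nat.lt_or_ge i r with h | h
    · rw [hxw r i h]
      exact Ideal.mul_mem_mul (Ideal.mem_span_singleton_self d) (hwW _ _ _ (by omega))
    · have : i = r := le_antisymm (by simpa [Nat.lt_succ_iff] using hi) h
      rw [this]
      exact hr
  have hLfin : Module.length S (S ⧸ L) ≠ ⊤ := by
    refine ne_top_of_le_ne_top (length_quot_pow_ne_top hd hdl r) (qlen_anti ?_)
    rw [Ideal.span_singleton_pow, Ideal.span_singleton_le_iff_mem]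
    have := hwW r 0 (r + 1) (by omega)
    simpa [w] using this
  let N : ℕ → Ideal S := fun i => W r i ⊔ m * L
  have hN1 : ∀ i, N (i + 1) = N i ⊔ Ideal.span {w r i} := by
    intro i
    have : W r (i + 1) = W r i ⊔ Ideal.span {w r i} := by
      simp only [W]
      rw [← Ideal.span_union, ← Set.image_singleton, ← Set.image_union]
      congr 2
      ext j
      simp
    simp only [N]
    rw [this, sup_right_comm]
  have hWL : ∀ i, i ≤ r + 1 → W r i ≤ L := fun i hi =>
    Ideal.span_mono (Set.image_mono (Set.Iio_subset_Iio hi))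
  have hNL : ∀ i, i ≤ r + 1 → N i ≤ L := fun i hi => sup_le (hWL i hi) Ideal.mul_le_right
  have hNfin0 : Module.length S (S ⧸ N 0) ≤ Module.length S (S ⧸ L) + e := by
    refine le_trans (qlen_anti (A := Ideal.span {c} * L) ?_) ?_
    · refine le_trans (Ideal.mul_mono_left ?_) le_sup_right
      rwa [Ideal.span_singleton_le_iff_mem]
    · rw [length_quot_mul hc]
      gcongr
  obtain ⟨i, hie, hi⟩ : ∃ i ≤ e, w r i ∈ N i := by
    by_contra! hcon
    have h1 : ∀ i, i ≤ e + 1 → Module.length S (S ⧸ N i) + i ≤ Module.length S (S ⧸ N 0) := by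
      intro i
      induction i with
      | zero => simp
      | succ i ih =>
        intro hi
        refine le_trans ?_ (ih (by omega))
        have hlt : N i < N (i + 1) := by
          rw [hN1]
          refine lt_of_le_of_ne le_sup_left fun h => hcon i (by omega) ?_
          rw [h]
          exact Ideal.mem_sup_right (Ideal.mem_span_singleton_self _)
        have := qlen_lt hlt
        push_cast
        rw [add_comm (i : ℕ∞), ← add_assoc]
        gcongr
    have h2 := h1 (e + 1) le_rfl
    have h3 := (add_le_add_left (qlen_anti (hNL (e + 1) (by omega))) ((e + 1 : ℕ) : ℕ∞)).trans
      (h2.trans hNfin0)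
    obtain ⟨p, hp⟩ := ENat.ne_top_iff_exists.1 hLfin
    rw [← hp] at h3
    have : p + (e + 1) ≤ p + e := by exact_mod_cast h3
    omega
  have hir : i ≤ r := hie.trans hre
  have hxN : ∀ z ∈ N i, x * z ∈ Ideal.span {d} * N i := by
    intro z hz
    obtain ⟨u, hu, v, hv, rfl⟩ := Submodule.mem_sup.1 hz
    rw [mul_add]
    refine add_mem ?_ ?_
    · refine Submodule.span_induction (p := fun z _ => x * z ∈ Ideal.span {d} * N i) ?_ (by simp)
        (fun a b _ _ ha hb => by rw [mul_add]; exact add_mem ha hb)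
        (fun a b _ hb => by
          rw [smul_eq_mul, mul_left_comm]; exact Ideal.mul_mem_left _ _ hb) hu
      rintro _ ⟨l, hl, rfl⟩
      have hl : l < i := hl
      rw [hxw r l (by omega)]
      refine Ideal.mul_mem_mul (Ideal.mem_span_singleton_self d) ?_
      rcases Nat.lt_or_ge (l + 1) i with h | h
      · exact Ideal.mem_sup_left (hwW _ _ _ h)
      · rwa [show l + 1 = i by omega]
    · have h1 : x * v ∈ m * (Ideal.span {d} * L) := by
        refine Submodule.mul_induction_on hv (fun a ha b hb => ?_)
          (fun a b ha hb => by rw [mul_add]; exact add_mem ha hb)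
        rw [mul_left_comm x a b]
        exact Ideal.mul_mem_mul ha (hxL b hb)
      rw [mul_left_comm] at h1
      exact Ideal.mul_mono_right le_sup_right h1
  have hall : ∀ k, i + k ≤ r → w r (i + k) ∈ N i := by
    intro k
    induction k with
    | zero => exact fun _ => hi
    | succ k ih =>
      intro hk
      have h1 := hxN _ (ih (by omega))
      rw [hxw r _ (by omega), Ideal.mem_span_singleton_mul] at h1
      obtain ⟨z, hz, hzz⟩ := h1
      have := hd (z - w r (i + k + 1)) (by rw [mul_sub, hzz, sub_self])
      rw [← add_assoc, ← sub_eq_zero.1 this]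
      exact hz
  have hLN : L ≤ W r i ⊔ m • L := by
    refine Ideal.span_le.2 ?_
    rintro _ ⟨l, hl, rfl⟩
    have hl : l < r + 1 := hl
    rcases Nat.lt_or_ge l i with h | h
    · exact Ideal.mem_sup_left (hwW _ _ _ h)
    · obtain ⟨k, rfl⟩ := Nat.exists_eq_add_of_le h
      exact hall k (by omega)
  have hLW : L ≤ W r i := Submodule.le_of_le_smul_of_le_jacobson_bot
    (IsNoetherian.noetherian L) (IsLocalRing.maximalIdeal_le_jacobson _) hLN
  have hwi : w r i ∈ Ideal.span {d ^ (r - i)} * Ideal.span {d} := by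
    have h1 : W r i ≤ Ideal.span {d ^ (r - i)} * Ideal.span {d} := by
      refine Ideal.span_le.2 ?_
      rintro _ ⟨l, hl, rfl⟩
      have hl : l < i := hl
      rw [SetLike.mem_coe, Ideal.span_singleton_mul_span_singleton, Ideal.mem_span_singleton]
      refine ⟨x ^ l * d ^ (i - l - 1), ?_⟩
      simp only [w]
      rw [show r - l = (r - i) + (i - l - 1) + 1 by omega]
      ring
    exact h1 (hLW (hwW _ _ _ (by omega)))
  rw [Ideal.mem_span_singleton_mul] at hwi
  obtain ⟨z, hz, hzz⟩ := hwi
  have hdr : ∀ k w, d ^ k * w = 0 → w = 0 := by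
    intro k
    induction k with
    | zero => simp
    | succ k ih =>
      intro w hw
      rw [pow_succ, mul_assoc] at hw
      exact hd _ (ih _ hw)
  have := hdr (r - i) (z - x ^ i) (by rw [mul_sub, hzz]; simp only [w]; ring)
  rw [sub_eq_zero.1 this] at hz
  obtain ⟨k, rfl⟩ := Nat.exists_eq_add_of_le hie
  rw [pow_add]
  exact Ideal.mul_mem_right _ _ hz

end OneDim
end GJR

/-! ### A uniform exponent for integral elements -/

namespace GJR

section Trick

variable {R : Type*} [CommRing R] {a b : R}

lemma mem_pair_pow_sum {y : R} {d : ℕ} (hy : y ∈ Ideal.span {a, b} ^ d) :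
    ∃ c : ℕ → R, y = ∑ s ∈ Finset.range (d + 1), c s * (a ^ (d - s) * b ^ s) := by
  induction d generalizing y with
  | zero => exact ⟨fun _ => y, by simp⟩
  | succ d ih =>
    obtain ⟨q, hq, c, rfl⟩ := mem_pair_pow_succ hy
    obtain ⟨f, rfl⟩ := ih hq
    refine ⟨fun s => if s = d + 1 then c else f s, ?_⟩
    beta_reduce
    rw [Finset.sum_range_succ _ (d + 1), if_pos rfl, Nat.sub_self, pow_zero, one_mul,
      Finset.mul_sum]
    congr 1
    refine Finset.sum_congr rfl fun s hs => ?_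
    rw [Finset.mem_range] at hs
    rw [if_neg (by omega), show d + 1 - s = d - s + 1 by omega]
    ring

lemma IsIntegralOverIdeal.map {S : Type*} [CommRing S] (f : R →+* S) {K : Ideal R} {x : R}
    (hx : IsIntegralOverIdeal K x) : IsIntegralOverIdeal (K.map f) (f x) := by
  obtain ⟨n, hn, c, hc, e⟩ := hx
  refine ⟨n, hn, fun i => f (c i), fun i => ?_, ?_⟩
  · rw [← Ideal.map_pow]
    exact Ideal.mem_map_of_mem f (hc i)
  · have := congrArg f e
    simpa only [map_add, map_sum, map_mul, map_pow, map_zero] using this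

/-- Reduction modulo the generic element `b - t a` of the pencil. -/
lemma RegPair.integral_mod [IsLocalRing R] [IsNoetherianRing R] (h : RegPair a b)
    (ha : a ∈ IsLocalRing.maximalIdeal R) (hb : b ∈ IsLocalRing.maximalIdeal R) {e : ℕ}
    (he : Module.length R (R ⧸ Ideal.span {a, b}) ≤ e) {n : ℕ} {x : R}
    (hx : IsIntegralOverIdeal (Ideal.span {a, b} ^ n) x) (t : R) :
    ∃ u v, x ^ e = a ^ n * u + (b - t * a) * v := by
  set g := b - t * a with hg
  have hgm : g ∈ IsLocalRing.maximalIdeal R := sub_mem hb (Ideal.mul_mem_left _ _ ha)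
  have hcancel : ∀ z, a * z ∈ Ideal.span {g} → z ∈ Ideal.span {g} := by
    intro z hz
    obtain ⟨w, hw⟩ := Ideal.mem_span_singleton.1 hz
    obtain ⟨w', rfl⟩ := h.right w ⟨z + t * w, by linear_combination -hw - w * hg⟩
    have := h.cancel_left (x := z) (y := g * w') (by linear_combination hw)
    rw [this]
    exact Ideal.mul_mem_right _ _ (Ideal.mem_span_singleton_self g)
  let S := R ⧸ Ideal.span {g}
  let φ : R →+* S := Ideal.Quotient.mk (Ideal.span {g})
  have hφs : Function.Surjective φ := Ideal.Quotient.mk_surjective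
  have hφ0 : ∀ z, φ z = 0 ↔ z ∈ Ideal.span {g} := fun z => Ideal.Quotient.eq_zero_iff_mem
  have hle : Ideal.span {g} ≤ IsLocalRing.maximalIdeal R := by
    rwa [Ideal.span_singleton_le_iff_mem]
  have : Nontrivial S := Ideal.Quotient.nontrivial_iff.2
    (ne_top_of_le_ne_top (IsLocalRing.maximalIdeal.isMaximal R).ne_top hle)
  have : IsLocalRing S := IsLocalRing.of_surjective' φ hφs
  have hcm : φ a ∈ IsLocalRing.maximalIdeal S := by
    rw [IsLocalRing.mem_maximalIdeal, mem_nonunits_iff]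
    intro hu
    obtain ⟨w, hw⟩ := hu.exists_right_inv
    obtain ⟨w, rfl⟩ := hφs w
    rw [← map_mul, ← map_one φ, ← sub_eq_zero, ← map_sub, hφ0] at hw
    have h1 : (1 : R) ∈ IsLocalRing.maximalIdeal R := by
      have := sub_mem (Ideal.mul_mem_right w _ ha) (hle hw)
      rwa [sub_sub_cancel] at this
    exact (IsLocalRing.maximalIdeal.isMaximal R).ne_top ((Ideal.eq_top_iff_one _).2 h1)
  have hc : ∀ z, φ a * z = 0 → z = 0 := by
    intro z hz
    obtain ⟨z, rfl⟩ := hφs z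
    rw [← map_mul, hφ0] at hz
    rw [hφ0]
    exact hcancel z hz
  have hbt : φ b = φ t * φ a := by
    rw [← map_mul, ← sub_eq_zero, ← map_sub, hφ0]
    exact Ideal.mem_span_singleton_self g
  have hce : Module.length S (S ⧸ Ideal.span {φ a}) ≤ e := by
    refine le_trans (le_of_eq (Module.length_eq_of_surjective (S := R) hφs).symm) (le_trans ?_ he)
    let f : R →ₗ[R] S ⧸ Ideal.span {φ a} := Algebra.linearMap R (S ⧸ Ideal.span {φ a})
    have hf : ∀ x, f x = Ideal.Quotient.mk (Ideal.span {φ a}) (φ x) := fun x => rfl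
    refine Module.length_le_of_surjective ((Ideal.span {a, b}).liftQ f ?_) ?_
    · refine Ideal.span_le.2 ?_
      rintro z (rfl | rfl)
      · change f z = 0
        rw [hf, Ideal.Quotient.eq_zero_iff_mem]
        exact Ideal.mem_span_singleton_self _
      · change f z = 0
        rw [hf, Ideal.Quotient.eq_zero_iff_mem, hbt]
        exact Ideal.mul_mem_left _ _ (Ideal.mem_span_singleton_self _)
    · intro z
      obtain ⟨z, rfl⟩ := Ideal.Quotient.mk_surjective z
      obtain ⟨z, rfl⟩ := hφs z
      exact ⟨Submodule.Quotient.mk z, rfl⟩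
  have hcn : ∀ k z, φ a ^ k * z = 0 → z = 0 := by
    intro k
    induction k with
    | zero => simp
    | succ k ih =>
      intro z hz
      rw [pow_succ, mul_assoc] at hz
      exact hc _ (ih _ hz)
  have hincl : IsIntegralOverIdeal (Ideal.span {φ a ^ n}) (φ x) := by
    have := IsIntegralOverIdeal.map φ hx
    rw [Ideal.map_pow, Ideal.map_span, Set.image_pair, hbt, Ideal.span_insert,
      sup_eq_left.2 ((Ideal.span_singleton_le_iff_mem _).2
        (Ideal.mul_mem_left _ _ (Ideal.mem_span_singleton_self _))),
      Ideal.span_singleton_pow] at this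
    exact this
  have key := pow_mem_of_integral hcm hc (hcn n) hce (by
    rw [← Ideal.span_singleton_pow]
    exact length_quot_pow_ne_top hc (ne_top_of_le_ne_top (ENat.natCast_ne_top e) hce) n) hincl
  obtain ⟨u, hu⟩ := Ideal.mem_span_singleton.1 key
  obtain ⟨u, rfl⟩ := hφs u
  rw [← map_pow, ← map_pow, ← map_mul, ← sub_eq_zero, ← map_sub, hφ0] at hu
  obtain ⟨v, hv⟩ := Ideal.mem_span_singleton.1 hu
  exact ⟨u, v, by linear_combination hv⟩

/-- A polynomial all of whose values lie in `Q` has its coefficients in `Q` if the residue field is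
infinite (Vandermonde). -/
lemma coeffs_mem_of_values [IsLocalRing R] [Infinite (IsLocalRing.ResidueField R)] (Q : Ideal R)
    (d : ℕ) (c : ℕ → R) (h : ∀ t, ∑ s ∈ Finset.range d, c s * t ^ s ∈ Q) :
    ∀ s < d, c s ∈ Q := by
  obtain ⟨f⟩ : Nonempty (ℕ ↪ IsLocalRing.ResidueField R) := ⟨Infinite.natEmbedding _⟩
  choose l hl using fun i => IsLocalRing.residue_surjective (R := R) (f i)
  have hunit : ∀ i j, i ≠ j → IsUnit (l j - l i) := by
    intro i j hij
    rw [← IsLocalRing.residue_ne_zero_iff_isUnit, map_sub, hl, hl, sub_ne_zero]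
    exact fun h => hij (f.injective h).symm
  let φ : R →+* R ⧸ Q := Ideal.Quotient.mk Q
  let A : Matrix (Fin d) (Fin d) (R ⧸ Q) := Matrix.vandermonde fun i => φ (l i)
  have hA : IsUnit A := by
    rw [Matrix.isUnit_iff_isUnit_det, Matrix.det_vandermonde]
    rw [IsUnit.prod_univ_iff]
    intro i
    rw [IsUnit.prod_iff]
    intro j hj
    rw [← map_sub]
    refine (hunit _ _ ?_).map φ
    have := Finset.mem_Ioi.1 hj
    exact fun h => this.ne (Fin.ext h)
  have h0 : A.mulVec (fun s => φ (c s)) = A.mulVec 0 := by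
    rw [Matrix.mulVec_zero]
    funext i
    have := (Ideal.Quotient.eq_zero_iff_mem (I := Q)).2 (h (l i))
    rw [map_sum, ← Fin.sum_univ_eq_sum_range
      (fun s => (Ideal.Quotient.mk Q) (c s * l i ^ s))] at this
    rw [Pi.zero_apply, ← this, Matrix.mulVec_eq_sum, Finset.sum_apply]
    refine Finset.sum_congr rfl fun s _ => ?_
    simp [A, φ, mul_comm]
  have h1 := Matrix.mulVec_injective_of_isUnit hA h0
  intro s hs
  exact Ideal.Quotient.eq_zero_iff_mem.1 (congrFun h1 ⟨s, hs⟩)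

/-- The uniform exponent: an element integral over `Q ^ n`, where `Q` is generated by a regular
sequence of length two and has colength at most `e`, has its `e`-th power in `Q ^ n`. -/
theorem RegPair.pow_mem_of_integral [IsLocalRing R] [IsNoetherianRing R]
    [Infinite (IsLocalRing.ResidueField R)] (h : RegPair a b)
    (ha : a ∈ IsLocalRing.maximalIdeal R) (hb : b ∈ IsLocalRing.maximalIdeal R) {e : ℕ}
    (he : Module.length R (R ⧸ Ideal.span {a, b}) ≤ e) {n : ℕ} {x : R}
    (hx : IsIntegralOverIdeal (Ideal.span {a, b} ^ n) x) : x ^ e ∈ Ideal.span {a, b} ^ n := by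
  have hstep : ∀ d, d ≤ n → x ^ e ∈ Ideal.span {a, b} ^ d := by
    intro d
    induction d with
    | zero => simp
    | succ d ih =>
      intro hd
      obtain ⟨c, hc⟩ := mem_pair_pow_sum (ih (by omega))
      have hval : ∀ t, ∑ s ∈ Finset.range (d + 1), c s * t ^ s ∈ Ideal.span {a, b} := by
        intro t
        set g := b - t * a with hg
        obtain ⟨u, v, huv⟩ := h.integral_mod ha hb he hx t
        have h1 : ∑ s ∈ Finset.range (d + 1), c s * (a ^ (d - s) * b ^ s) -
            a ^ d * ∑ s ∈ Finset.range (d + 1), c s * t ^ s ∈ Ideal.span {g} := by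
          rw [Finset.mul_sum, ← Finset.sum_sub_distrib]
          refine sum_mem fun s hs => ?_
          rw [Finset.mem_range] at hs
          have h2 : b ^ s - (t * a) ^ s ∈ Ideal.span {g} :=
            Ideal.mem_span_singleton.2 (sub_dvd_pow_sub_pow b (t * a) s)
          have h3 : a ^ d = a ^ (d - s) * a ^ s := by rw [← pow_add]; congr 1; omega
          have : c s * (a ^ (d - s) * b ^ s) - a ^ d * (c s * t ^ s) =
              c s * a ^ (d - s) * (b ^ s - (t * a) ^ s) := by
            rw [h3, mul_pow]; ring
          rw [this]
          exact Ideal.mul_mem_left _ _ h2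
        rw [← hc, huv] at h1
        obtain ⟨w, hw⟩ := Ideal.mem_span_singleton.1 h1
        obtain ⟨k, rfl⟩ := Nat.exists_eq_add_of_le hd
        -- cancel `a ^ d` modulo `g`
        have hcancel : ∀ k z, a ^ k * z ∈ Ideal.span {g} → z ∈ Ideal.span {g} := by
          intro k
          induction k with
          | zero => simp
          | succ k ihk =>
            intro z hz
            refine ihk z ?_
            obtain ⟨w, hw⟩ := Ideal.mem_span_singleton.1 hz
            obtain ⟨w', rfl⟩ := h.right w ⟨a ^ k * z + t * w, by
              rw [pow_succ] at hw; linear_combination -hw - w * hg⟩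
            have := h.cancel_left (x := a ^ k * z) (y := g * w') (by
              rw [pow_succ] at hw; linear_combination hw)
            rw [this]
            exact Ideal.mul_mem_right _ _ (Ideal.mem_span_singleton_self g)
        have h4 := hcancel d (a ^ (1 + k) * u - ∑ s ∈ Finset.range (d + 1), c s * t ^ s)
          (Ideal.mem_span_singleton.2 ⟨w - v, by
            rw [mul_sub, mul_sub, ← hw, ← mul_assoc, ← pow_add, add_assoc]; ring⟩)
        have hgQ : Ideal.span {g} ≤ Ideal.span {a, b} := by
          rw [Ideal.span_singleton_le_iff_mem]
          exact sub_mem (right_mem_pair a b) (Ideal.mul_mem_left _ _ (left_mem_pair a b))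
        have h5 : a ^ (1 + k) * u ∈ Ideal.span {a, b} := by
          rw [add_comm, pow_succ, mul_right_comm]
          exact Ideal.mul_mem_left _ _ (left_mem_pair a b)
        have := sub_mem h5 (hgQ h4)
        rwa [sub_sub_cancel] at this
      have hcm := coeffs_mem_of_values _ (d + 1) c hval
      rw [hc, pow_succ']
      refine sum_mem fun s hs => Ideal.mul_mem_mul (hcm s (Finset.mem_range.1 hs)) ?_
      have hs' := Finset.mem_range.1 hs
      have := Ideal.mul_mem_mul (Ideal.pow_mem_pow (left_mem_pair a b) (d - s))
        (Ideal.pow_mem_pow (right_mem_pair a b) s)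
      rwa [← pow_add, Nat.sub_add_cancel (by omega)] at this
  exact hstep n le_rfl

end Trick
end GJR

/-! ### Linear equivalence of the asymptotic and adic filtrations -/

namespace GJR

section Core

variable {R : Type*} [CommRing R]

/-- A decreasing sequence of ideals whose elements have `e`-th powers in high powers of `𝔪`
is cofinal in the `𝔪`-adic topology if the completion is reduced: otherwise a compactness argument
produces a nonzero element of the completion with vanishing `e`-th power. -/
theorem cofinal_of_reduced [IsLocalRing R] (hur : AnalyticallyUnramified R)
    (hl : ∀ j, Module.length R (R ⧸ IsLocalRing.maximalIdeal R ^ j) ≠ ⊤) {F : ℕ → Ideal R}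
    (hF : Antitone F) {e : ℕ}
    (he : ∀ j, ∃ N, ∀ x ∈ F N, x ^ e ∈ IsLocalRing.maximalIdeal R ^ j) (k : ℕ) :
    ∃ N, F N ≤ IsLocalRing.maximalIdeal R ^ k := by
  set m := IsLocalRing.maximalIdeal R with hm
  have hst : ∀ j, ∃ N, ∀ N', N ≤ N' → F N ⊔ m ^ j = F N' ⊔ m ^ j := by
    intro j
    have hle : ∀ N, Module.length R (R ⧸ F N ⊔ m ^ j) ≤ Module.length R (R ⧸ m ^ j) :=
      fun N => qlen_anti le_sup_right
    have hfin : ∀ N, Module.length R (R ⧸ F N ⊔ m ^ j) ≠ ⊤ :=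
      fun N => ne_top_of_le_ne_top (hl j) (hle N)
    choose δ hδ using fun N => ENat.ne_top_iff_exists.1 (hfin N)
    obtain ⟨e', he'⟩ := ENat.ne_top_iff_exists.1 (hl j)
    have hanti : ∀ {N N'}, N ≤ N' → F N' ⊔ m ^ j ≤ F N ⊔ m ^ j := fun h =>
      sup_le_sup_right (hF h) _
    obtain ⟨N0, hN0⟩ := eventually_const (δ := δ) (e := e')
      (fun N N' h => by
        have := qlen_anti (hanti h)
        rw [← hδ, ← hδ] at this
        exact_mod_cast this)
      (fun N => by
        have := hle N
        rw [← hδ, ← he'] at this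
        exact_mod_cast this)
    refine ⟨N0, fun N' h => (eq_of_qlen_le (hanti h) (hfin N0) ?_).symm⟩
    rw [← hδ, ← hδ, hN0 N' h]
  choose N hN using hst
  by_contra! hcon
  let s : ℕ → Ideal R := fun j => F (N j) ⊔ m ^ j
  have hlift : ∀ j, ∀ x ∈ s j, ∃ x' ∈ s (j + 1), x - x' ∈ m ^ j := by
    intro j x hx
    have h1 : s j = _ := hN j (max (N j) (N (j + 1))) (le_max_left _ _)
    rw [h1] at hx
    obtain ⟨f, hf, μ, hμ, rfl⟩ := Submodule.mem_sup.1 hx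
    refine ⟨f, ?_, by simpa using hμ⟩
    have h2 : s (j + 1) = _ := hN (j + 1) (max (N j) (N (j + 1))) (le_max_right _ _)
    rw [h2]
    exact Ideal.mem_sup_left hf
  obtain ⟨x0, hx0, hx0k⟩ := SetLike.not_le_iff_exists.1 (hcon (N k))
  choose! L hL hL' using hlift
  let y : ℕ → R := fun i => Nat.rec x0 (fun i z => L (k + i) z) i
  have hy : ∀ i, y i ∈ s (k + i) := by
    intro i
    induction i with
    | zero => exact Ideal.mem_sup_left hx0
    | succ i ih => exact hL (k + i) (y i) ih
  have hy' : ∀ i, y i - y (i + 1) ∈ m ^ (k + i) := fun i => hL' (k + i) (y i) (hy i)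
  let f : ℕ → R := fun n => y (n - k)
  have hf : ∀ n, f n - f (n + 1) ∈ m ^ n := by
    intro n
    simp only [f]
    rcases Nat.lt_or_ge n k with h | h
    · rw [show n - k = n + 1 - k by omega, sub_self]
      exact zero_mem _
    · have := hy' (n - k)
      rwa [show n - k + 1 = n + 1 - k by omega, show k + (n - k) = n by omega] at this
  have hfe : ∀ n, k ≤ n → f n ^ e ∈ m ^ n := by
    intro n hn
    have h1 : f n ∈ s n := by
      have := hy (n - k)
      rwa [show k + (n - k) = n by omega] at this
    obtain ⟨N', hN'⟩ := he n
    have h2 : s n = _ := hN n (max (N n) N') (le_max_left _ _)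
    rw [h2] at h1
    obtain ⟨g, hg, μ, hμ, hgμ⟩ := Submodule.mem_sup.1 h1
    have h3 : f n ^ e - g ^ e ∈ m ^ n := by
      rw [← hgμ]
      exact Ideal.mem_of_dvd _ (sub_dvd_pow_sub_pow _ _ e) (by simpa using hμ)
    have h4 := add_mem h3 (hN' g (hF (le_max_right _ _) hg))
    rwa [sub_add_cancel] at h4
  have hfe' : ∀ n, f n ^ e ∈ m ^ n := by
    intro n
    rcases le_total k n with h | h
    · exact hfe n h
    · have h1 : f n = f k := by simp only [f]; congr 1; omega
      rw [h1]
      exact Ideal.pow_le_pow_right h (hfe k le_rfl)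
  let c : AdicCompletion.AdicCauchySequence m R := AdicCompletion.AdicCauchySequence.mk m R f
    (fun n => by
      rw [SModEq.sub_mem, smul_eq_mul, Ideal.mul_top]
      exact hf n)
  have hev : ∀ n, AdicCompletion.evalₐ m n (AdicCompletion.mk m R c) =
      Ideal.Quotient.mk (m ^ n) (f n) := fun n => AdicCompletion.evalₐ_mk m n c
  have hnil : AdicCompletion.mk m R c = 0 := by
    have hred : IsReduced (AdicCompletion m R) := hur
    refine IsNilpotent.eq_zero ⟨e, ?_⟩
    refine AdicCompletion.ext_evalₐ fun n => ?_
    rw [map_pow, hev, map_zero, ← map_pow, Ideal.Quotient.eq_zero_iff_mem]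
    exact hfe' n
  have := hev k
  rw [hnil, map_zero, eq_comm, Ideal.Quotient.eq_zero_iff_mem] at this
  simp only [f, Nat.sub_self] at this
  exact hx0k this

/-- In an analytically unramified ring the asymptotic filtration of a parameter ideal is linearly
equivalent to the adic one.  One-step generation holds a priori only modulo terms arbitrarily deep
in the filtration; these lie in a high power of `𝔪` by `cofinal_of_reduced`. -/
theorem RegPair.asyF_le_pow [IsLocalRing R] [IsNoetherianRing R]
    (hur : AnalyticallyUnramified R) [Infinite (IsLocalRing.ResidueField R)] {a b : R}
    (h : RegPair a b) (ha : a ∈ IsLocalRing.maximalIdeal R) (hb : b ∈ IsLocalRing.maximalIdeal R)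
    (hl : Module.length R (R ⧸ Ideal.span {a, b}) ≠ ⊤) {p : ℕ}
    (hp : IsLocalRing.maximalIdeal R ^ p ≤ Ideal.span {a, b}) :
    ∃ k, ∀ n, asyF (Ideal.span {a, b}) (n + k) ≤ Ideal.span {a, b} ^ n := by
  set Q := Ideal.span {a, b} with hQ
  set m := IsLocalRing.maximalIdeal R with hm
  obtain ⟨e, he⟩ := ENat.ne_top_iff_exists.1 hl
  have he : Module.length R (R ⧸ Q) ≤ e := he.ge
  have hQm : Q ≤ m := by
    rw [hQ, Ideal.span_le]
    rintro z (rfl | rfl)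
    · exact ha
    · exact hb
  have hml : ∀ j, Module.length R (R ⧸ m ^ j) ≠ ⊤ := by
    intro j
    refine ne_top_of_le_ne_top ?_ (qlen_anti (Ideal.pow_right_mono hQm j))
    intro ht
    have := h.length_pow_le he j
    rw [ht, ENat.mul_top (by norm_num)] at this
    exact ENat.natCast_ne_top _ (top_le_iff.1 this)
  have hnz : HasNzd Q := ⟨a, left_mem_pair a b, h.left⟩
  have hcof := cofinal_of_reduced hur hml (asyF_anti (Q := Q)) (e := e) (fun j => ⟨j + 1, fun x hx => by
    have h1 : IsIntegralOverIdeal (Q ^ j) x :=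
      integral_of_mem_asyCl (hnz.pow j) (asyF_discrete hx)
    exact Ideal.pow_right_mono hQm j (h.pow_mem_of_integral ha hb he h1)⟩)
  obtain ⟨n1, hn1⟩ := h.asyF_step he
  have hiter : ∀ n, n1 ≤ n → ∀ t, asyF Q (n + 1) ≤ Q * asyF Q n ⊔ asyF Q (n + 1 + t) := by
    intro n hn t
    induction t with
    | zero => exact le_sup_right
    | succ t ih =>
      refine ih.trans (sup_le le_sup_left ?_)
      have h1 := hn1 (n + t) (by omega)
      rw [show n + 1 + t = n + t + 1 by ring, show n + 1 + (t + 1) = n + t + 2 by ring]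
      exact h1.trans (sup_le_sup_right (Ideal.mul_mono_right (asyF_anti (by omega))) _)
  have hstep : ∀ n, n1 ≤ n → asyF Q (n + 1) ≤ Q * asyF Q n := by
    intro n hn
    obtain ⟨N, hN⟩ := hcof (p * (n + 1))
    refine (hiter n hn N).trans (sup_le le_rfl ?_)
    refine (asyF_anti (by omega : N ≤ n + 1 + N)).trans (hN.trans ?_)
    rw [pow_mul]
    refine (Ideal.pow_right_mono hp (n + 1)).trans ?_
    rw [pow_succ']
    exact Ideal.mul_mono_right (pow_le_asyF n)
  refine ⟨n1, fun n => ?_⟩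
  induction n with
  | zero => simp
  | succ n ih =>
    rw [show n + 1 + n1 = n + n1 + 1 by ring, pow_succ']
    exact (hstep _ (by omega)).trans (Ideal.mul_mono_right ih)

end Core
end GJR

/-! ### The bigraded Rees algebra and superficial elements -/

namespace GJR

section Superficial

/-- The `α`-torsion of `T ⧸ 𝔄` meets a high power of `𝔅` trivially, provided `α ∈ 𝔅` avoids the
associated primes of `T ⧸ 𝔄` not containing `𝔅`. -/
lemma torsion_inf_pow {T : Type*} [CommRing T] [IsNoetherianRing T] (𝔄 𝔅 : Ideal T) {α : T}
    (hP : ∀ P ∈ associatedPrimes T (T ⧸ 𝔄), ¬ 𝔅 ≤ P → α ∉ P) :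
    ∃ c, ∀ τ ∈ 𝔅 ^ c, α * τ ∈ 𝔄 → τ ∈ 𝔄 := by
  let N : Submodule T (T ⧸ 𝔄) := LinearMap.ker (LinearMap.lsmul T (T ⧸ 𝔄) α)
  have hN : ∀ v, v ∈ N ↔ α • v = 0 := fun v => Iff.rfl
  have h1 : 𝔅 ≤ (Module.annihilator T N).radical := by
    rw [← Ideal.sInf_minimalPrimes]
    refine le_sInf fun P hPm => ?_
    have h2 := Module.associatedPrimes.minimalPrimes_annihilator_subset_associatedPrimes T N hPm
    have h3 := associatedPrimes.subset_of_injective N.injective_subtype h2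
    by_contra hB
    refine hP P h3 hB (hPm.1.2 ?_)
    rw [Module.mem_annihilator]
    rintro ⟨v, hv⟩
    exact Subtype.ext hv
  obtain ⟨n, hn⟩ := Ideal.exists_pow_le_of_le_radical_of_fg h1 (IsNoetherian.noetherian 𝔅)
  obtain ⟨k, hk⟩ := Ideal.exists_pow_inf_eq_pow_smul 𝔅 N
  refine ⟨n + k, fun τ hτ hα => ?_⟩
  have h4 : (Ideal.Quotient.mk 𝔄 τ) ∈ 𝔅 ^ (n + k) • (⊤ : Submodule T (T ⧸ 𝔄)) ⊓ N := by
    refine ⟨?_, ?_⟩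
    · have : Ideal.Quotient.mk 𝔄 τ = τ • Ideal.Quotient.mk 𝔄 1 := by
        rw [Algebra.smul_def, map_one, mul_one]; rfl
      rw [this]
      exact Submodule.smul_mem_smul hτ trivial
    · change α • Ideal.Quotient.mk 𝔄 τ = 0
      rw [Algebra.smul_def]
      change Ideal.Quotient.mk 𝔄 α * Ideal.Quotient.mk 𝔄 τ = 0
      rw [← map_mul]
      exact Ideal.Quotient.eq_zero_iff_mem.2 hα
  rw [hk (n + k) (by omega), Nat.add_sub_cancel] at h4
  have h5 : 𝔅 ^ n • (𝔅 ^ k • (⊤ : Submodule T (T ⧸ 𝔄)) ⊓ N) ≤ ⊥ := by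
    refine Submodule.smul_le.2 fun β hβ v hv => ?_
    have := Module.mem_annihilator.1 (hn hβ) ⟨v, hv.2⟩
    exact (Submodule.mem_bot T).2 (congrArg Subtype.val this)
  exact Ideal.Quotient.eq_zero_iff_mem.1 ((Submodule.mem_bot T).1 (h5 h4))

lemma exists_primes_torsion {T : Type*} [CommRing T] [IsNoetherianRing T] (𝔄 𝔅 : Ideal T) :
    ∃ S : Finset (Ideal T), (∀ P ∈ S, ¬ 𝔅 ≤ P) ∧ ∀ α, (∀ P ∈ S, α ∉ P) →
      ∃ c, ∀ τ ∈ 𝔅 ^ c, α * τ ∈ 𝔄 → τ ∈ 𝔄 := by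
  have hS : ({P | ¬ 𝔅 ≤ P} ∩ associatedPrimes T (T ⧸ 𝔄)).Finite :=
    (associatedPrimes.finite _ _).inter_of_right _
  refine ⟨hS.toFinset, fun P hP => (hS.mem_toFinset.1 hP).1, fun α hα =>
    torsion_inf_pow 𝔄 𝔅 fun P hP hB => hα P (hS.mem_toFinset.2 ⟨hB, hP⟩)⟩

/-- Over a local ring with infinite residue field, a module is not a finite union of proper
submodules. -/
lemma exists_notMem_of_proper {R : Type*} [CommRing R] [IsLocalRing R]
    [Infinite (IsLocalRing.ResidueField R)] {M : Type*} [AddCommGroup M] [Module R M]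
    {ι : Type*} (s : Finset ι) (p : ι → Submodule R M) (hp : ∀ i ∈ s, p i ≠ ⊤) :
    ∃ x, ∀ i ∈ s, x ∉ p i := by
  by_contra! hcon
  have hc : (⋃ i ∈ s, (p i : Set M)) = Set.univ := by
    refine Set.eq_univ_of_forall fun x => ?_
    obtain ⟨i, hi, hx⟩ := hcon x
    exact Set.mem_biUnion hi hx
  obtain ⟨k, hk, hf⟩ := Submodule.exists_finiteIndex_of_cover hc
  have hfin : Finite (M ⧸ p k) :=
    (AddSubgroup.finite_quotient_of_finiteIndex : Finite (M ⧸ (p k).toAddSubgroup))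
  obtain ⟨x, hx⟩ : ∃ x, x ∉ p k := by
    by_contra! h
    exact hp k hk (eq_top_iff.2 fun x _ => h x)
  let f : R →ₗ[R] M ⧸ p k := LinearMap.toSpanSingleton R _ (Submodule.Quotient.mk x)
  have hker : LinearMap.ker f ≤ IsLocalRing.maximalIdeal R := by
    refine IsLocalRing.le_maximalIdeal fun htop => hx ?_
    have : (1 : R) ∈ LinearMap.ker f := by rw [htop]; trivial
    have h1 : (1 : R) • (Submodule.Quotient.mk x : M ⧸ p k) = 0 := this
    rw [one_smul] at h1
    exact (Submodule.Quotient.mk_eq_zero _).1 h1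
  have hfin2 : Finite (R ⧸ LinearMap.ker f) :=
    Finite.of_injective _ (LinearMap.ker_eq_bot.1 (Submodule.ker_liftQ_eq_bot' _ f rfl))
  have hfin3 : Finite (R ⧸ IsLocalRing.maximalIdeal R) :=
    Finite.of_surjective _ (Ideal.Quotient.factor_surjective hker)
  have hfin4 : Finite (IsLocalRing.ResidueField R) := hfin3
  exact not_finite (IsLocalRing.ResidueField R)

variable {R : Type*} [CommRing R] (I J : Ideal R)

/-- The bigraded Rees algebra `⨁ I^r J^s X^r Y^s`, encoded as the Rees algebra of the extension
of `J` to the Rees algebra of `I`. -/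
abbrev BiRees : Type _ := reesAlgebra (J.map (algebraMap R (reesAlgebra I)))

variable {I J}

/-- The coefficient of `X^r Y^s`. -/
noncomputable def coef (r s : ℕ) (τ : BiRees I J) : R := ((τ.1.coeff s).1).coeff r

lemma coef_ext {σ τ : BiRees I J} (h : ∀ r s, coef r s σ = coef r s τ) : σ = τ :=
  Subtype.ext (Polynomial.ext fun s => Subtype.ext (Polynomial.ext fun r => h r s))

lemma coef_add (r s : ℕ) (σ τ : BiRees I J) : coef r s (σ + τ) = coef r s σ + coef r s τ := by
  simp [coef]

lemma coef_zero (r s : ℕ) : coef r s (0 : BiRees I J) = 0 := by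
  simp [coef]

lemma coef_mul (r s : ℕ) (σ τ : BiRees I J) : coef r s (σ * τ) =
    ∑ x ∈ Finset.HasAntidiagonal.antidiagonal s, ∑ y ∈ Finset.HasAntidiagonal.antidiagonal r,
      coef y.1 x.1 σ * coef y.2 x.2 τ := by
  simp only [coef, MulMemClass.coe_mul, Polynomial.coeff_mul, AddSubmonoidClass.coe_finsetSum,
    Polynomial.finsetSum_coeff]

lemma coeff_mem_of_mem_map {L : Ideal R} {α : reesAlgebra I}
    (hα : α ∈ L.map (algebraMap R (reesAlgebra I))) : ∀ r, α.1.coeff r ∈ I ^ r * L := by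
  refine Submodule.span_induction (p := fun α _ => ∀ r, α.1.coeff r ∈ I ^ r * L) ?_ (by simp) ?_ ?_
    hα
  · rintro _ ⟨l, hl, rfl⟩ r
    change (Polynomial.C l).coeff r ∈ _
    rw [Polynomial.coeff_C]
    split_ifs with h
    · subst h; simpa using hl
    · exact zero_mem _
  · intro x y _ _ hx hy r
    simpa using add_mem (hx r) (hy r)
  · intro β x _ hx r
    rw [smul_eq_mul, MulMemClass.coe_mul, Polynomial.coeff_mul]
    refine sum_mem fun y hy => ?_
    rw [← Finset.HasAntidiagonal.mem_antidiagonal.1 hy, pow_add, mul_assoc]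
    exact Ideal.mul_mem_mul (β.2 _) (hx _)

lemma coef_mem (r s : ℕ) (τ : BiRees I J) : coef r s τ ∈ I ^ r * J ^ s := by
  refine coeff_mem_of_mem_map ?_ r
  rw [Ideal.map_pow]
  exact τ.2 s

lemma exists_monomial_mem {r : ℕ} {L : Ideal R} {x : R} (hx : x ∈ I ^ r * L) :
    ∃ α ∈ L.map (algebraMap R (reesAlgebra I)), α.1 = Polynomial.monomial r x := by
  refine Submodule.mul_induction_on hx (fun i hi l hl => ?_) ?_
  · refine ⟨algebraMap R (reesAlgebra I) l * ⟨Polynomial.monomial r i,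
      reesAlgebra.monomial_mem.2 hi⟩, Ideal.mul_mem_right _ _ (Ideal.mem_map_of_mem _ hl), ?_⟩
    change Polynomial.C l * Polynomial.monomial r i = _
    rw [Polynomial.C_mul_monomial, mul_comm]
  · rintro x y ⟨α, hα, e⟩ ⟨β, hβ, f⟩
    exact ⟨α + β, add_mem hα hβ, by simp [e, f]⟩

lemma exists_mon {r s : ℕ} {x : R} (hx : x ∈ I ^ r * J ^ s) :
    ∃ τ : BiRees I J, ∀ r' s', coef r' s' τ = if r' = r ∧ s' = s then x else 0 := by
  obtain ⟨α, hα, e⟩ := exists_monomial_mem hx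
  rw [Ideal.map_pow] at hα
  refine ⟨⟨Polynomial.monomial s α, reesAlgebra.monomial_mem.2 hα⟩, fun r' s' => ?_⟩
  simp only [coef, Polynomial.coeff_monomial]
  by_cases hs : s = s'
  · subst hs
    simp [e, Polynomial.coeff_monomial, eq_comm]
  · simp [hs, Ne.symm hs]

/-- The monomial `x X^r Y^s` of the bigraded Rees algebra. -/
noncomputable def mon (r s : ℕ) (x : R) (hx : x ∈ I ^ r * J ^ s) : BiRees I J :=
  (exists_mon hx).choose

lemma coef_mon {r s : ℕ} {x : R} (hx : x ∈ I ^ r * J ^ s) (r' s' : ℕ) :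
    coef r' s' (mon r s x hx) = if r' = r ∧ s' = s then x else 0 :=
  (exists_mon hx).choose_spec r' s'

lemma mon_add {r s : ℕ} {x y : R} (hx : x ∈ I ^ r * J ^ s) (hy : y ∈ I ^ r * J ^ s) :
    mon r s (x + y) (add_mem hx hy) = mon r s x hx + mon r s y hy := by
  refine coef_ext fun r' s' => ?_
  rw [coef_add, coef_mon, coef_mon, coef_mon]
  split_ifs <;> simp

lemma mul_mem_add {r s r' s' : ℕ} {x y : R} (hx : x ∈ I ^ r * J ^ s) (hy : y ∈ I ^ r' * J ^ s') :
    x * y ∈ I ^ (r + r') * J ^ (s + s') := by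
  rw [pow_add, pow_add, mul_mul_mul_comm]
  exact Ideal.mul_mem_mul hx hy

lemma mon_mul {r s r' s' : ℕ} {x y : R} (hx : x ∈ I ^ r * J ^ s) (hy : y ∈ I ^ r' * J ^ s') :
    mon r s x hx * mon r' s' y hy = mon (r + r') (s + s') (x * y) (mul_mem_add hx hy) := by
  refine coef_ext fun p q => ?_
  rw [coef_mul, coef_mon]
  simp only [coef_mon]
  split_ifs with h
  · obtain ⟨rfl, rfl⟩ := h
    rw [Finset.sum_eq_single (s, s'), Finset.sum_eq_single (r, r')]
    · simp
    · rintro ⟨u, v⟩ _ hne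
      have : ¬ (u = r ∧ v = r') := fun h => hne (by rw [h.1, h.2])
      by_cases hu : u = r <;> simp_all
    · intro h; simp at h
    · rintro ⟨u, v⟩ _ hne
      have : ¬ (u = s ∧ v = s') := fun h => hne (by rw [h.1, h.2])
      refine Finset.sum_eq_zero fun z _ => ?_
      by_cases hu : u = s <;> simp_all
    · intro h; simp at h
  · refine Finset.sum_eq_zero fun u hu => Finset.sum_eq_zero fun v hv => ?_
    rw [Finset.HasAntidiagonal.mem_antidiagonal] at hu hv
    by_cases h1 : v.1 = r ∧ u.1 = s
    · rw [if_pos h1, if_neg, mul_zero]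
      rintro ⟨h2, h3⟩
      exact h ⟨by omega, by omega⟩
    · rw [if_neg h1, zero_mul]

/-- A family of ideals `H r s` stable under multiplication by the `I^r J^s`. -/
def BiStable (I J : Ideal R) (H : ℕ → ℕ → Ideal R) : Prop :=
  ∀ r s p q, ∀ x ∈ I ^ r * J ^ s, ∀ h ∈ H p q, x * h ∈ H (r + p) (s + q)

/-- The homogeneous ideal of the bigraded Rees algebra with components `H r s ⊓ I^r J^s`. -/
noncomputable def homIdeal {H : ℕ → ℕ → Ideal R} (hH : BiStable I J H) : Ideal (BiRees I J) where
  carrier := {τ | ∀ r s, coef r s τ ∈ H r s}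
  zero_mem' := fun r s => by rw [coef_zero]; exact zero_mem _
  add_mem' := fun hx hy r s => by rw [coef_add]; exact add_mem (hx r s) (hy r s)
  smul_mem' := fun σ τ hτ r s => by
    rw [smul_eq_mul, coef_mul]
    refine sum_mem fun u hu => sum_mem fun v hv => ?_
    rw [← Finset.HasAntidiagonal.mem_antidiagonal.1 hu,
      ← Finset.HasAntidiagonal.mem_antidiagonal.1 hv]
    exact hH _ _ _ _ _ (coef_mem _ _ _) _ (hτ _ _)

lemma mon_mem_homIdeal {H : ℕ → ℕ → Ideal R} (hH : BiStable I J H) {r s : ℕ} {x : R}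
    (hx : x ∈ I ^ r * J ^ s) : mon r s x hx ∈ homIdeal hH ↔ x ∈ H r s := by
  refine ⟨fun h => ?_, fun h r' s' => ?_⟩
  · simpa [coef_mon] using h r s
  · rw [coef_mon]
    split_ifs with h'
    · rwa [h'.1, h'.2]
    · exact zero_mem _

/-- The ideal of the bigraded Rees algebra generated by `I X`. -/
noncomputable def irrel (I J : Ideal R) : Ideal (BiRees I J) :=
  Ideal.span {τ | ∃ x, ∃ hx : x ∈ I ^ 1 * J ^ 0, τ = mon 1 0 x hx}

lemma mon_mem_irrel_pow : ∀ (r : ℕ) {s : ℕ} {x : R} (hx : x ∈ I ^ r * J ^ s),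
    mon r s x hx ∈ irrel I J ^ r := by
  intro r
  induction r with
  | zero => simp
  | succ r ih =>
    intro s x hx
    have hx' : x ∈ I * (I ^ r * J ^ s) := by rwa [← mul_assoc, ← pow_succ']
    obtain ⟨h, hmonP⟩ : ∃ h : x ∈ I ^ (r + 1) * J ^ s, mon (r + 1) s x h ∈ irrel I J ^ (r + 1) := by
      refine Submodule.mul_induction_on hx' (fun i hi z hz => ?_) ?_
      · have hi' : i ∈ I ^ 1 * J ^ 0 := by simpa using hi
        have e : ∀ n m (h1 : 1 + r = n) (h2 : 0 + s = m), ∃ h : i * z ∈ I ^ n * J ^ m,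
            mon n m (i * z) h = mon 1 0 i hi' * mon r s z hz := by
          rintro n m rfl rfl
          exact ⟨mul_mem_add hi' hz, (mon_mul hi' hz).symm⟩
        obtain ⟨h, e⟩ := e (r + 1) s (add_comm _ _) (zero_add _)
        refine ⟨h, ?_⟩
        rw [e, pow_succ']
        exact Ideal.mul_mem_mul (Ideal.subset_span ⟨i, hi', rfl⟩) (ih hz)
      · rintro y z ⟨h1, h1'⟩ ⟨h2, h2'⟩
        refine ⟨add_mem h1 h2, ?_⟩
        rw [mon_add h1 h2]
        exact add_mem h1' h2'
    exact hmonP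

/-- Existence of superficial elements, for finitely many stable families simultaneously: a generic
`a ∈ I` avoids the relevant associated primes of the bigraded Rees algebra modulo each family. -/
theorem exists_superficial [IsLocalRing R] [IsNoetherianRing R]
    [Infinite (IsLocalRing.ResidueField R)] {ι : Type*} [Finite ι] (H : ι → ℕ → ℕ → Ideal R)
    (hH : ∀ i, BiStable I J (H i)) :
    ∃ a ∈ I, ∃ c, ∀ i r s, c ≤ r → ∀ x ∈ I ^ r * J ^ s, a * x ∈ H i (r + 1) s → x ∈ H i r s := by
  have := Fintype.ofFinite ι
  choose S hS hS' using fun i => exists_primes_torsion (homIdeal (hH i)) (irrel I J)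
  classical
  have hmem : ∀ x : I, x.1 ∈ I ^ 1 * J ^ 0 := fun x => by simp
  let p : Ideal (BiRees I J) → Submodule R I := fun P =>
    { carrier := {x | mon 1 0 x.1 (hmem x) ∈ P}
      zero_mem' := by
        have : mon 1 0 (0 : R) (zero_mem (I ^ 1 * J ^ 0)) = 0 := coef_ext fun r s => by
          rw [coef_mon, coef_zero]; simp
        change mon 1 0 (0 : R) _ ∈ P
        rw [this]; exact zero_mem _
      add_mem' := fun {x y} hx hy => by
        change mon 1 0 (x.1 + y.1) _ ∈ P
        rw [mon_add (hmem x) (hmem y)]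
        exact add_mem hx hy
      smul_mem' := fun t x hx => by
        have ht : t ∈ I ^ 0 * J ^ 0 := by simp
        have := mon_mul ht (hmem x)
        simp only [zero_add] at this
        change mon 1 0 (t * x.1) _ ∈ P
        rw [← this]
        exact Ideal.mul_mem_left _ _ hx }
  obtain ⟨a, ha⟩ := exists_notMem_of_proper (Finset.univ.biUnion S) p (by
    intro P hP htop
    obtain ⟨i, -, hi⟩ := Finset.mem_biUnion.1 hP
    refine hS i P hi (Ideal.span_le.2 ?_)
    rintro _ ⟨x, hx, rfl⟩
    have : (⟨x, by simpa using hx⟩ : I) ∈ p P := by rw [htop]; trivial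
    exact this)
  have h1 : ∀ i, ∃ c, ∀ τ ∈ irrel I J ^ c,
      mon 1 0 a.1 (hmem a) * τ ∈ homIdeal (hH i) → τ ∈ homIdeal (hH i) := fun i =>
    hS' i _ fun P hP => ha P (Finset.mem_biUnion.2 ⟨i, Finset.mem_univ i, hP⟩)
  choose c hc using h1
  refine ⟨a.1, a.2, ∑ i, c i, fun i r s hr x hx hax => ?_⟩
  rw [← mon_mem_homIdeal (hH i) hx]
  refine hc i _ (Ideal.pow_le_pow_right ?_ (mon_mem_irrel_pow r hx)) ?_
  · exact (Finset.single_le_sum (fun _ _ => Nat.zero_le _) (Finset.mem_univ i)).trans hr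
  · rw [mon_mul, mon_mem_homIdeal]
    rwa [add_comm, zero_add]

end Superficial
end GJR

/-! ### Properties of superficial elements -/

namespace GJR

section SuperficialProps

variable {R : Type*} [CommRing R] {I J : Ideal R} {a : R} {c : ℕ}

/-- `a` is superficial for `I` in the filtration `I^p J^q`: division by `a` of elements of
`I^c` loses exactly one power of `I`. -/
def Superf (I J : Ideal R) (a : R) (c : ℕ) : Prop :=
  ∀ p q, c ≤ p → ∀ z ∈ I ^ c, a * z ∈ I ^ (p + 1) * J ^ q → z ∈ I ^ p * J ^ q

lemma Superf.pow (h : Superf I J a c) : ∀ (l p q : ℕ), c ≤ p → ∀ z ∈ I ^ c,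
    a ^ l * z ∈ I ^ (p + l) * J ^ q → z ∈ I ^ p * J ^ q
  | 0, p, q, _, z, _, hm => by simpa using hm
  | l + 1, p, q, hp, z, hz, hm => by
    refine h.pow l p q hp z hz (h (p + l) q (by omega) _ (Ideal.mul_mem_left _ _ hz) ?_)
    rwa [← mul_assoc, ← pow_succ']

lemma pow_sup_anti (I D : Ideal R) {m n : ℕ} (h : m ≤ n) : I ^ n ⊔ D ≤ I ^ m ⊔ D :=
  sup_le (le_sup_of_le_left (Ideal.pow_le_pow_right h)) le_sup_right

/-- A superficial element of `I` for the filtration `I^p J^q` that is at the same time superficial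
for the image of `I` modulo a prescribed element `d`.  Division in the two coordinate directions of
the bigrading is controlled by the first two of the three families below. -/
theorem exists_superf [IsLocalRing R] [IsNoetherianRing R]
    [Infinite (IsLocalRing.ResidueField R)] (I J : Ideal R) (d : R) :
    ∃ a ∈ I, ∃ c, Superf I J a c ∧ ∀ n, c ≤ n → ∀ z ∈ I ^ c ⊔ Ideal.span {d},
      a * z ∈ I ^ (n + 1) ⊔ Ideal.span {d} → z ∈ I ^ n ⊔ Ideal.span {d} := by
  let H : Fin 3 → ℕ → ℕ → Ideal R :=
    ![fun r s => I ^ (r + 1) * J ^ s, fun r s => I ^ r * J ^ (s + 1),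
      fun r _ => I ^ (r + 1) ⊔ Ideal.span {d}]
  have hH : ∀ i, BiStable I J (H i) := by
    intro i r s r' s' x hx h hh
    fin_cases i
    · have := mul_mem_add hx (show h ∈ I ^ (r' + 1) * J ^ s' from hh)
      exact this
    · have := mul_mem_add hx (show h ∈ I ^ r' * J ^ (s' + 1) from hh)
      exact this
    · change x * h ∈ I ^ (r + r' + 1) ⊔ Ideal.span {d}
      obtain ⟨u, hu, v, hv, rfl⟩ := Submodule.mem_sup.1 hh
      rw [mul_add, add_assoc, pow_add]
      exact Submodule.add_mem_sup (Ideal.mul_mem_mul (Ideal.mul_le_left hx) hu)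
        (Ideal.mul_mem_left _ _ hv)
  obtain ⟨a, ha, c, hc⟩ := exists_superficial H hH
  refine ⟨a, ha, c, ?_, ?_⟩
  · intro p q hp z hz haz
    have h1 : ∀ r, c ≤ r → r ≤ p → z ∈ I ^ r * J ^ 0 := by
      intro r hr
      induction r, hr using Nat.le_induction with
      | base => intro _; simpa using hz
      | succ r hr ih =>
        intro hrp
        refine hc 0 r 0 hr z (ih (by omega)) ?_
        change a * z ∈ I ^ (r + 1 + 1) * J ^ 0
        rw [pow_zero, Ideal.one_eq_top, Ideal.mul_top]
        exact Ideal.pow_le_pow_right (by omega) (Ideal.mul_le_left haz)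
    have h2 : ∀ s, s ≤ q → z ∈ I ^ p * J ^ s := by
      intro s
      induction s with
      | zero => intro _; exact h1 p hp le_rfl
      | succ s ih =>
        intro hs
        refine hc 1 p s hp z (ih (by omega)) ?_
        exact Ideal.mul_mono_right (Ideal.pow_le_pow_right hs) haz
    exact h2 q le_rfl
  · intro n hn z hz haz
    have h1 : ∀ r, c ≤ r → r ≤ n → z ∈ I ^ r ⊔ Ideal.span {d} := by
      intro r hr
      induction r, hr using Nat.le_induction with
      | base => intro _; exact hz
      | succ r hr ih =>
        intro hrn
        obtain ⟨u, hu, v, hv, rfl⟩ := Submodule.mem_sup.1 (ih (by omega))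
        refine add_mem ?_ (Submodule.mem_sup_right hv)
        refine hc 2 r 0 hr u (by simpa using hu) ?_
        change a * u ∈ I ^ (r + 1 + 1) ⊔ Ideal.span {d}
        have e : a * u = a * (u + v) - a * v := by ring
        rw [e]
        refine sub_mem (pow_sup_anti I _ (by omega) haz) ?_
        exact Submodule.mem_sup_right (Ideal.mul_mem_left _ _ hv)
    exact h1 n hn le_rfl

lemma mem_of_forall_pow_sup [IsLocalRing R] [IsNoetherianRing R] (hI : I ≠ ⊤) {d z : R} {c : ℕ}
    (hz : ∀ n, c ≤ n → z ∈ I ^ n ⊔ Ideal.span {d}) : z ∈ Ideal.span {d} := by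
  have h := Ideal.iInf_pow_smul_eq_bot_of_isLocalRing (M := R ⧸ Ideal.span {d}) I hI
  rw [← Ideal.Quotient.eq_zero_iff_mem, ← Submodule.mem_bot R, ← h, Submodule.mem_iInf]
  intro n
  have h1 : z ∈ I ^ n ⊔ Ideal.span {d} :=
    pow_sup_anti I _ (le_max_left n c) (hz _ (le_max_right n c))
  obtain ⟨u, hu, v, hv, rfl⟩ := Submodule.mem_sup.1 h1
  rw [map_add, Ideal.Quotient.eq_zero_iff_mem.2 hv, add_zero]
  have e : Ideal.Quotient.mk (Ideal.span {d}) u = u • Ideal.Quotient.mk (Ideal.span {d}) 1 := by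
    rw [Algebra.smul_def, map_one, mul_one]; rfl
  rw [e]
  exact Submodule.smul_mem_smul hu trivial

lemma Superf.nzd [IsLocalRing R] [IsNoetherianRing R] (h : Superf I J a c) (hI : I ≠ ⊤)
    (hnz : HasNzd I) : ∀ w, a * w = 0 → w = 0 := by
  intro w hw
  obtain ⟨κ, hκ, hκ'⟩ := hnz.pow c
  refine hκ' w ?_
  have : κ * w ∈ Ideal.span {(0 : R)} := mem_of_forall_pow_sup hI (c := c) fun n hn => by
    refine Submodule.mem_sup_left ?_
    have := h n 0 hn (κ * w) (Ideal.mul_mem_right _ _ hκ)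
      (by rw [mul_left_comm, hw, mul_zero]; exact zero_mem _)
    simpa using this
  simpa using this

/-- A superficial element divides well in the filtration of integral closures, with no lower bound
on the exponents. -/
lemma Superf.div_intCl [IsNoetherianRing R] (h : Superf I J a c) (hI : HasNzd I) (hJ : HasNzd J)
    {r s : ℕ} {z : R} (hz : a * z ∈ intCl (I ^ (r + 1) * J ^ s)) : z ∈ intCl (I ^ r * J ^ s) := by
  obtain ⟨c1, hc1⟩ := intCl_le_asyCl _ hz
  obtain ⟨y, hy, hy'⟩ := hI.pow (c + c1)
  refine mem_intCl_of_mul ((hI.pow r).mul (hJ.pow s)) (c := c1) hy' fun m => ?_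
  have h1 : y * z ^ (m + c1) ∈ I ^ (r * m + c) * J ^ (s * m) := by
    refine h.pow (m + c1) _ _ (by omega) _ ?_ ?_
    · exact Ideal.mul_mem_right _ _ (Ideal.pow_le_pow_right (by omega) hy)
    · have e : a ^ (m + c1) * (y * z ^ (m + c1)) = y * (a * z) ^ (m + c1) := by ring
      have e2 : I ^ (r * m + c + (m + c1)) * J ^ (s * m) =
          I ^ (c + c1) * (I ^ (r + 1) * J ^ s) ^ m := by
        rw [mul_pow, ← pow_mul, ← pow_mul, ← mul_assoc, ← pow_add]
        congr 2; ring
      rw [e, e2]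
      exact Ideal.mul_mem_mul hy (hc1 m)
  rw [mul_pow, ← pow_mul, ← pow_mul]
  exact Ideal.mul_mono_left (Ideal.pow_le_pow_right (by omega)) h1

end SuperficialProps
end GJR

/-! ### Cohen-Macaulay rings of dimension two -/

namespace GJR

section Dim2

variable {R : Type*} [CommRing R] [IsLocalRing R] [IsNoetherianRing R]

lemma length_ne_top_of_pow_le {L : Ideal R} {p : ℕ}
    (h : IsLocalRing.maximalIdeal R ^ p ≤ L) : Module.length R (R ⧸ L) ≠ ⊤ := by
  have h0 : Ring.KrullDimLE 0 (R ⧸ L) := by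
    rw [Ring.krullDimLE_zero_iff]
    intro P hP
    have h1 : IsLocalRing.maximalIdeal R ≤ P.comap (Ideal.Quotient.mk L) := by
      refine Ideal.IsPrime.le_of_pow_le (n := p) (h.trans ?_)
      intro x hx
      rw [Ideal.mem_comap, Ideal.Quotient.eq_zero_iff_mem.2 hx]
      exact zero_mem _
    have h2 : P.comap (Ideal.Quotient.mk L) = IsLocalRing.maximalIdeal R :=
      ((IsLocalRing.maximalIdeal.isMaximal R).eq_of_le (Ideal.IsPrime.ne_top inferInstance) h1).symm
    have h3 : (P.comap (Ideal.Quotient.mk L)).IsMaximal := h2 ▸ IsLocalRing.maximalIdeal.isMaximal R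
    rw [← Ideal.map_comap_of_surjective _ Ideal.Quotient.mk_surjective P]
    refine (Ideal.map_eq_top_or_isMaximal_of_surjective _ Ideal.Quotient.mk_surjective
      h3).resolve_left ?_
    rw [Ideal.map_comap_of_surjective _ Ideal.Quotient.mk_surjective P]
    exact hP.ne_top
  have h1 : IsArtinianRing (R ⧸ L) := isArtinianRing_iff_krullDimLE_zero.2 h0
  have h2 := Module.length_eq_of_surjective (S := R) (R := R ⧸ L) (M := R ⧸ L)
    Ideal.Quotient.mk_surjective
  rw [h2]
  exact Module.length_ne_top

/-- In dimension two a regular sequence of length two generates an `𝔪`-primary ideal. -/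
lemma RegPair.pow_le (hdim : ringKrullDim R = 2) {a b : R} (h : RegPair a b) :
    ∃ p, IsLocalRing.maximalIdeal R ^ p ≤ Ideal.span {a, b} := by
  have ha : a ∈ nonZeroDivisors R := mem_nonZeroDivisors_iff_right.2 fun z hz =>
    h.left z (by rwa [mul_comm])
  let A := Ideal.span {a}
  let b' : R ⧸ A := Ideal.Quotient.mk A b
  have hb : b' ∈ nonZeroDivisors (R ⧸ A) := by
    refine mem_nonZeroDivisors_iff_right.2 fun z hz => ?_
    obtain ⟨z, rfl⟩ := Ideal.Quotient.mk_surjective z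
    rw [← map_mul, Ideal.Quotient.eq_zero_iff_mem, Ideal.mem_span_singleton, mul_comm] at hz
    rw [Ideal.Quotient.eq_zero_iff_mem, Ideal.mem_span_singleton]
    exact h.right z hz
  have h1 := ringKrullDim_quotient_succ_le_of_nonZeroDivisor ha
  have h2 := ringKrullDim_quotient_succ_le_of_nonZeroDivisor hb
  rw [hdim] at h1
  have h3 : Ring.KrullDimLE 0 ((R ⧸ A) ⧸ Ideal.span {b'}) := by
    rw [Ring.krullDimLE_iff]
    have h4 := (add_le_add_left h2 1).trans h1
    generalize ringKrullDim ((R ⧸ A) ⧸ Ideal.span {b'}) = d at h4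
    induction d using WithBot.recBotCoe with
    | bot => exact bot_le
    | coe d =>
      have h5 : d + 1 + 1 ≤ 2 := WithBot.coe_le_coe.1 h4
      induction d using ENat.recTopCoe with
      | top => simp at h5
      | coe d =>
        have : d + 1 + 1 ≤ 2 := by exact_mod_cast h5
        have : d ≤ 0 := by omega
        exact_mod_cast this
  let f : R →+* (R ⧸ A) ⧸ Ideal.span {b'} :=
    (Ideal.Quotient.mk (Ideal.span {b'})).comp (Ideal.Quotient.mk A)
  have hf : Function.Surjective f :=
    Ideal.Quotient.mk_surjective.comp Ideal.Quotient.mk_surjective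
  have hker : RingHom.ker f ≤ Ideal.span {a, b} := by
    intro x hx
    have hx' : Ideal.Quotient.mk A x ∈ Ideal.span {b'} := Ideal.Quotient.eq_zero_iff_mem.1 hx
    obtain ⟨w, hw⟩ := Ideal.mem_span_singleton.1 hx'
    obtain ⟨w, rfl⟩ := Ideal.Quotient.mk_surjective w
    rw [← map_mul, Ideal.Quotient.mk_eq_mk_iff_sub_mem, Ideal.mem_span_singleton] at hw
    obtain ⟨u, hu⟩ := hw
    exact mem_pair_iff.2 ⟨u, w, by linear_combination hu⟩
  refine Ideal.exists_pow_le_of_le_radical_of_fg ?_ (IsNoetherian.noetherian _)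
  rw [Ideal.radical_eq_sInf]
  refine le_sInf fun P hP => ?_
  have hPp : P.IsPrime := hP.2
  have hkP : RingHom.ker f ≤ P := hker.trans hP.1
  have h4 : (P.map f).IsPrime := Ideal.map_isPrime_of_surjective hf hkP
  have h5 : (P.map f).IsMaximal := h4.isMaximal'
  have h6 : (P.map f).comap f = P := by
    rw [Ideal.comap_map_of_surjective' f hf, sup_eq_left]
    exact hkP
  have h7 : P.IsMaximal := h6 ▸ Ideal.comap_isMaximal_of_surjective f hf
  exact (IsLocalRing.eq_maximalIdeal h7).ge

/-- A nonzerodivisor `a` of a local ring of depth at least two has a regular partner: otherwise the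
maximal ideal is associated to `R ⧸ a`, and a socle element transfers to `R ⧸ f`. -/
lemma RegPair.exists_partner {f g : R} (h : RegPair f g)
    (hf : f ∈ IsLocalRing.maximalIdeal R) (hg : g ∈ IsLocalRing.maximalIdeal R) {a : R}
    (ha : ∀ z, a * z = 0 → z = 0) :
    ∃ t ∈ IsLocalRing.maximalIdeal R, ∀ z, a ∣ t * z → a ∣ z := by
  by_contra! hcon
  have hsub : (IsLocalRing.maximalIdeal R : Set R) ⊆
      ⋃ p ∈ associatedPrimes R (R ⧸ Ideal.span {a}), p := by
    rw [biUnion_associatedPrimes_eq_zero_divisors]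
    intro t ht
    obtain ⟨z, hz, hz'⟩ := hcon t ht
    refine ⟨Ideal.Quotient.mk _ z, ?_, ?_⟩
    · rwa [Ne, Ideal.Quotient.eq_zero_iff_mem, Ideal.mem_span_singleton]
    · change Ideal.Quotient.mk _ (t * z) = 0
      rwa [Ideal.Quotient.eq_zero_iff_mem, Ideal.mem_span_singleton]
  obtain ⟨P, hP, hmP⟩ := (Ideal.subset_union_prime_finite (f := id)
    (associatedPrimes.finite R (R ⧸ Ideal.span {a})) ⊥ ⊥ fun i hi _ _ => hi.isPrime).1 hsub
  obtain ⟨hPp, z, hz⟩ := isAssociatedPrime_iff.1 hP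
  obtain ⟨z, rfl⟩ := Ideal.Quotient.mk_surjective z
  have hz1 : ∀ t ∈ IsLocalRing.maximalIdeal R, a ∣ t * z := by
    intro t ht
    have h1 : t ∈ P := hmP ht
    rw [hz] at h1
    have h2 : Ideal.Quotient.mk (Ideal.span {a}) (t * z) = 0 := by
      simpa [Submodule.mem_colon_singleton, Algebra.smul_def] using h1
    rwa [Ideal.Quotient.eq_zero_iff_mem, Ideal.mem_span_singleton] at h2
  have hz2 : ¬ a ∣ z := by
    intro hd
    apply hPp.ne_top
    rw [hz, Ideal.Quotient.eq_zero_iff_mem.2 (Ideal.mem_span_singleton.2 hd)]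
    simp
  obtain ⟨w, hw⟩ := hz1 f hf
  obtain ⟨v, hv⟩ := hz1 g hg
  obtain ⟨w', rfl⟩ : f ∣ w := by
    refine h.right w ⟨v, ?_⟩
    have : a * (g * w - f * v) = 0 := by linear_combination f * hv - g * hw
    linear_combination ha _ this
  refine hz2 ⟨w', ?_⟩
  have : f * (z - a * w') = 0 := by linear_combination hw
  linear_combination h.left _ this

lemma exists_regPair (hCM : IsCMLocalRing R) (hdim : ringKrullDim R = 2) :
    ∃ f g : R, f ∈ IsLocalRing.maximalIdeal R ∧ g ∈ IsLocalRing.maximalIdeal R ∧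
      RegPair f g := by
  obtain ⟨n, f, hf, ⟨hreg, -⟩, hn⟩ := hCM
  obtain rfl : n = 2 := by
    rw [hdim] at hn
    exact_mod_cast hn
  refine ⟨f 0, f 1, hf 0, hf 1, fun z hz => ?_, fun z hz => ?_⟩
  · have := hreg 0 z
    simpa [hz] using this
  · have := hreg 1 z
    have e : {j : Fin 2 | j < 1} = {0} := by
      ext j; fin_cases j <;> simp
    simp only [e, Set.image_singleton, smul_eq_mul, Ideal.mul_top, Ideal.mem_span_singleton] at this
    exact this hz

lemma hasNzd_of_isMPrimary {I : Ideal R} (hI : IsMPrimary I) {f : R}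
    (hf : f ∈ IsLocalRing.maximalIdeal R) (h : ∀ z, f * z = 0 → z = 0) : HasNzd I := by
  rw [← hI] at hf
  obtain ⟨n, hn⟩ := hf
  refine ⟨f ^ n, hn, ?_⟩
  clear hn
  induction n with
  | zero => simp
  | succ n ih => exact fun w hw => h _ (ih _ (by rwa [← mul_assoc, ← pow_succ]))

end Dim2
end GJR

/-! ### Superficial regular pairs and reductions -/

namespace GJR

section Joint

variable {R : Type*} [CommRing R]

lemma length_mul_sup {a b : R} (h : RegPair a b) {H : Ideal R} (haH : a ∈ H) :
    Module.length R (R ⧸ Ideal.span {b} * H ⊔ Ideal.span {a}) =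
      Module.length R (R ⧸ H) + Module.length R (R ⧸ Ideal.span {a, b}) := by
  rw [qlen_colon (Ideal.span {b} * H ⊔ Ideal.span {a}) H b]
  · have e : Ideal.span {b} * H ⊔ Ideal.span {a} ⊔ Ideal.span {b} = Ideal.span {a, b} := by
      rw [Ideal.span_insert, sup_assoc, sup_eq_right]
      exact Ideal.mul_le_left.trans le_sup_right
    rw [e]
  · intro z
    constructor
    · intro hz
      exact Submodule.mem_sup_left (Ideal.mul_mem_mul (Ideal.mem_span_singleton_self b) hz)
    · intro hz
      obtain ⟨u, hu, v, hv, e⟩ := Submodule.mem_sup.1 hz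
      obtain ⟨y, hy, rfl⟩ := Ideal.mem_span_singleton_mul.1 hu
      obtain ⟨w, rfl⟩ := Ideal.mem_span_singleton.1 hv
      obtain ⟨t, ht⟩ := h.right (z - y) ⟨w, by linear_combination -e⟩
      have : z = y + a * t := by linear_combination ht
      rw [this]
      exact add_mem hy (Ideal.mul_mem_right _ _ haH)

/-- If division by `b` is exact in the filtration `J^n + a R` from some point on, then `b` generates
a reduction of `J` modulo `a`: the lengths of the successive quotients are nondecreasing and
bounded, hence eventually constant, and Nakayama's lemma applies. -/
lemma reduction_mod [IsLocalRing R] [IsNoetherianRing R] {J : Ideal R} {a b : R} {c : ℕ}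
    (h : RegPair a b) (hb : b ∈ J) (hJm : J ≤ IsLocalRing.maximalIdeal R)
    (hJl : ∀ n, Module.length R (R ⧸ J ^ n) ≠ ⊤)
    (hc : ∀ n, c ≤ n → ∀ z ∈ J ^ c ⊔ Ideal.span {a},
      b * z ∈ J ^ (n + 1) ⊔ Ideal.span {a} → z ∈ J ^ n ⊔ Ideal.span {a})
    (he : Module.length R (R ⧸ Ideal.span {a, b}) ≠ ⊤) :
    ∃ n0, ∀ n, n0 ≤ n → J ^ (n + 1) ≤ Ideal.span {b} * J ^ n ⊔ Ideal.span {a} := by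
  set A := Ideal.span {a} with hA
  let H : ℕ → Ideal R := fun n => J ^ n ⊔ A
  have haH : ∀ n, a ∈ H n := fun n => Submodule.mem_sup_right (Ideal.mem_span_singleton_self a)
  have hH : ∀ {m n}, m ≤ n → H n ≤ H m := fun hmn => pow_sup_anti J A hmn
  have hAH : ∀ n, A ≤ H n := fun n => le_sup_right
  have hbH : ∀ n, Ideal.span {b} * H n ≤ H (n + 1) := by
    intro n
    refine Ideal.mul_le.2 fun x hx y hy => ?_
    obtain ⟨t, rfl⟩ := Ideal.mem_span_singleton.1 hx
    obtain ⟨u, hu, v, hv, rfl⟩ := Submodule.mem_sup.1 hy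
    change _ ∈ J ^ (n + 1) ⊔ A
    rw [mul_add, pow_succ']
    exact Submodule.add_mem_sup (Ideal.mul_mem_mul (Ideal.mul_mem_right _ _ hb) hu)
      (Ideal.mul_mem_left _ _ hv)
  have hHl : ∀ n, Module.length R (R ⧸ H n) ≠ ⊤ := fun n =>
    ne_top_of_le_ne_top (hJl n) (qlen_anti le_sup_left)
  obtain ⟨e, he'⟩ := ENat.ne_top_iff_exists.1 he
  choose L hL using fun n => ENat.ne_top_iff_exists.1 (hHl n)
  have hLmono : ∀ n, L n ≤ L (n + 1) := fun n => by
    have := qlen_anti (hH (Nat.le_succ n))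
    rw [← hL, ← hL] at this
    exact_mod_cast this
  have hLe : ∀ n, L (n + 1) ≤ L n + e := by
    intro n
    have h1 : Ideal.span {b} * H n ⊔ A ≤ H (n + 1) := sup_le (hbH n) (hAH _)
    have := (qlen_anti h1).trans_eq (length_mul_sup h (haH n))
    rw [← hL, ← hL, ← he'] at this
    exact_mod_cast this
  let U : ℕ → Ideal R := fun n => Ideal.span {b} * H n ⊔ A ⊔ H (n + 2)
  have hUH : ∀ n, U n ≤ H (n + 1) := fun n =>
    sup_le (sup_le (hbH n) (hAH _)) (hH (by omega))
  have hU : ∀ n, c ≤ n →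
      (L (n + 1) : ℕ∞) + Module.length R (R ⧸ U n) = (L n : ℕ∞) + L (n + 2) := by
    intro n hn
    have h1 := qlen_sup_inf (Ideal.span {b} * H n ⊔ A) (H (n + 2))
    have h2 : (Ideal.span {b} * H n ⊔ A) ⊓ H (n + 2) = Ideal.span {b} * H (n + 1) ⊔ A := by
      refine le_antisymm ?_ (le_inf ?_ (sup_le (hbH (n + 1)) (hAH _)))
      · rintro x ⟨hx1, hx2⟩
        obtain ⟨u, hu, v, hv, rfl⟩ := Submodule.mem_sup.1 hx1
        obtain ⟨y, hy, rfl⟩ := Ideal.mem_span_singleton_mul.1 hu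
        refine Submodule.add_mem_sup (Ideal.mul_mem_mul (Ideal.mem_span_singleton_self b) ?_) hv
        refine hc (n + 1) (by omega) y (hH hn hy) ?_
        have := sub_mem hx2 (hAH (n + 2) hv)
        rwa [add_sub_cancel_right] at this
      · exact sup_le_sup_right (Ideal.mul_mono_right (hH (Nat.le_succ n))) _
    rw [h2, length_mul_sup h (haH n), length_mul_sup h (haH (n + 1)), ← hL, ← hL, ← hL, ← he'] at h1
    have h3 : (L (n + 1) : ℕ∞) + e + Module.length R (R ⧸ U n) = L n + e + L (n + 2) := h1
    have hUl : Module.length R (R ⧸ U n) ≠ ⊤ :=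
      ne_top_of_le_ne_top (hHl (n + 2)) (qlen_anti le_sup_right)
    obtain ⟨u, hu⟩ := ENat.ne_top_iff_exists.1 hUl
    rw [← hu] at h3 ⊢
    have h4 : L (n + 1) + e + u = L n + e + L (n + 2) := by exact_mod_cast h3
    have h5 : L (n + 1) + u = L n + L (n + 2) := by omega
    exact_mod_cast h5
  have hge : ∀ n, (L (n + 1) : ℕ∞) ≤ Module.length R (R ⧸ U n) := fun n => by
    rw [hL]; exact qlen_anti (hUH n)
  let δ : ℕ → ℕ := fun k => L (c + k + 1) - L (c + k)
  have hδ : Monotone δ := by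
    refine monotone_nat_of_le_succ fun k => ?_
    have h1 := hU (c + k) (by omega)
    have h2 := hge (c + k)
    have h3 : (L (c + k + 1) : ℕ∞) + L (c + k + 1) ≤ L (c + k) + L (c + k + 2) :=
      (add_le_add_right h2 _).trans_eq h1
    have h4 : L (c + k + 1) + L (c + k + 1) ≤ L (c + k) + L (c + k + 2) := by exact_mod_cast h3
    change L (c + k + 1) - L (c + k) ≤ L (c + k + 2) - L (c + k + 1)
    have := hLmono (c + k)
    omega
  obtain ⟨k0, hk0⟩ := eventually_const hδ (e := e) (fun k => by
    change L (c + k + 1) - L (c + k) ≤ e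
    have := hLe (c + k)
    omega)
  refine ⟨c + k0, fun n hn => ?_⟩
  obtain ⟨k, rfl⟩ := Nat.exists_eq_add_of_le (show c ≤ n by omega)
  have hUeq : U (c + k) = H (c + k + 1) := by
    refine eq_of_qlen_le (hUH _) (hHl _) ?_
    have h1 : δ (k + 1) = δ k := (hk0 (k + 1) (by omega)).trans (hk0 k (by omega)).symm
    have h1 : L (c + k + 2) - L (c + k + 1) = L (c + k + 1) - L (c + k) := h1
    have h2 := hU (c + k) (by omega)
    have hUl : Module.length R (R ⧸ U (c + k)) ≠ ⊤ :=
      ne_top_of_le_ne_top (hHl (c + k + 2)) (qlen_anti le_sup_right)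
    obtain ⟨u, hu⟩ := ENat.ne_top_iff_exists.1 hUl
    rw [← hu, ← hL]
    rw [← hu] at h2
    have h3 : L (c + k + 1) + u = L (c + k) + L (c + k + 2) := by exact_mod_cast h2
    have h4 := hLmono (c + k)
    have h5 := hLmono (c + k + 1)
    have h6 : u ≤ L (c + k + 1) := by
      have h5' : L (c + k + 1) ≤ L (c + k + 2) := h5
      omega
    exact_mod_cast h6
  have hNak : H (c + k + 1) ≤ Ideal.span {b} * J ^ (c + k) ⊔ A := by
    refine Submodule.le_of_le_smul_of_le_jacobson_bot (IsNoetherian.noetherian _)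
      (hJm.trans (IsLocalRing.maximalIdeal_le_jacobson _)) ?_
    rw [← hUeq]
    refine sup_le (sup_le ?_ (le_sup_of_le_left le_sup_right)) ?_
    · refine Ideal.mul_le.2 fun x hx y hy => ?_
      obtain ⟨u, hu, v, hv, rfl⟩ := Submodule.mem_sup.1 hy
      rw [mul_add]
      exact Submodule.mem_sup_left (Submodule.add_mem_sup (Ideal.mul_mem_mul hx hu)
        (Ideal.mul_mem_left _ _ hv))
    · refine sup_le ?_ (le_sup_of_le_left le_sup_right)
      rw [hUeq, smul_eq_mul]
      refine le_sup_of_le_right ?_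
      rw [show c + k + 2 = (c + k + 1) + 1 from rfl, pow_succ']
      exact Ideal.mul_mono_right le_sup_left
  exact le_sup_left.trans hNak

lemma IsMPrimary.le {I : Ideal R} [IsLocalRing R] (hI : IsMPrimary I) :
    I ≤ IsLocalRing.maximalIdeal R := hI ▸ Ideal.le_radical

lemma IsMPrimary.ne_top {I : Ideal R} [IsLocalRing R] (hI : IsMPrimary I) : I ≠ ⊤ :=
  fun h => (IsLocalRing.maximalIdeal.isMaximal R).ne_top (top_le_iff.1 (h ▸ IsMPrimary.le hI))

lemma IsMPrimary.length_pow [IsLocalRing R] [IsNoetherianRing R] {I : Ideal R}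
    (hI : IsMPrimary I) (n : ℕ) : Module.length R (R ⧸ I ^ n) ≠ ⊤ := by
  obtain ⟨p, hp⟩ := Ideal.exists_pow_le_of_le_radical_of_fg (le_of_eq hI.symm)
    (IsNoetherian.noetherian _)
  refine length_ne_top_of_pow_le (p := p * n) ?_
  rw [pow_mul]
  exact Ideal.pow_right_mono hp n

/-- A pair of superficial elements `a ∈ I`, `b ∈ J` forming a regular sequence, such that `b`
generates a reduction of `J` modulo `a`. -/
structure SupPair (I J : Ideal R) (a b : R) : Prop where
  left_mem : a ∈ I
  right_mem : b ∈ J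
  left_superf : ∃ c, Superf I J a c
  right_superf : ∃ c, Superf J I b c
  reg : RegPair a b
  red : ∃ n0, ∀ n, n0 ≤ n → J ^ (n + 1) ≤ Ideal.span {b} * J ^ n ⊔ Ideal.span {a}

/-- First `a` is chosen superficial in `I`; then `b ∈ J` is chosen superficial both in `J` and in
`J` modulo `a`.  Since `R ⧸ a` has positive depth, the second condition makes `b` regular on it. -/
theorem exists_supPair [IsLocalRing R] [IsNoetherianRing R]
    (hCM : IsCMLocalRing R) (hdim : ringKrullDim R = 2)
    [Infinite (IsLocalRing.ResidueField R)] {I J : Ideal R} (hI : IsMPrimary I)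
    (hJ : IsMPrimary J) : ∃ a b, SupPair I J a b := by
  obtain ⟨f, g, hf, hg, hfg⟩ := exists_regPair hCM hdim
  obtain ⟨a, ha, c, hac, -⟩ := exists_superf I J 0
  have hanz := hac.nzd (IsMPrimary.ne_top hI) (hasNzd_of_isMPrimary hI hf hfg.left)
  obtain ⟨t, ht, hat⟩ := hfg.exists_partner hf hg hanz
  obtain ⟨b, hb, c', hbc, hb'⟩ := exists_superf J I a
  have hreg : RegPair a b := by
    refine ⟨hanz, fun z hz => ?_⟩
    rw [← hJ] at ht
    obtain ⟨N, hN⟩ := ht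
    have h1 : a ∣ t ^ (N * c') * z := by
      rw [← Ideal.mem_span_singleton]
      refine mem_of_forall_pow_sup (IsMPrimary.ne_top hJ) (c := c') fun n hn => ?_
      refine hb' n hn _ ?_ ?_
      · refine Submodule.mem_sup_left (Ideal.mul_mem_right _ _ ?_)
        rw [pow_mul]
        exact Ideal.pow_mem_pow hN c'
      · refine Submodule.mem_sup_right ?_
        rw [mul_left_comm]
        exact Ideal.mul_mem_left _ _ (Ideal.mem_span_singleton.2 hz)
    exact RegPair.pow_right ⟨hanz, hat⟩ h1
  obtain ⟨p, hp⟩ := hreg.pow_le hdim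
  exact ⟨a, b, ha, hb, ⟨c, hac⟩, ⟨c', hbc⟩, hreg, reduction_mod hreg hb (IsMPrimary.le hJ)
    (IsMPrimary.length_pow hJ) hb' (length_ne_top_of_pow_le hp)⟩

/-- For `I = J = K` the pair generates a reduction of `K`. -/
lemma SupPair.reduction [IsNoetherianRing R] {K : Ideal R} {a b : R}
    (h : SupPair K K a b) : ∃ r, ∀ j, K ^ (j + r) ≤ Ideal.span {a, b} ^ j := by
  obtain ⟨c, hc⟩ := h.left_superf
  obtain ⟨n0, hn0⟩ := h.red
  obtain ⟨k, hk⟩ := Ideal.exists_pow_inf_eq_pow_smul K (Ideal.span {a})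
  have hstep : ∀ n, n0 + c + k ≤ n → K ^ (n + 1) ≤ Ideal.span {a, b} * K ^ n := by
    intro n hn x hx
    obtain ⟨u, hu, v, hv, rfl⟩ := Submodule.mem_sup.1 (hn0 n (by omega) hx)
    have hu' : u ∈ K ^ (n + 1) := by
      rw [pow_succ']
      exact Ideal.mul_mono_left (by simpa using h.right_mem) hu
    have hv' : v ∈ K ^ (n + 1) := by simpa using sub_mem hx hu'
    have h1 : v ∈ K ^ (n + 1) • (⊤ : Ideal R) ⊓ Ideal.span {a} := ⟨by simpa using hv', hv⟩
    rw [hk (n + 1) (by omega)] at h1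
    have h2 : v ∈ Ideal.span {a} * K ^ (n + 1 - k) := by
      rw [mul_comm]
      exact Ideal.mul_mono_right inf_le_right h1
    obtain ⟨w, hw, rfl⟩ := Ideal.mem_span_singleton_mul.1 h2
    have h3 : w ∈ K ^ n := by
      have := hc n 0 (by omega) w (Ideal.pow_le_pow_right (by omega) hw) (by simpa using hv')
      simpa using this
    have h4 : Ideal.span {b} ≤ Ideal.span {a, b} :=
      (Ideal.span_singleton_le_iff_mem _).2 (right_mem_pair a b)
    have h5 : u ∈ Ideal.span {a, b} * K ^ n := Ideal.mul_mono_left h4 hu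
    exact Ideal.add_mem _ h5 (Ideal.mul_mem_mul (left_mem_pair a b) h3)
  refine ⟨n0 + c + k, fun j => ?_⟩
  induction j with
  | zero => simp
  | succ j ih =>
    rw [show j + 1 + (n0 + c + k) = j + (n0 + c + k) + 1 by ring,
      pow_succ' (Ideal.span {a, b})]
    exact (hstep (j + (n0 + c + k)) (by omega)).trans (Ideal.mul_mono_right ih)

end Joint
end GJR

/-! ### Conductor, stability and the joint reduction -/

namespace GJR

section Assembly

variable {R : Type*} [CommRing R] {I J : Ideal R}

/-- Rees: in an analytically unramified ring the integral closures of the powers of `K` are, up to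
a shift, contained in the powers of `K`. -/
theorem exists_intCl_pow_le [IsLocalRing R] [IsNoetherianRing R] (hur : AnalyticallyUnramified R)
    (hCM : IsCMLocalRing R) (hdim : ringKrullDim R = 2)
    [Infinite (IsLocalRing.ResidueField R)] {K : Ideal R} (hK : IsMPrimary K) :
    ∃ k, ∀ n, intCl (K ^ n) ≤ K ^ (n - k) := by
  obtain ⟨a, b, h⟩ := exists_supPair hCM hdim hK hK
  obtain ⟨r, hr⟩ := h.reduction
  obtain ⟨p, hp⟩ := h.reg.pow_le hdim
  have hQK : Ideal.span {a, b} ≤ K := by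
    rw [Ideal.span_le]
    rintro x (rfl | rfl)
    exacts [h.left_mem, h.right_mem]
  obtain ⟨k, hk⟩ := h.reg.asyF_le_pow hur (IsMPrimary.le hK h.left_mem)
    (IsMPrimary.le hK h.right_mem) (length_ne_top_of_pow_le hp) hp
  refine ⟨k + r, fun n x hx => ?_⟩
  rcases le_total n (k + r) with hn | hn
  · rw [Nat.sub_eq_zero_of_le hn]; simp
  obtain ⟨n, rfl⟩ := Nat.exists_eq_add_of_le' hn
  rw [Nat.add_sub_cancel]
  obtain ⟨c, hc⟩ := intCl_le_asyCl _ hx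
  refine Ideal.pow_right_mono hQK n (hk n (asyF_of_discrete (c := c) fun m => ?_))
  rcases m with _ | m
  · simp
  · refine hr _ ?_
    have := hc (m + 1)
    rw [← pow_mul] at this
    refine Ideal.pow_le_pow_right ?_ this
    nlinarith [Nat.zero_le (r * m)]

/-- For `r ≤ s`, multiplication by `a ^ (s - r)` moves `x` to the diagonal exponent `(s, s)`, where
the hypothesis on the powers of `I J` applies, and superficiality of `a` moves the result back. -/
lemma conductor_aux {k c : ℕ} (hk : ∀ n, intCl ((I * J) ^ n) ≤ (I * J) ^ (n - k)) {a : R}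
    (ha : a ∈ I) (hac : Superf I J a c) {y z : R} (hy : y ∈ I ^ (c + k)) (hz : z ∈ J ^ k)
    {r s : ℕ} (hrs : r ≤ s) {x : R} (hx : x ∈ intCl (I ^ r * J ^ s)) :
    y * z * x ∈ I ^ r * J ^ s := by
  obtain ⟨d, rfl⟩ := Nat.exists_eq_add_of_le hrs
  have h1 : a ^ d * x ∈ (I * J) ^ (r + d - k) := by
    refine hk (r + d) ?_
    have := mul_intCl_le (I ^ d) (I ^ r * J ^ (r + d))
      (Ideal.mul_mem_mul (Ideal.pow_mem_pow ha d) hx)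
    rwa [← mul_assoc, ← pow_add, add_comm d r, ← mul_pow] at this
  have h2 : y * x ∈ I ^ (r + c) * J ^ (r + d - k) := by
    refine hac.pow d _ _ (by omega) _ ?_ ?_
    · exact Ideal.mul_mem_right _ _ (Ideal.pow_le_pow_right (by omega) hy)
    · have h3 : a ^ d * (y * x) ∈ I ^ (c + k) * (I * J) ^ (r + d - k) := by
        rw [mul_left_comm]; exact Ideal.mul_mem_mul hy h1
      rw [mul_pow, ← mul_assoc, ← pow_add] at h3
      exact Ideal.mul_mono_left (Ideal.pow_le_pow_right (by omega)) h3
  have h4 : z * (y * x) ∈ J ^ k * (I ^ (r + c) * J ^ (r + d - k)) := Ideal.mul_mem_mul hz h2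
  rw [mul_left_comm, ← pow_add] at h4
  rw [mul_comm y z, mul_assoc]
  exact Ideal.mul_mono (Ideal.pow_le_pow_right (by omega)) (Ideal.pow_le_pow_right (by omega)) h4

/-- A nonzerodivisor multiplying each `intCl (I^r J^s)` into `I^r J^s`. -/
theorem exists_conductor [IsLocalRing R] [IsNoetherianRing R] (hur : AnalyticallyUnramified R)
    (hCM : IsCMLocalRing R) (hdim : ringKrullDim R = 2)
    [Infinite (IsLocalRing.ResidueField R)] (hI : IsMPrimary I) (hJ : IsMPrimary J)
    (hIn : HasNzd I) (hJn : HasNzd J) :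
    ∃ g : R, (∀ w, g * w = 0 → w = 0) ∧
      ∀ r s, ∀ x ∈ intCl (I ^ r * J ^ s), g * x ∈ I ^ r * J ^ s := by
  have hIJ : IsMPrimary (I * J) := by
    have h1 : I.radical = _ := hI
    have h2 : J.radical = _ := hJ
    rw [IsMPrimary, Ideal.radical_mul, h1, h2, inf_idem]
  obtain ⟨k, hk⟩ := exists_intCl_pow_le hur hCM hdim hIJ
  obtain ⟨a, ha, c, hac, -⟩ := exists_superf I J 0
  obtain ⟨b, hb, c', hbc, -⟩ := exists_superf J I 0
  obtain ⟨y, hy, hy'⟩ := hIn.pow (c + k)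
  obtain ⟨z, hz, hz'⟩ := hJn.pow k
  obtain ⟨u, hu, hu'⟩ := hJn.pow (c' + k)
  obtain ⟨v, hv, hv'⟩ := hIn.pow k
  refine ⟨(y * z) * (u * v), fun w hw => ?_, fun r s x hx => ?_⟩
  · refine hv' _ (hu' _ (hz' _ (hy' _ ?_)))
    rw [← hw]; ring
  · rcases le_total r s with hrs | hrs
    · rw [mul_comm (y * z), mul_assoc]
      exact Ideal.mul_mem_left _ _ (conductor_aux hk ha hac hy hz hrs hx)
    · rw [mul_assoc]
      refine Ideal.mul_mem_left _ _ ?_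
      rw [mul_comm (I ^ r)] at hx ⊢
      exact conductor_aux (by simpa only [mul_comm J I] using hk) hb hbc hu hv hrs hx

lemma coef_sum {ι : Type*} (r s : ℕ) (S : Finset ι) (f : ι → BiRees I J) :
    coef r s (∑ i ∈ S, f i) = ∑ i ∈ S, coef r s (f i) :=
  map_sum (AddMonoidHom.mk' (coef (I := I) (J := J) r s) (coef_add r s)) f S

/-- The filtration of integral closures is finitely generated, hence eventually `J`-stable in the
second exponent, uniformly in the first. -/
theorem exists_stable [IsNoetherianRing R] {g : R} (hg : ∀ w, g * w = 0 → w = 0)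
    (hgF : ∀ r s, ∀ x ∈ intCl (I ^ r * J ^ s), g * x ∈ I ^ r * J ^ s) :
    ∃ N, ∀ r s i, N ≤ s → intCl (I ^ r * J ^ (s + i)) ≤ J ^ i * intCl (I ^ r * J ^ s) := by
  have hF : ∀ r s r' s', I ^ r * J ^ s * intCl (I ^ r' * J ^ s') ≤
      intCl (I ^ (r + r') * J ^ (s + s')) := by
    intro r s r' s'
    refine (mul_intCl_le _ _).trans_eq ?_
    rw [mul_mul_mul_comm, ← pow_add, ← pow_add]
  have hst : BiStable I J fun r s => Ideal.span {g} * intCl (I ^ r * J ^ s) := by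
    intro r s r' s' x hx h hh
    obtain ⟨f, hf, rfl⟩ := Ideal.mem_span_singleton_mul.1 hh
    rw [mul_left_comm]
    exact Ideal.mul_mem_mul (Ideal.mem_span_singleton_self g) (hF _ _ _ _ (Ideal.mul_mem_mul hx hf))
  obtain ⟨G, hG⟩ := IsNoetherian.noetherian (homIdeal hst)
  have hGmem : ∀ τ ∈ G, τ ∈ homIdeal hst := fun τ hτ => hG ▸ Submodule.subset_span hτ
  let N := G.sup fun τ => τ.1.natDegree
  have hN : ∀ τ ∈ G, ∀ r s, N < s → coef r s τ = 0 := by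
    intro τ hτ r s hs
    have h1 : τ.1.natDegree ≤ N := Finset.le_sup (f := fun τ : BiRees I J => τ.1.natDegree) hτ
    simp [coef, Polynomial.coeff_eq_zero_of_natDegree_lt (h1.trans_lt hs)]
  refine ⟨N, fun r s i hs x hx => ?_⟩
  have h1 : mon r (s + i) (g * x) (hgF _ _ x hx) ∈ homIdeal hst := by
    rw [mon_mem_homIdeal]
    exact Ideal.mul_mem_mul (Ideal.mem_span_singleton_self g) hx
  rw [← hG] at h1
  obtain ⟨σ, -, hσ⟩ := Submodule.mem_span_finset.1 h1
  have h2 : g * x = ∑ τ ∈ G, coef r (s + i) (σ τ * τ) := by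
    have := congrArg (coef r (s + i)) hσ
    rw [coef_mon, if_pos ⟨rfl, rfl⟩, coef_sum] at this
    exact this.symm
  have h3 : g * x ∈ Ideal.span {g} * (J ^ i * intCl (I ^ r * J ^ s)) := by
    rw [h2]
    refine sum_mem fun τ hτ => ?_
    rw [coef_mul]
    refine sum_mem fun v hv => sum_mem fun u hu => ?_
    rw [Finset.HasAntidiagonal.mem_antidiagonal] at hu hv
    by_cases hvN : N < v.2
    · rw [hN τ hτ _ _ hvN, mul_zero]; exact zero_mem _
    obtain ⟨f, hf, e⟩ := Ideal.mem_span_singleton_mul.1 (hGmem τ hτ u.2 v.2)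
    rw [← e, mul_left_comm (coef u.1 v.1 (σ τ)) g f]
    refine Ideal.mul_mem_mul (Ideal.mem_span_singleton_self g) ?_
    have h4 : coef u.1 v.1 (σ τ) ∈ J ^ i * (I ^ u.1 * J ^ (v.1 - i)) := by
      rw [mul_left_comm, ← pow_add, Nat.add_sub_cancel' (by omega)]
      exact coef_mem _ _ _
    have h5 := Ideal.mul_mem_mul h4 hf
    rw [mul_assoc] at h5
    refine Ideal.mul_mono_right ((hF _ _ _ _).trans_eq ?_) h5
    rw [hu, show v.1 - i + v.2 = s by omega]
  obtain ⟨w, hw, e⟩ := Ideal.mem_span_singleton_mul.1 h3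
  have : x = w := by
    have := hg (x - w) (by rw [mul_sub, e, sub_self])
    exact sub_eq_zero.1 this
  rwa [this]

lemma mul_mem_intCl_left {a : R} (ha : a ∈ I) {r s : ℕ} {w : R}
    (hw : w ∈ intCl (I ^ r * J ^ s)) : a * w ∈ intCl (I ^ (r + 1) * J ^ s) := by
  have := mul_intCl_le I (I ^ r * J ^ s) (Ideal.mul_mem_mul ha hw)
  rwa [← mul_assoc, ← pow_succ'] at this

lemma mul_mem_intCl_right {b : R} (hb : b ∈ J) {r s : ℕ} {w : R}
    (hw : w ∈ intCl (I ^ r * J ^ s)) : b * w ∈ intCl (I ^ r * J ^ (s + 1)) := by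
  rw [mul_comm (I ^ r)] at hw ⊢
  exact mul_mem_intCl_left hb hw

lemma SupPair.inf_left [IsNoetherianRing R] {a b : R} (h : SupPair I J a b) (hIn : HasNzd I)
    (hJn : HasNzd J) (r s : ℕ) : Ideal.span {a} ⊓ intCl (I ^ (r + 1) * J ^ s) =
      Ideal.span {a} * intCl (I ^ r * J ^ s) := by
  obtain ⟨c, hc⟩ := h.left_superf
  refine le_antisymm ?_ (le_inf Ideal.mul_le_left ?_)
  · rintro x ⟨hx, hx'⟩
    obtain ⟨w, rfl⟩ := Ideal.mem_span_singleton.1 hx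
    exact Ideal.mul_mem_mul (Ideal.mem_span_singleton_self a) (hc.div_intCl hIn hJn hx')
  · intro x hx
    obtain ⟨w, hw, rfl⟩ := Ideal.mem_span_singleton_mul.1 hx
    exact mul_mem_intCl_left h.left_mem hw

lemma SupPair.inf_right [IsNoetherianRing R] {a b : R} (h : SupPair I J a b) (hIn : HasNzd I)
    (hJn : HasNzd J) (r s : ℕ) : Ideal.span {b} ⊓ intCl (I ^ r * J ^ (s + 1)) =
      Ideal.span {b} * intCl (I ^ r * J ^ s) := by
  obtain ⟨c, hc⟩ := h.right_superf
  refine le_antisymm ?_ (le_inf Ideal.mul_le_left ?_)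
  · rintro x ⟨hx, hx'⟩
    obtain ⟨w, rfl⟩ := Ideal.mem_span_singleton.1 hx
    refine Ideal.mul_mem_mul (Ideal.mem_span_singleton_self b) ?_
    rw [mul_comm (I ^ r)] at hx' ⊢
    exact hc.div_intCl hJn hIn hx'
  · intro x hx
    obtain ⟨w, hw, rfl⟩ := Ideal.mem_span_singleton_mul.1 hx
    exact mul_mem_intCl_right h.right_mem hw

/-- Stability writes an element of `intCl (I^(r+1) J^(s+1))` as an element of
`J^(n0+1) intCl (I^(r+1) J^s')`; the reduction of `J` modulo `a` splits it into a multiple of `b`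
of the required form and a multiple of `a`, and the latter is divided by `a` with `inf_left`. -/
theorem SupPair.joint [IsNoetherianRing R] {a b : R} (h : SupPair I J a b) (hIn : HasNzd I)
    (hJn : HasNzd J) {N : ℕ}
    (hN : ∀ r s i, N ≤ s → intCl (I ^ r * J ^ (s + i)) ≤ J ^ i * intCl (I ^ r * J ^ s)) :
    ∃ M, ∀ r s, M ≤ s → intCl (I ^ (r + 1) * J ^ (s + 1)) =
      Ideal.span {a} * intCl (I ^ r * J ^ (s + 1)) ⊔
        Ideal.span {b} * intCl (I ^ (r + 1) * J ^ s) := by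
  obtain ⟨n0, hn0⟩ := h.red
  refine ⟨N + n0, fun r s hs => ?_⟩
  have hA := h.inf_left hIn hJn r (s + 1)
  have hB := h.inf_right hIn hJn (r + 1) s
  refine le_antisymm ?_ (sup_le (hA.ge.trans inf_le_right) (hB.ge.trans inf_le_right))
  intro x hx
  obtain ⟨s', rfl⟩ := Nat.exists_eq_add_of_le' (show n0 ≤ s by omega)
  have h1 : x ∈ (Ideal.span {b} * J ^ n0 ⊔ Ideal.span {a}) * intCl (I ^ (r + 1) * J ^ s') :=
    Ideal.mul_mono_left (hn0 n0 le_rfl) (hN (r + 1) s' (n0 + 1) (by omega) hx)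
  rw [Ideal.sup_mul, mul_assoc] at h1
  obtain ⟨u, hu, v, hv, rfl⟩ := Submodule.mem_sup.1 h1
  have hu' : u ∈ Ideal.span {b} * intCl (I ^ (r + 1) * J ^ (s' + n0)) := by
    refine Ideal.mul_mono_right ((mul_intCl_le _ _).trans_eq ?_) hu
    rw [mul_left_comm, ← pow_add, add_comm n0]
  have hv' : v ∈ intCl (I ^ (r + 1) * J ^ (s' + n0 + 1)) := by
    have := sub_mem hx ((hB.ge hu').2)
    rwa [add_sub_cancel_left] at this
  have hv2 : v ∈ Ideal.span {a} * intCl (I ^ r * J ^ (s' + n0 + 1)) :=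
    hA.le ⟨Ideal.mul_le_left hv, hv'⟩
  exact add_mem (Submodule.mem_sup_right hu') (Submodule.mem_sup_left hv2)

end Assembly
end GJR

open GJR in
theorem exists_good_joint_reduction
    (R : Type*) [CommRing R] [IsLocalRing R] [IsNoetherianRing R]
    (hur : AnalyticallyUnramified R) (hCM : IsCMLocalRing R)
    (hdim : ringKrullDim R = 2) (hres : Infinite (IsLocalRing.ResidueField R))
    (I J : Ideal R) (hI : IsMPrimary I) (hJ : IsMPrimary J) :
    ∃ a b : R, IsGoodJointReduction I J a b := by
  obtain ⟨f, g, hf, hg, hfg⟩ := exists_regPair hCM hdim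
  have hIn := hasNzd_of_isMPrimary hI hf hfg.left
  have hJn := hasNzd_of_isMPrimary hJ hf hfg.left
  obtain ⟨t, ht, htF⟩ := exists_conductor hur hCM hdim hI hJ hIn hJn
  obtain ⟨N, hN⟩ := exists_stable ht htF
  obtain ⟨a, b, hab⟩ := exists_supPair hCM hdim hI hJ
  obtain ⟨M, hM⟩ := hab.joint hIn hJn hN
  have hsucc : ∀ r : ℤ, 0 < r → r.toNat = (r - 1).toNat + 1 := fun r hr => by omega
  refine ⟨a, b, hab.left_mem, hab.right_mem, ⟨M + 1, fun r s hr hs => ?_⟩, fun r s hr => ?_,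
    fun r s hs => ?_⟩
  · simp only [IJbar, IJ]
    rw [hsucc r (by omega), hsucc s (by omega)]
    exact hM _ _ (by omega)
  · simp only [IJbar, IJ]
    rw [hsucc r hr]
    exact hab.inf_left hIn hJn _ _
  · simp only [IJbar, IJ]
    rw [hsucc s hs]
    exact hab.inf_right hIn hJn _ _
end

section
/- Let (R,𝔪) be an analytically unramified Cohen–Macaulay local ring of dimension 2 with infinite residue field, I, J 𝔪-primary ideals, and (a,b) a good joint reduction of {I^r J^s‾}. Then for all integers r, s ≥ 0 and all k, l ≥ 1 the sequence 0 → R/(I^r J^s‾) → R/(I^r J^{s+l}‾) ⊕ R/(I^{r+k} J^s‾) → (a^k, b^l)/(a^k·(I^r J^{s+l}‾) + b^l·(I^{r+k} J^s‾)) → 0 is exact, where the first map sends x mod I^r J^s‾ to (−b^l x mod I^r J^{s+l}‾, a^k x mod I^{r+k} J^s‾) and the second sends (x mod, y mod) to a^k x + b^l y modulo a^k·(I^r J^{s+l}‾) + b^l·(I^{r+k} J^s‾). -/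
/-! ### Elementary stability properties of integral closures of ideals -/

lemma isIntegralOverIdeal_mono {R : Type*} [CommRing R] {K K' : Ideal R} (h : K ≤ K')
    {x : R} (hx : IsIntegralOverIdeal K x) : IsIntegralOverIdeal K' x := by
  obtain ⟨n, hn, c, hc, he⟩ := hx
  exact ⟨n, hn, c, fun i => Ideal.pow_right_mono h _ (hc i), he⟩

lemma intCl_mono {R : Type*} [CommRing R] {K K' : Ideal R} (h : K ≤ K') :
    intCl K ≤ intCl K' :=
  Ideal.span_mono fun _ hx => isIntegralOverIdeal_mono h hx

lemma mul_isIntegralOverIdeal {R : Type*} [CommRing R] {K : Ideal R} (c : R) {z : R}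
    (hz : IsIntegralOverIdeal K z) :
    IsIntegralOverIdeal (Ideal.span {c} * K) (c * z) := by
  obtain ⟨n, hn, a, ha, he⟩ := hz
  refine ⟨n, hn, fun i => c ^ i * a i, fun i => ?_, ?_⟩
  · rw [mul_pow]
    exact Ideal.mul_mem_mul
      (by rw [Ideal.span_singleton_pow]; exact Ideal.mem_span_singleton_self _) (ha i)
  · have key : (c * z) ^ n +
        ∑ i ∈ Finset.range n, c ^ (i + 1) * a (i + 1) * (c * z) ^ (n - (i + 1))
        = c ^ n * (z ^ n + ∑ i ∈ Finset.range n, a (i + 1) * z ^ (n - (i + 1))) := by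
      rw [mul_add, Finset.mul_sum, mul_pow]
      congr 1
      refine Finset.sum_congr rfl fun i hi => ?_
      have hin : i + 1 ≤ n := Finset.mem_range.1 hi
      have hc : c ^ n = c ^ (i + 1) * c ^ (n - (i + 1)) := by
        rw [← pow_add]; congr 1; omega
      rw [mul_pow, hc]; ring
    rw [key, he, mul_zero]

lemma mul_mem_intCl_of_le {R : Type*} [CommRing R] {K K' : Ideal R} {c : R}
    (h : Ideal.span {c} * K ≤ K') {z : R} (hz : z ∈ intCl K) : c * z ∈ intCl K' := by
  induction hz using Submodule.span_induction with
  | mem x hx => exact intCl_mono h (Ideal.subset_span (mul_isIntegralOverIdeal c hx))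
  | zero => simp only [mul_zero]; exact (intCl K').zero_mem
  | add x y _ _ hx hy => rw [mul_add]; exact (intCl K').add_mem hx hy
  | smul r x _ hx =>
      have : c * (r • x) = r • (c * x) := by simp [smul_eq_mul]; ring
      rw [this]; exact Submodule.smul_mem _ _ hx

/-- `b^l ⬝ (I^r J^s) ⊆ I^r J^(s+l)` for `b ∈ J`. -/
lemma span_pow_mul_IJ_le_right {R : Type*} [CommRing R] {I J : Ideal R} {b : R}
    (hb : b ∈ J) (l : ℕ) (r s : ℤ) :
    Ideal.span {b ^ l} * IJ I J r s ≤ IJ I J r (s + l) := by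
  have h1 : Ideal.span {b ^ l} ≤ J ^ l := by
    rw [Ideal.span_le, Set.singleton_subset_iff]
    exact Ideal.pow_mem_pow hb l
  have h2 : (J ^ l) * IJ I J r s ≤ IJ I J r (s + l) := by
    unfold IJ
    have h3 : J ^ l * (I ^ r.toNat * J ^ s.toNat) = I ^ r.toNat * J ^ (s.toNat + l) := by
      rw [pow_add]; ring
    rw [h3]
    exact Ideal.mul_mono le_rfl (Ideal.pow_le_pow_right (by omega))
  exact le_trans (Ideal.mul_mono h1 le_rfl) h2

/-- `a^k ⬝ (I^r J^s) ⊆ I^(r+k) J^s` for `a ∈ I`. -/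
lemma span_pow_mul_IJ_le_left {R : Type*} [CommRing R] {I J : Ideal R} {a : R}
    (ha : a ∈ I) (k : ℕ) (r s : ℤ) :
    Ideal.span {a ^ k} * IJ I J r s ≤ IJ I J (r + k) s := by
  have h1 : Ideal.span {a ^ k} ≤ I ^ k := by
    rw [Ideal.span_le, Set.singleton_subset_iff]
    exact Ideal.pow_mem_pow ha k
  have h2 : (I ^ k) * IJ I J r s ≤ IJ I J (r + k) s := by
    unfold IJ
    have h3 : I ^ k * (I ^ r.toNat * J ^ s.toNat) = I ^ (r.toNat + k) * J ^ s.toNat := by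
      rw [pow_add]; ring
    rw [h3]
    exact Ideal.mul_mono (Ideal.pow_le_pow_right (by omega)) le_rfl
  exact le_trans (Ideal.mul_mono h1 le_rfl) h2

/-- Multiplication by `b^l` (`b ∈ J`) maps `\overline{I^r J^s}` into
`\overline{I^r J^(s+l)}`. -/
lemma pow_mul_mem_IJbar_right {R : Type*} [CommRing R] {I J : Ideal R} {b : R}
    (hb : b ∈ J) (l : ℕ) (r s : ℤ) {z : R} (hz : z ∈ IJbar I J r s) :
    b ^ l * z ∈ IJbar I J r (s + l) :=
  mul_mem_intCl_of_le (span_pow_mul_IJ_le_right hb l r s) hz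

/-- Multiplication by `a^k` (`a ∈ I`) maps `\overline{I^r J^s}` into
`\overline{I^(r+k) J^s}`. -/
lemma pow_mul_mem_IJbar_left {R : Type*} [CommRing R] {I J : Ideal R} {a : R}
    (ha : a ∈ I) (k : ℕ) (r s : ℤ) {z : R} (hz : z ∈ IJbar I J r s) :
    a ^ k * z ∈ IJbar I J (r + k) s :=
  mul_mem_intCl_of_le (span_pow_mul_IJ_le_left ha k r s) hz
/-! ### The three-term sequence of Lemma 3.4 -/

variable {R : Type*} [CommRing R] (I J : Ideal R) {a b : R}

/-- The map `R/\overline{I^r J^s} → R/\overline{I^r J^{s+l}} ⊕ R/\overline{I^{r+k} J^s}`,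
`x ↦ (-b^l x, a^k x)`. -/
noncomputable def seqF (ha : a ∈ I) (hb : b ∈ J) (r s : ℤ) (k l : ℕ) :
    (R ⧸ IJbar I J r s) →ₗ[R]
      (R ⧸ IJbar I J r (s + l)) × (R ⧸ IJbar I J (r + k) s) :=
  LinearMap.prod
    (Submodule.mapQ _ _ (LinearMap.lsmul R R (-(b ^ l)))
      (fun x hx => by
        have : b ^ l * x ∈ IJbar I J r (s + l) := pow_mul_mem_IJbar_right hb l r s hx
        simpa [smul_eq_mul, neg_mul] using (IJbar I J r (s + l)).neg_mem this))
    (Submodule.mapQ _ _ (LinearMap.lsmul R R (a ^ k))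
      (fun x hx => by
        have : a ^ k * x ∈ IJbar I J (r + k) s := pow_mul_mem_IJbar_left ha k r s hx
        simpa [smul_eq_mul] using this))

/-- The target module `(a^k, b^l)/(a^k \overline{I^r J^{s+l}} + b^l \overline{I^{r+k} J^s})`
of Lemma 3.4. -/
noncomputable abbrev seqTarget (r s : ℤ) (k l : ℕ) (a b : R) :=
  ↥(Ideal.span {a ^ k, b ^ l}) ⧸
    (Submodule.comap (Ideal.span {a ^ k, b ^ l} : Ideal R).subtype
      (Ideal.span {a ^ k} * IJbar I J r (s + l) ⊔ Ideal.span {b ^ l} * IJbar I J (r + k) s))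

/-- The map `R/\overline{I^r J^{s+l}} ⊕ R/\overline{I^{r+k} J^s} →
(a^k,b^l)/(a^k \overline{I^r J^{s+l}} + b^l \overline{I^{r+k} J^s})`,
`(x,y) ↦ a^k x + b^l y`. -/
noncomputable def seqG (r s : ℤ) (k l : ℕ) (a b : R) :
    ((R ⧸ IJbar I J r (s + l)) × (R ⧸ IJbar I J (r + k) s)) →ₗ[R]
      seqTarget I J r s k l a b :=
  LinearMap.coprod
    (Submodule.mapQ _ _
      (LinearMap.codRestrict (Ideal.span {a ^ k, b ^ l} : Ideal R)
        (LinearMap.lsmul R R (a ^ k))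
        (fun x => by
          have h1 : a ^ k ∈ (Ideal.span {a ^ k, b ^ l} : Ideal R) :=
            Ideal.subset_span (by simp)
          simpa [smul_eq_mul, mul_comm] using
            Ideal.mul_mem_left _ x h1))
      (fun x hx => by
        have : a ^ k * x ∈ Ideal.span {a ^ k} * IJbar I J r (s + l) :=
          Ideal.mul_mem_mul (Ideal.mem_span_singleton_self _) hx
        simpa [smul_eq_mul] using le_sup_left
          (α := Ideal R) (a := Ideal.span {a ^ k} * IJbar I J r (s + l)) this))
    (Submodule.mapQ _ _
      (LinearMap.codRestrict (Ideal.span {a ^ k, b ^ l} : Ideal R)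
        (LinearMap.lsmul R R (b ^ l))
        (fun x => by
          have h1 : b ^ l ∈ (Ideal.span {a ^ k, b ^ l} : Ideal R) :=
            Ideal.subset_span (by simp)
          simpa [smul_eq_mul, mul_comm] using
            Ideal.mul_mem_left _ x h1))
      (fun x hx => by
        have : b ^ l * x ∈ Ideal.span {b ^ l} * IJbar I J (r + k) s :=
          Ideal.mul_mem_mul (Ideal.mem_span_singleton_self _) hx
        simpa [smul_eq_mul] using le_sup_right
          (α := Ideal R) (b := Ideal.span {b ^ l} * IJbar I J (r + k) s) this))

/-! ### Regular pairs -/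

/-- `a` is a nonzerodivisor and `b` is a nonzerodivisor modulo `a`; properness of `(a, b)` is
not required. -/
def RegPair {R : Type*} [CommRing R] (a b : R) : Prop :=
  (∀ z, a * z = 0 → z = 0) ∧ ∀ z w, b * z = a * w → ∃ v, z = a * v

lemma RegPair.pow_right {R : Type*} [CommRing R] {a b : R} (h : RegPair a b) (l : ℕ) :
    RegPair a (b ^ l) := by
  refine ⟨h.1, ?_⟩
  induction l with
  | zero => intro z w hz; exact ⟨w, by simpa using hz⟩
  | succ l ih =>
    intro z w hz
    obtain ⟨v, hv⟩ := h.2 (b ^ l * z) w (by rw [← hz]; ring)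
    exact ih z v hv

lemma RegPair.pow_left {R : Type*} [CommRing R] {a b : R} (h : RegPair a b) (k : ℕ) :
    RegPair (a ^ k) b := by
  induction k with
  | zero => exact ⟨fun z hz => by simpa using hz, fun z w _ => ⟨z, by simp⟩⟩
  | succ k ih =>
    refine ⟨fun z hz => h.1 z (ih.1 _ (by rw [← hz]; ring)), fun z w hz => ?_⟩
    obtain ⟨z', rfl⟩ := h.2 z (a ^ k * w) (by rw [hz]; ring)
    have h0 : b * z' = a ^ k * w := by
      refine sub_eq_zero.1 (h.1 _ ?_)
      linear_combination hz
    obtain ⟨v, rfl⟩ := ih.2 _ _ h0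
    exact ⟨v, by ring⟩

/-- If the ideal `(a, b)` contains a regular pair, the first Koszul homology of `a, b`
vanishes. -/
lemma koszul_of_regPair {R : Type*} [CommRing R] {a b f g : R} (h : RegPair f g)
    (hf : f ∈ Ideal.span {a, b}) (hg : g ∈ Ideal.span {a, b}) {x y : R}
    (hxy : a * x + b * y = 0) : ∃ t, x = -b * t ∧ y = a * t := by
  obtain ⟨p, q, rfl⟩ := Ideal.mem_span_pair.1 hf
  obtain ⟨p', q', rfl⟩ := Ideal.mem_span_pair.1 hg
  -- `f (x, y) = t (-b, a)` and `g (x, y) = u (-b, a)`, where `t = p y - q x`, `u = p' y - q' x`;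
  -- the difference `g t - f u` is a multiple of `a x + b y`.
  obtain ⟨w, hw⟩ := h.2 (p * y - q * x) (p' * y - q' * x) (by
    linear_combination (p * q' - p' * q) * hxy)
  refine ⟨w, sub_eq_zero.1 (h.1 _ ?_), sub_eq_zero.1 (h.1 _ ?_)⟩
  · linear_combination p * hxy - b * hw
  · linear_combination q * hxy + a * hw

/-- In a Noetherian local ring, vanishing of the first Koszul homology of `a, b` makes `a, b`
regular: the annihilator of `a` equals `b` times itself, hence is zero by Nakayama. -/
lemma regPair_of_koszul {R : Type*} [CommRing R] [IsLocalRing R] [IsNoetherianRing R] {a b : R}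
    (hb : b ∈ IsLocalRing.maximalIdeal R)
    (h : ∀ x y, a * x + b * y = 0 → ∃ t, x = -b * t ∧ y = a * t) : RegPair a b := by
  refine ⟨?_, fun z w hz => ?_⟩
  · have hbot : LinearMap.ker (LinearMap.lsmul R R a) = ⊥ := by
      refine Submodule.eq_bot_of_le_smul_of_le_jacobson_bot (Ideal.span {b}) _
        (IsNoetherian.noetherian _) ?_ ?_
      · intro z hz
        obtain ⟨t, ht, ht'⟩ := h z 0 (by simpa using hz)
        rw [ht, neg_mul, ← mul_neg]
        exact Submodule.smul_mem_smul (Ideal.mem_span_singleton_self b)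
          (by simpa using ht'.symm)
      · rw [IsLocalRing.jacobson_eq_maximalIdeal _ bot_ne_top]
        simpa [Ideal.span_le] using hb
    intro z hz
    have : z ∈ LinearMap.ker (LinearMap.lsmul R R a) := by simpa using hz
    simpa [hbot] using this
  · obtain ⟨t, -, ht⟩ := h (-w) z (by rw [hz]; ring)
    exact ⟨t, ht⟩

/-! ### Good joint reductions are regular pairs -/

lemma le_intCl {R : Type*} [CommRing R] (K : Ideal R) : K ≤ intCl K := by
  intro x hx
  refine Ideal.subset_span ⟨1, one_pos, fun i => if i = 1 then -x else 0, fun i => ?_, by simp⟩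
  dsimp only
  split_ifs with h
  · subst h; simpa using hx
  · exact zero_mem _

lemma exists_pow_mem_span {R : Type*} [CommRing R] [IsLocalRing R] {I J : Ideal R}
    (hI : IsMPrimary I) (hJ : IsMPrimary J) {a b : R} (hgood : IsGoodJointReduction I J a b)
    {f : R} (hf : f ∈ IsLocalRing.maximalIdeal R) : ∃ n, f ^ n ∈ Ideal.span {a, b} := by
  obtain ⟨-, -, ⟨N, hN⟩, -, -⟩ := hgood
  obtain ⟨p, hp⟩ : f ∈ I.radical := by rw [hI]; exact hf
  obtain ⟨q, hq⟩ : f ∈ J.radical := by rw [hJ]; exact hf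
  refine ⟨p * N.toNat + q * N.toNat, ?_⟩
  have h1 : f ^ (p * N.toNat + q * N.toNat) ∈ IJbar I J N N := by
    refine le_intCl _ ?_
    rw [pow_add, pow_mul, pow_mul]
    exact Ideal.mul_mem_mul (Ideal.pow_mem_pow hp _) (Ideal.pow_mem_pow hq _)
  rw [hN N N le_rfl le_rfl] at h1
  refine (sup_le ?_ ?_ : _ ≤ Ideal.span {a, b}) h1
  · exact Ideal.mul_le_left.trans (Ideal.span_mono (by simp))
  · exact Ideal.mul_le_left.trans (Ideal.span_mono (by simp))

lemma exists_regPair {R : Type*} [CommRing R] [IsLocalRing R] (hCM : IsCMLocalRing R)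
    (hdim : ringKrullDim R = 2) : ∃ f g : R, f ∈ IsLocalRing.maximalIdeal R ∧
      g ∈ IsLocalRing.maximalIdeal R ∧ RegPair f g := by
  obtain ⟨n, f, hf, ⟨hreg, -⟩, hn⟩ := hCM
  rw [hdim] at hn
  obtain rfl : n = 2 := by exact_mod_cast hn
  refine ⟨f 0, f 1, hf 0, hf 1, fun z hz => ?_, fun z w hz => ?_⟩
  · have h0 : {j : Fin 2 | j < 0} = ∅ := by ext j; simp
    have := hreg 0 z
    rw [h0] at this
    simpa [hz] using this
  · have h1 : {j : Fin 2 | j < 1} = {0} := by ext j; fin_cases j <;> simp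
    have := hreg 1 z
    rw [h1] at this
    simp only [Set.image_singleton, smul_eq_mul, Ideal.mul_top, Ideal.mem_span_singleton] at this
    exact this ⟨w, hz⟩

lemma regPair_of_good {R : Type*} [CommRing R] [IsLocalRing R] [IsNoetherianRing R]
    (hCM : IsCMLocalRing R) (hdim : ringKrullDim R = 2) {I J : Ideal R}
    (hI : IsMPrimary I) (hJ : IsMPrimary J) {a b : R} (hgood : IsGoodJointReduction I J a b) :
    RegPair a b := by
  obtain ⟨f, g, hf, hg, hfg⟩ := exists_regPair hCM hdim
  obtain ⟨m, hm⟩ := exists_pow_mem_span hI hJ hgood hf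
  obtain ⟨n, hn⟩ := exists_pow_mem_span hI hJ hgood hg
  refine regPair_of_koszul ?_ fun x y h =>
    koszul_of_regPair ((hfg.pow_right n).pow_left m) hm hn h
  have : b ∈ J.radical := Ideal.le_radical hgood.2.1
  rwa [hJ] at this

/-- Cancellation of `a^k` in the filtration. -/
lemma mem_IJbar_of_pow_mul {R : Type*} [CommRing R] {I J : Ideal R} {a b : R}
    (hgood : IsGoodJointReduction I J a b) (ha : ∀ z, a * z = 0 → z = 0) {r s : ℤ} (hr : 0 ≤ r)
    (k : ℕ) {x : R} (hx : a ^ k * x ∈ IJbar I J (r + k) s) : x ∈ IJbar I J r s := by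
  induction k with
  | zero => simpa using hx
  | succ k ih =>
    apply ih
    have hm : a ^ (k + 1) * x ∈ Ideal.span {a} ⊓ IJbar I J (r + (k + 1 : ℕ)) s :=
      ⟨Ideal.mem_span_singleton.2 ⟨a ^ k * x, by ring⟩, hx⟩
    rw [hgood.2.2.2.1 _ _ (by positivity), Ideal.mem_span_singleton_mul] at hm
    obtain ⟨z, hz, hzx⟩ := hm
    have : a ^ k * x = z := by
      refine sub_eq_zero.1 (ha _ ?_)
      linear_combination -hzx
    rw [this]
    convert hz using 2
    push_cast; ring

/-- Lemma 3.4.  Let `(R,𝔪)` be an analytically unramified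
Cohen-Macaulay local ring of dimension `2` with infinite residue field, `I, J`
`𝔪`-primary and `(a,b)` a good joint reduction of `{\overline{I^r J^s}}`.  Then for all
`r, s ≥ 0` and `k, l ≥ 1` the sequence
`0 → R/\overline{I^r J^s} → R/\overline{I^r J^{s+l}} ⊕ R/\overline{I^{r+k} J^s} →
(a^k,b^l)/(a^k\overline{I^r J^{s+l}} + b^l\overline{I^{r+k} J^s}) → 0`
is exact, where the maps are `x ↦ (-b^l x, a^k x)` and `(x,y) ↦ a^k x + b^l y`. -/
theorem seq_exact
    {R : Type*} [CommRing R] [IsLocalRing R] [IsNoetherianRing R]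
    (hur : AnalyticallyUnramified R) (hCM : IsCMLocalRing R)
    (hdim : ringKrullDim R = 2) (hres : Infinite (IsLocalRing.ResidueField R))
    (I J : Ideal R) (hI : IsMPrimary I) (hJ : IsMPrimary J)
    (a b : R) (hgood : IsGoodJointReduction I J a b) :
    ∀ r s : ℤ, 0 ≤ r → 0 ≤ s → ∀ k l : ℕ, 1 ≤ k → 1 ≤ l →
      Function.Injective (seqF I J hgood.1 hgood.2.1 r s k l) ∧
      Function.Exact (seqF I J hgood.1 hgood.2.1 r s k l) (seqG I J r s k l a b) ∧
      Function.Surjective (seqG I J r s k l a b) := by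
  intro r s hr hs k l hk hl
  have hab := regPair_of_good hCM hdim hI hJ hgood
  have hkl := (hab.pow_right l).pow_left k
  refine ⟨?_, ?_, ?_⟩
  · refine (injective_iff_map_eq_zero _).2 fun x hx => ?_
    obtain ⟨x, rfl⟩ := Submodule.Quotient.mk_surjective _ x
    have h2 : a ^ k * x ∈ IJbar I J (r + k) s :=
      (Submodule.Quotient.mk_eq_zero _).1 (congrArg Prod.snd hx)
    exact (Submodule.Quotient.mk_eq_zero _).2 (mem_IJbar_of_pow_mul hgood hab.1 hr k h2)
  · rintro ⟨x, y⟩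
    obtain ⟨x, rfl⟩ := Submodule.Quotient.mk_surjective _ x
    obtain ⟨y, rfl⟩ := Submodule.Quotient.mk_surjective _ y
    have hG : seqG I J r s k l a b (Submodule.Quotient.mk x, Submodule.Quotient.mk y) = 0 ↔
        a ^ k * x + b ^ l * y ∈ Ideal.span {a ^ k} * IJbar I J r (s + l) ⊔
          Ideal.span {b ^ l} * IJbar I J (r + k) s := by
      simp only [seqG, LinearMap.coprod_apply, Submodule.mapQ_apply]
      rw [← Submodule.Quotient.mk_add, Submodule.Quotient.mk_eq_zero]
      rfl
    rw [hG]
    constructor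
    · intro h
      obtain ⟨u, hu, v, hv, huv⟩ := Submodule.mem_sup.1 h
      obtain ⟨α, hα, rfl⟩ := Ideal.mem_span_singleton_mul.1 hu
      obtain ⟨β, hβ, rfl⟩ := Ideal.mem_span_singleton_mul.1 hv
      obtain ⟨t, ht⟩ := hkl.2 (y - β) (α - x) (by linear_combination -huv)
      have ht' : α - x = b ^ l * t := by
        refine sub_eq_zero.1 (hkl.1 _ ?_)
        linear_combination huv + b ^ l * ht
      refine ⟨Submodule.Quotient.mk t, Prod.ext ?_ ?_⟩
      · refine (Submodule.Quotient.eq _).2 ?_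
        have : -(b ^ l) * t - x = -α := by linear_combination ht'
        exact this ▸ neg_mem hα
      · refine (Submodule.Quotient.eq _).2 ?_
        have : a ^ k * t - y = -β := by linear_combination -ht
        exact this ▸ neg_mem hβ
    · rintro ⟨t, ht⟩
      obtain ⟨t, rfl⟩ := Submodule.Quotient.mk_surjective _ t
      have h1 : -(b ^ l) * t - x ∈ IJbar I J r (s + l) :=
        (Submodule.Quotient.eq _).1 (congrArg Prod.fst ht)
      have h2 : a ^ k * t - y ∈ IJbar I J (r + k) s :=
        (Submodule.Quotient.eq _).1 (congrArg Prod.snd ht)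
      refine Submodule.mem_sup.2 ⟨_, Ideal.mul_mem_mul (Ideal.mem_span_singleton_self _)
        (neg_mem h1), _, Ideal.mul_mem_mul (Ideal.mem_span_singleton_self _) (neg_mem h2), ?_⟩
      ring
  · intro z
    obtain ⟨⟨z, hz⟩, rfl⟩ := Submodule.Quotient.mk_surjective _ z
    obtain ⟨x, y, hxy⟩ := Ideal.mem_span_pair.1 hz
    refine ⟨(Submodule.Quotient.mk x, Submodule.Quotient.mk y), ?_⟩
    simp only [seqG, LinearMap.coprod_apply, Submodule.mapQ_apply]
    rw [← Submodule.Quotient.mk_add]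
    congr 1
    refine Subtype.ext ?_
    change a ^ k * x + b ^ l * y = z
    linear_combination hxy
end
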